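/- arXiv:0912.0540 — 4 statements merged into one kernel-verified Lean document; each statement's English description precedes it below -/
import Mathlib

section
/- Let γ be a real number with |γ| < 1, and let (k, l, j) be nonnegative reals satisfying the triangle inequality such that (1+γ)k/2 is a nonnegative integer. If k + l = j or k + j = l, then both triples ((1+γ)k/2, ⌊(1+γ)l/2⌉₊, ⌊(1+γ)j/2⌉₊) and ((1+γ)k/2, ⌊(1+γ)l/2⌉₋, ⌊(1+γ)j/2⌉₋) satisfy the triangle inequality. -/
/-- `⌊x⌉₊` : the unique integer in the interval `(x - 1/2, x + 1/2]`. -/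
noncomputable def clpPlus (x : ℝ) : ℤ := ⌊x + 1/2⌋

/-- `⌊x⌉₋` : the unique integer in the interval `[x - 1/2, x + 1/2)`. -/
noncomputable def clpMinus (x : ℝ) : ℤ := ⌈x - 1/2⌉

/-- A triple of (nonnegative) reals satisfies the triangle inequality. -/
def Triangle3 (a b c : ℝ) : Prop := a ≤ b + c ∧ b ≤ a + c ∧ c ≤ a + b

/-!
Both roundings commute with integer translations and map nonnegative reals to nonnegative integers.
After scaling by `(1 + γ) / 2`, one of `l`, `j` is the other translated by the integer
`(1 + γ) * k / 2`, so the rounded triple is degenerate in the same way as the original one.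
-/

theorem clpPlus_intCast_add (n : ℤ) (x : ℝ) : clpPlus (n + x) = n + clpPlus x := by
  simp only [clpPlus, add_assoc, Int.floor_intCast_add]

theorem clpMinus_intCast_add (n : ℤ) (x : ℝ) : clpMinus (n + x) = n + clpMinus x := by
  simp only [clpMinus, add_sub_assoc, Int.ceil_intCast_add]

theorem clpPlus_nonneg {x : ℝ} (hx : 0 ≤ x) : 0 ≤ clpPlus x :=
  Int.floor_nonneg.2 (by positivity)

theorem clpMinus_nonneg {x : ℝ} (hx : 0 ≤ x) : 0 ≤ clpMinus x :=
  Int.ceil_nonneg_of_neg_one_lt (by linarith)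

theorem Triangle3.swap {a b c : ℝ} (h : Triangle3 a b c) : Triangle3 a c b :=
  ⟨add_comm b c ▸ h.1, h.2.2, h.2.1⟩

theorem triangle3_add {a b : ℝ} (ha : 0 ≤ a) (hb : 0 ≤ b) : Triangle3 a b (a + b) :=
  ⟨by linarith, by linarith, le_rfl⟩

section Rounding

variable {f : ℝ → ℤ} {n : ℤ} {x y : ℝ}

theorem triangle3_map_intCast_add (hadd : ∀ t, f (n + t) = n + f t) (hn : 0 ≤ n)
    (hfx : 0 ≤ f x) : Triangle3 n (f x) (f (n + x)) := by
  rw [hadd, Int.cast_add]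
  exact triangle3_add (mod_cast hn) (mod_cast hfx)

theorem triangle3_map_of_intCast_add_eq_or (hadd : ∀ t, f (n + t) = n + f t) (hn : 0 ≤ n)
    (hfx : 0 ≤ f x) (hfy : 0 ≤ f y) (h : n + x = y ∨ n + y = x) :
    Triangle3 n (f x) (f y) := by
  rcases h with rfl | rfl
  · exact triangle3_map_intCast_add hadd hn hfx
  · exact (triangle3_map_intCast_add hadd hn hfy).swap

end Rounding

theorem triangle_clp_degenerate_general {γ k l j : ℝ} (hγ : -1 ≤ γ) (hl0 : 0 ≤ l) (hj0 : 0 ≤ j)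
    (hnat : ∃ m : ℕ, (1 + γ) * k / 2 = (m : ℝ)) (hdeg : k + l = j ∨ k + j = l) :
    Triangle3 ((1 + γ) * k / 2) (clpPlus ((1 + γ) * l / 2)) (clpPlus ((1 + γ) * j / 2)) ∧
    Triangle3 ((1 + γ) * k / 2) (clpMinus ((1 + γ) * l / 2)) (clpMinus ((1 + γ) * j / 2)) := by
  obtain ⟨m, hm⟩ := hnat
  rw [← Int.cast_natCast] at hm
  have hγ0 : 0 ≤ 1 + γ := by linarith
  have hl : 0 ≤ (1 + γ) * l / 2 := by positivity
  have hj : 0 ≤ (1 + γ) * j / 2 := by positivity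
  have hscaled : (m : ℤ) + (1 + γ) * l / 2 = (1 + γ) * j / 2 ∨
      (m : ℤ) + (1 + γ) * j / 2 = (1 + γ) * l / 2 := by
    rw [← hm]
    exact hdeg.imp (fun h ↦ by rw [← h]; ring) (fun h ↦ by rw [← h]; ring)
  rw [hm]
  exact
    ⟨triangle3_map_of_intCast_add_eq_or (clpPlus_intCast_add m) m.cast_nonneg
      (clpPlus_nonneg hl) (clpPlus_nonneg hj) hscaled,
    triangle3_map_of_intCast_add_eq_or (clpMinus_intCast_add m) m.cast_nonneg
      (clpMinus_nonneg hl) (clpMinus_nonneg hj) hscaled⟩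

/-- Lemma 1, first case: if `(k,l,j)` satisfies the triangle inequality,
`(1+γ)k/2 ∈ ℕ`, and `k + l = j` or `k + j = l`, then both triples
`((1+γ)k/2, ⌊(1+γ)l/2⌉₊, ⌊(1+γ)j/2⌉₊)` and `((1+γ)k/2, ⌊(1+γ)l/2⌉₋, ⌊(1+γ)j/2⌉₋)`
satisfy the triangle inequality. -/
theorem triangle_clp_degenerate (γ : ℝ) (hγ : |γ| < 1) (k l j : ℝ)
    (hk0 : 0 ≤ k) (hl0 : 0 ≤ l) (hj0 : 0 ≤ j)
    (htri : Triangle3 k l j)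
    (hnat : ∃ m : ℕ, (1 + γ) * k / 2 = (m : ℝ))
    (hdeg : k + l = j ∨ k + j = l) :
    Triangle3 ((1 + γ) * k / 2) (clpPlus ((1 + γ) * l / 2)) (clpPlus ((1 + γ) * j / 2)) ∧
    Triangle3 ((1 + γ) * k / 2) (clpMinus ((1 + γ) * l / 2)) (clpMinus ((1 + γ) * j / 2)) :=
  triangle_clp_degenerate_general (neg_lt_of_abs_lt hγ).le hl0 hj0 hnat hdeg
end

section
/- Let γ be a real number with |γ| < 1, and let (k, l, j) be nonnegative reals satisfying the triangle inequality such that (1+γ)k/2 is a nonnegative integer. If k + l > j and k + j > l, then both triples ((1+γ)k/2, ⌊(1+γ)l/2⌉₊, ⌊(1+γ)j/2⌉₋) and ((1+γ)k/2, ⌊(1+γ)l/2⌉₋, ⌊(1+γ)j/2⌉₊) satisfy the triangle inequality. -/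
/-!
Write `b` and `c` for the last two sides after scaling by `(1 + γ) / 2`. Rounding `b` by `clpPlus`
and `c` by `clpMinus` lowers `b + c` and raises `c - b` by less than `1`, and raises `b - c` by at
most `1`. If the remaining side `m` is an integer and `b < m + c`, each triangle inequality can thus
fail only by less than `1` after rounding, hence not at all, since the three sides are integers.
-/

theorem sub_half_lt_clpPlus (x : ℝ) : x - 1 / 2 < clpPlus x := by
  have h : x + 1 / 2 < clpPlus x + 1 := Int.lt_floor_add_one _
  linarith

theorem clpPlus_le_add_half (x : ℝ) : clpPlus x ≤ x + 1 / 2 :=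
  Int.floor_le _

theorem sub_half_le_clpMinus (x : ℝ) : x - 1 / 2 ≤ clpMinus x :=
  Int.le_ceil _

theorem clpMinus_lt_add_half (x : ℝ) : clpMinus x < x + 1 / 2 := by
  have h : clpMinus x < x - 1 / 2 + 1 := Int.ceil_lt_add_one _
  linarith

namespace Triangle3

theorem intCast_iff_lt_add_one {p q r : ℤ} :
    Triangle3 p q r ↔ p < q + r + 1 ∧ q < p + r + 1 ∧ r < p + q + 1 := by
  simp only [Triangle3, Int.lt_add_one_iff]
  norm_cast

theorem swap_right {a b c : ℝ} (h : Triangle3 a b c) : Triangle3 a c b :=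
  ⟨h.1.trans_eq (add_comm b c), h.2.2, h.2.1⟩

theorem const_mul {a b c s : ℝ} (hs : 0 ≤ s) (h : Triangle3 a b c) :
    Triangle3 (s * a) (s * b) (s * c) := by
  simp only [Triangle3, ← mul_add]
  exact ⟨mul_le_mul_of_nonneg_left h.1 hs, mul_le_mul_of_nonneg_left h.2.1 hs,
    mul_le_mul_of_nonneg_left h.2.2 hs⟩

theorem clpPlus_clpMinus {m : ℤ} {b c : ℝ} (h : Triangle3 m b c) (hb : b < m + c) :
    Triangle3 m (clpPlus b) (clpMinus c) := by
  obtain ⟨hm, -, hc⟩ := h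
  have hm_lt : (m : ℝ) < clpPlus b + clpMinus c + 1 := by
    linarith [sub_half_lt_clpPlus b, sub_half_le_clpMinus c]
  have hb_lt : (clpPlus b : ℝ) < m + clpMinus c + 1 := by
    linarith [clpPlus_le_add_half b, sub_half_le_clpMinus c]
  have hc_lt : (clpMinus c : ℝ) < m + clpPlus b + 1 := by
    linarith [clpMinus_lt_add_half c, sub_half_lt_clpPlus b]
  exact intCast_iff_lt_add_one.mpr ⟨mod_cast hm_lt, mod_cast hb_lt, mod_cast hc_lt⟩

theorem clpMinus_clpPlus {m : ℤ} {b c : ℝ} (h : Triangle3 m b c) (hc : c < m + b) :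
    Triangle3 m (clpMinus b) (clpPlus c) :=
  (h.swap_right.clpPlus_clpMinus hc).swap_right

end Triangle3

theorem triangle_clp_nondegenerate_general {γ k l j : ℝ} (hγ : -1 < γ) (htri : Triangle3 k l j)
    (hint : ∃ m : ℤ, (1 + γ) * k / 2 = m) :
    (l < k + j →
      Triangle3 ((1 + γ) * k / 2) (clpPlus ((1 + γ) * l / 2)) (clpMinus ((1 + γ) * j / 2))) ∧
    (j < k + l →
      Triangle3 ((1 + γ) * k / 2) (clpMinus ((1 + γ) * l / 2)) (clpPlus ((1 + γ) * j / 2))) := by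
  obtain ⟨m, hm⟩ := hint
  have hscale : 0 < (1 + γ) / 2 := by linarith
  have hscaled := htri.const_mul hscale.le
  simp only [mul_div_right_comm] at hm ⊢
  rw [hm] at hscaled ⊢
  constructor
  · intro hl
    refine hscaled.clpPlus_clpMinus ?_
    rw [← hm, ← mul_add]
    exact mul_lt_mul_of_pos_left hl hscale
  · intro hj
    refine hscaled.clpMinus_clpPlus ?_
    rw [← hm, ← mul_add]
    exact mul_lt_mul_of_pos_left hj hscale

/-- Lemma 1, second case: if `(k,l,j)` satisfies the triangle inequality,
`(1+γ)k/2 ∈ ℕ`, and `k + l > j` and `k + j > l`, then both triples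
`((1+γ)k/2, ⌊(1+γ)l/2⌉₊, ⌊(1+γ)j/2⌉₋)` and `((1+γ)k/2, ⌊(1+γ)l/2⌉₋, ⌊(1+γ)j/2⌉₊)`
satisfy the triangle inequality. -/
theorem triangle_clp_nondegenerate (γ : ℝ) (hγ : |γ| < 1) (k l j : ℝ)
    (hk0 : 0 ≤ k) (hl0 : 0 ≤ l) (hj0 : 0 ≤ j)
    (htri : Triangle3 k l j)
    (hnat : ∃ m : ℕ, (1 + γ) * k / 2 = (m : ℝ))
    (h1 : k + l > j) (h2 : k + j > l) :
    Triangle3 ((1 + γ) * k / 2) (clpPlus ((1 + γ) * l / 2)) (clpMinus ((1 + γ) * j / 2)) ∧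
    Triangle3 ((1 + γ) * k / 2) (clpMinus ((1 + γ) * l / 2)) (clpPlus ((1 + γ) * j / 2)) := by
  have hgen := triangle_clp_nondegenerate_general (abs_lt.mp hγ).1 htri
    (hnat.imp' (↑) fun m hm ↦ by exact_mod_cast hm)
  exact ⟨hgen.1 h2, hgen.2 h1⟩
end

section
/- Let k₁, k₂, k_α and j⁺₁, j⁻₁, j⁺₂, j⁻₂, j⁺_α, j⁻_α be half-integers with j⁺ᵢ + j⁻ᵢ = kᵢ for i ∈ {1, 2, α}, such that the triples (k_α, k₁, k₂), (j⁺_α, j⁺₁, j⁺₂) and (j⁻_α, j⁻₁, j⁻₂) each satisfy the triangle inequality and k_α + k₁ + k₂ ∈ ℕ and j⁺_α + j⁺₁ + j⁺₂ ∈ ℕ. Choose arbitrary nonzero SU(2)-equivariant linear maps ε : H_{k_α} → H_{k₁} ⊗ H_{k₂}, C_i : H_{k_i} → H_{j⁺ᵢ} ⊗ H_{j⁻ᵢ} for i = 1, 2, π⁺ : H_{j⁺₁} ⊗ H_{j⁺₂} → H_{j⁺_α}, π⁻ : H_{j⁻₁} ⊗ H_{j⁻₂} → H_{j⁻_α}, and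 δ : H_{j⁺_α} ⊗ H_{j⁻_α} → H_{k_α}. Then the composite SU(2)-equivariant map H_{k_α} → H_{k_α} given by δ ∘ (π⁺ ⊗ π⁻) ∘ σ ∘ (C₁ ⊗ C₂) ∘ ε, where σ is the permutation of tensor factors identifying (H_{j⁺₁} ⊗ H_{j⁻₁}) ⊗ (H_{j⁺₂} ⊗ H_{j⁻₂}) with (H_{j⁺₁} ⊗ H_{j⁺₂}) ⊗ (H_{j⁻₁} ⊗ H_{j⁻₂}), is a nonzero scalar multiple of the identity on H_{k_α}. -/
open scoped TensorProduct

set_option synthInstance.maxHeartbeats 1000000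
set_option maxHeartbeats 1000000

noncomputable section

/-- The group `SU(2)` of special unitary `2 × 2` complex matrices. -/
abbrev SU2 : Type := Matrix.specialUnitaryGroup (Fin 2) ℂ

/-- The carrier of the spin-`d/2` irreducible representation of `SU(2)`:
homogeneous polynomials of degree `d` in two complex variables.  The parameter `d`
is *twice* the spin, so a half-integer spin `a` corresponds to `d = 2a ∈ ℕ`. -/
abbrev Hs (d : ℕ) : Type := ↥(MvPolynomial.homogeneousSubmodule (Fin 2) ℂ d)

instance (priority := 10000) instHsAcm (d : ℕ) : AddCommMonoid (Hs d) :=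
  (MvPolynomial.homogeneousSubmodule (Fin 2) ℂ d).addCommMonoid
instance (priority := 10000) instHsMod (d : ℕ) : Module ℂ (Hs d) :=
  (MvPolynomial.homogeneousSubmodule (Fin 2) ℂ d).module

/-- `IsSpinRep d ρ` says that `ρ` is the spin-`d/2` representation of `SU(2)` on homogeneous
polynomials of degree `d` in two variables: `g` acts by the linear substitution of variables
`X i ↦ ∑ j, g j i • X j`. -/
def IsSpinRep (d : ℕ) (ρ : Representation ℂ SU2 (Hs d)) : Prop :=
  ∀ (g : SU2) (p : Hs d),
    ((ρ g p : MvPolynomial (Fin 2) ℂ)) =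
      MvPolynomial.aeval
        (fun i => ∑ j, (g : Matrix (Fin 2) (Fin 2) ℂ) j i • MvPolynomial.X j)
        (p : MvPolynomial (Fin 2) ℂ)

/-!
An intertwiner is equivariant for the action of all `2 × 2` matrices `M` by linear substitution, up
to a power of `det M`: both sides of the equivariance identity are polynomials in the entries of
`M`, of the same degree, so it is enough to compare them on the real multiples of elements of
`SU(2)`, that is on the real quaternions, whose complexification is the space of all matrices. Let
`m = k₁ + k₂ - k_α`. Choosing `M` suitably, the value at `(1, 0)` of a merging map `H_{k₁} ⊗ H_{k₂}
→ H_{k_α}`, taken on the powers of linear forms with coefficients `(1, s)` and `(1, t)`, is a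
multiple of `(t - s) ^ m`; dually, the image of the highest weight vector under a splitting map
`H_{k_α} → H_{k₁} ⊗ H_{k₂}` takes values proportional to `(t - s) ^ m`. Pairing these two
expressions gives a nonzero multiple of a sum of positive numbers. So every composite of a nonzero
splitting and a nonzero merging is nonzero, and it is a scalar by Schur's lemma.

It remains to see that the merging `δ ∘ (π⁺ ⊗ π⁻) ∘ σ ∘ (C₁ ⊗ C₂)` is nonzero. Up to nonzero
scalars, `Cᵢ` sends a power of a linear form `ℓ` to the tensor product of two powers of `ℓ`, and `δ`
is the multiplication of forms. Hence at a product of powers of the two coordinate forms the value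
is the product of two nonzero forms.
-/

open MvPolynomial Matrix

section Vandermonde

variable {K V : Type*} [Field K] [Infinite K] [AddCommGroup V] [Module K V]

lemma eq_zero_of_forall_sum_pow_smul_eq_zero {n : ℕ} {v : Fin n → V}
    (h : ∀ t : K, ∑ i : Fin n, t ^ (i : ℕ) • v i = 0) : v = 0 := by
  funext i
  refine (Module.forall_dual_apply_eq_zero_iff K (v i)).1 fun φ => ?_
  have hφ : (fun i => φ (v i)) = 0 :=
    Matrix.eq_zero_of_forall_index_sum_pow_mul_eq_zero
      (f := fun j : Fin n => Infinite.natEmbedding K j)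
      (fun a b hab => Fin.ext ((Infinite.natEmbedding K).injective hab))
      (fun j => by simpa using congrArg φ (h (Infinite.natEmbedding K j)))
  exact congrFun hφ i

lemma eq_of_forall_sum_pow_smul_eq {n : ℕ} {v w : Fin n → V}
    (h : ∀ t : K, ∑ i : Fin n, t ^ (i : ℕ) • v i = ∑ i : Fin n, t ^ (i : ℕ) • w i) : v = w :=
  sub_eq_zero.1 <| eq_zero_of_forall_sum_pow_smul_eq_zero fun t => by
    simpa [smul_sub, sub_eq_zero] using h t

end Vandermonde

section BinaryForms

lemma coe_basisRestrictSupport {σ R : Type*} [CommSemiring R] (s : Set (σ →₀ ℕ)) (m : s) :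
    (basisRestrictSupport R s m : MvPolynomial σ R) = monomial m 1 := by
  classical
  change ((AddMonoidAlgebra.supportedEquivFinsupp s).symm (Finsupp.single m 1)).1 =
    AddMonoidAlgebra.single (m : σ →₀ ℕ) (1 : R)
  simp [AddMonoidAlgebra.supportedEquivFinsupp]

lemma restrictSupport_degree_eq (σ R : Type*) [CommSemiring R] (d : ℕ) :
    restrictSupport R {m : σ →₀ ℕ | m.degree = d} = homogeneousSubmodule σ R d :=
  (homogeneousSubmodule_eq_finsupp_supported σ R d).symm

/-- The exponents of the monomials of degree `d` in two variables, indexed by the exponent of the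
second variable. -/
def degreeEqEquiv (d : ℕ) : Fin (d + 1) ≃ {m : Fin 2 →₀ ℕ | m.degree = d} where
  toFun i := ⟨Finsupp.single 0 (d - (i : ℕ)) + Finsupp.single 1 (i : ℕ), by
    simp [Finsupp.degree_eq_sum, Nat.sub_add_cancel i.is_le]⟩
  invFun m := ⟨m.1 1, by
    have hm : m.1 0 + m.1 1 = d := by simpa [Finsupp.degree_eq_sum] using m.2
    omega⟩
  left_inv i := by simp
  right_inv m := by
    have hm : m.1 0 + m.1 1 = d := by simpa [Finsupp.degree_eq_sum] using m.2
    ext j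
    fin_cases j
    · simp [← hm]
    · simp

/-- The basis of monomials `X₀ ^ (d - i) * X₁ ^ i` of the space of binary forms of degree `d`. -/
def monomialBasis (d : ℕ) : Module.Basis (Fin (d + 1)) ℂ (Hs d) :=
  ((basisRestrictSupport ℂ _).map
    (LinearEquiv.ofEq _ _ (restrictSupport_degree_eq (Fin 2) ℂ d))).reindex (degreeEqEquiv d).symm

lemma coe_monomialBasis (d : ℕ) (i : Fin (d + 1)) :
    (monomialBasis d i : MvPolynomial (Fin 2) ℂ) = X 0 ^ (d - (i : ℕ)) * X 1 ^ (i : ℕ) := by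
  rw [X_pow_eq_monomial, X_pow_eq_monomial, monomial_mul, one_mul]
  rw [monomialBasis, Module.Basis.reindex_apply, Module.Basis.map_apply,
    LinearEquiv.coe_ofEq_apply, coe_basisRestrictSupport]
  rfl

/-- Evaluation of binary forms at a point. -/
def evalAt (d : ℕ) (x : Fin 2 → ℂ) : Module.Dual ℂ (Hs d) :=
  (aeval x).toLinearMap ∘ₗ (homogeneousSubmodule (Fin 2) ℂ d).subtype

lemma evalAt_apply (d : ℕ) (x : Fin 2 → ℂ) (p : Hs d) :
    evalAt d x p = aeval x (p : MvPolynomial (Fin 2) ℂ) := rfl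

lemma evalAt_monomialBasis (d : ℕ) (x : Fin 2 → ℂ) (i : Fin (d + 1)) :
    evalAt d x (monomialBasis d i) = x 0 ^ (d - (i : ℕ)) * x 1 ^ (i : ℕ) := by
  simp [evalAt_apply, coe_monomialBasis]

lemma evalAt_eq_sum (d : ℕ) (x : Fin 2 → ℂ) (p : Hs d) :
    evalAt d x p =
      ∑ i : Fin (d + 1), (monomialBasis d).repr p i * (x 0 ^ (d - (i : ℕ)) * x 1 ^ (i : ℕ)) := by
  conv_lhs => rw [← (monomialBasis d).sum_repr p]
  simp only [map_sum, map_smul, evalAt_monomialBasis, smul_eq_mul]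

lemma ext_evalAt {d : ℕ} {p q : Hs d} (h : ∀ s : ℂ, evalAt d ![1, s] p = evalAt d ![1, s] q) :
    p = q := by
  have hpq : ⇑((monomialBasis d).repr p) = (monomialBasis d).repr q :=
    eq_of_forall_sum_pow_smul_eq (K := ℂ) fun s => by simpa [evalAt_eq_sum, mul_comm] using h s
  exact (monomialBasis d).repr.injective (DFunLike.coe_injective hpq)

lemma isHomogeneous_sum_smul_X (w : Fin 2 → ℂ) :
    (∑ j, w j • (X j : MvPolynomial (Fin 2) ℂ)).IsHomogeneous 1 :=
  IsHomogeneous.sum _ _ _ fun j _ =>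
    (homogeneousSubmodule (Fin 2) ℂ 1).smul_mem _ (isHomogeneous_X ℂ j)

/-- The power `(w₀ X₀ + w₁ X₁) ^ d` of a linear form. -/
def linPow (d : ℕ) (w : Fin 2 → ℂ) : Hs d :=
  ⟨(∑ j, w j • X j) ^ d, by
    simpa using (isHomogeneous_sum_smul_X w).pow d⟩

lemma evalAt_linPow (d : ℕ) (x w : Fin 2 → ℂ) : evalAt d x (linPow d w) = (x ⬝ᵥ w) ^ d := by
  simp [evalAt_apply, linPow, dotProduct, mul_comm]

lemma linPow_eq_sum (d : ℕ) (w : Fin 2 → ℂ) :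
    linPow d w = ∑ i : Fin (d + 1),
      (w 0 ^ (d - (i : ℕ)) * w 1 ^ (i : ℕ) * d.choose i) • monomialBasis d i := by
  refine ext_evalAt fun s => ?_
  rw [evalAt_linPow, map_sum, dotProduct, Fin.sum_univ_two, add_comm, add_pow,
    ← Fin.sum_univ_eq_sum_range (fun i => (![1, s] 1 * w 1) ^ i * (![1, s] 0 * w 0) ^ (d - i) *
      (d.choose i : ℂ))]
  refine Finset.sum_congr rfl fun i _ => ?_
  rw [map_smul, evalAt_monomialBasis, smul_eq_mul]
  simp only [cons_val_zero, cons_val_one, one_pow]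
  ring

lemma span_range_linPow (d : ℕ) :
    Submodule.span ℂ (Set.range fun t : ℂ => linPow d ![1, t]) = ⊤ := by
  by_contra hne
  obtain ⟨f, hf, hle⟩ := Submodule.exists_le_ker_of_lt_top _ (lt_top_iff_ne_top.2 hne)
  have hsum : (fun i : Fin (d + 1) => (d.choose i : ℂ) • f (monomialBasis d i)) = 0 :=
    eq_zero_of_forall_sum_pow_smul_eq_zero (K := ℂ) fun t => by
      have ht : f (linPow d ![1, t]) = 0 := hle (Submodule.subset_span ⟨t, rfl⟩)
      simpa [linPow_eq_sum, mul_assoc] using ht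
  refine hf ((monomialBasis d).ext fun i => ?_)
  have hchoose : (d.choose i : ℂ) ≠ 0 := Nat.cast_ne_zero.2 (Nat.choose_pos i.is_le).ne'
  exact (smul_eq_zero.1 (congrFun hsum i)).resolve_left hchoose

lemma hom_ext_linPow {d : ℕ} {V : Type*} [AddCommMonoid V] [Module ℂ V] {L L' : Hs d →ₗ[ℂ] V}
    (h : ∀ t : ℂ, L (linPow d ![1, t]) = L' (linPow d ![1, t])) : L = L' :=
  LinearMap.ext_on (span_range_linPow d) (Set.forall_mem_range.2 h)

lemma hom_ext_linPow_tmul {b c : ℕ} {V : Type*} [AddCommMonoid V] [Module ℂ V]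
    {L L' : Hs b ⊗[ℂ] Hs c →ₗ[ℂ] V}
    (h : ∀ s t : ℂ, L (linPow b ![1, s] ⊗ₜ linPow c ![1, t]) =
      L' (linPow b ![1, s] ⊗ₜ linPow c ![1, t])) :
    L = L' :=
  TensorProduct.ext <| hom_ext_linPow fun s => hom_ext_linPow fun t => h s t

/-- Evaluation of an element of `Hs b ⊗ Hs c`, seen as a form in two pairs of variables, at a pair
of points. -/
def evalAt₂ (b c : ℕ) (x y : Fin 2 → ℂ) : Module.Dual ℂ (Hs b ⊗[ℂ] Hs c) :=
  LinearMap.mul' ℂ ℂ ∘ₗ TensorProduct.map (evalAt b x) (evalAt c y)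

lemma evalAt₂_tmul (b c : ℕ) (x y : Fin 2 → ℂ) (p : Hs b) (q : Hs c) :
    evalAt₂ b c x y (p ⊗ₜ q) = evalAt b x p * evalAt c y q := rfl

lemma evalAt₂_eq_sum (b c : ℕ) (s t : ℂ) (x : Hs b ⊗[ℂ] Hs c) :
    evalAt₂ b c ![1, s] ![1, t] x = ∑ i : Fin (b + 1), ∑ j : Fin (c + 1),
      s ^ (i : ℕ) * (t ^ (j : ℕ) *
        ((monomialBasis b).tensorProduct (monomialBasis c)).repr x (i, j)) := by
  conv_lhs => rw [← ((monomialBasis b).tensorProduct (monomialBasis c)).sum_repr x]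
  rw [map_sum, Fintype.sum_prod_type]
  refine Finset.sum_congr rfl fun i _ => Finset.sum_congr rfl fun j _ => ?_
  rw [map_smul, Module.Basis.tensorProduct_apply, evalAt₂_tmul, evalAt_monomialBasis,
    evalAt_monomialBasis]
  simp only [cons_val_zero, cons_val_one, one_pow, one_mul, smul_eq_mul]
  ring

lemma ext_evalAt₂ {b c : ℕ} {x y : Hs b ⊗[ℂ] Hs c}
    (h : ∀ s t : ℂ, evalAt₂ b c ![1, s] ![1, t] x = evalAt₂ b c ![1, s] ![1, t] y) : x = y := by
  set B := (monomialBasis b).tensorProduct (monomialBasis c)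
  refine B.ext_elem fun ij => ?_
  have hrow : ∀ t : ℂ,
      (fun i : Fin (b + 1) => ∑ j : Fin (c + 1), t ^ (j : ℕ) • B.repr x (i, j)) =
      fun i : Fin (b + 1) => ∑ j : Fin (c + 1), t ^ (j : ℕ) • B.repr y (i, j) := fun t =>
    eq_of_forall_sum_pow_smul_eq (K := ℂ) fun s => by
      simpa only [evalAt₂_eq_sum, ← Finset.mul_sum, smul_eq_mul] using h s t
  exact congrFun (eq_of_forall_sum_pow_smul_eq (K := ℂ) fun t => congrFun (hrow t) ij.1) ij.2

end BinaryForms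

section LinearSubstitution

/-- The action of `2 × 2` matrices on binary forms by linear substitution of the variables, which
extends the spin representation from `SU(2)` to all matrices. -/
def linSubst (d : ℕ) (M : Matrix (Fin 2) (Fin 2) ℂ) : Module.End ℂ (Hs d) :=
  (aeval fun i => ∑ j, M j i • (X j : MvPolynomial (Fin 2) ℂ)).toLinearMap.restrict
    fun p hp => by
      simpa using IsHomogeneous.aeval hp _ fun i => isHomogeneous_sum_smul_X fun j => M j i

lemma coe_linSubst (d : ℕ) (M : Matrix (Fin 2) (Fin 2) ℂ) (p : Hs d) :
    (linSubst d M p : MvPolynomial (Fin 2) ℂ) =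
      aeval (fun i => ∑ j, M j i • X j) (p : MvPolynomial (Fin 2) ℂ) := rfl

lemma IsSpinRep.eq_linSubst {d : ℕ} {ρ : Representation ℂ SU2 (Hs d)} (h : IsSpinRep d ρ)
    (g : SU2) : ρ g = linSubst d g :=
  LinearMap.ext fun p => Subtype.ext (h g p)

lemma linSubst_linPow (d : ℕ) (M : Matrix (Fin 2) (Fin 2) ℂ) (w : Fin 2 → ℂ) :
    linSubst d M (linPow d w) = linPow d (M *ᵥ w) := by
  refine Subtype.ext ?_
  simp only [coe_linSubst, linPow, mulVec, dotProduct, smul_eq_C_mul, Fin.sum_univ_two, map_pow,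
    map_add, map_mul, algHom_C, aeval_X, algebraMap_eq]
  ring

lemma evalAt_linSubst (d : ℕ) (x : Fin 2 → ℂ) (M : Matrix (Fin 2) (Fin 2) ℂ) (p : Hs d) :
    evalAt d x (linSubst d M p) = evalAt d (x ᵥ* M) p := by
  suffices h : evalAt d x ∘ₗ linSubst d M = evalAt d (x ᵥ* M) from LinearMap.congr_fun h p
  refine hom_ext_linPow fun t => ?_
  rw [LinearMap.comp_apply, linSubst_linPow, evalAt_linPow, evalAt_linPow, dotProduct_mulVec]

lemma linPow_smul (d : ℕ) (r : ℂ) (w : Fin 2 → ℂ) : linPow d (r • w) = r ^ d • linPow d w :=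
  ext_evalAt fun s => by
    rw [map_smul, evalAt_linPow, evalAt_linPow, dotProduct_smul, smul_eq_mul, mul_pow, smul_eq_mul]

lemma linSubst_smul (d : ℕ) (r : ℂ) (M : Matrix (Fin 2) (Fin 2) ℂ) :
    linSubst d (r • M) = r ^ d • linSubst d M :=
  hom_ext_linPow fun t => by
    rw [LinearMap.smul_apply, linSubst_linPow, linSubst_linPow, smul_mulVec, linPow_smul]

/-- The diagonal action of `2 × 2` matrices on a tensor product of two spaces of forms. -/
abbrev tensorSubst (b c : ℕ) (M : Matrix (Fin 2) (Fin 2) ℂ) : Module.End ℂ (Hs b ⊗[ℂ] Hs c) :=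
  TensorProduct.map (linSubst b M) (linSubst c M)

lemma evalAt₂_tensorSubst (b c : ℕ) (x y : Fin 2 → ℂ) (M : Matrix (Fin 2) (Fin 2) ℂ)
    (p : Hs b ⊗[ℂ] Hs c) :
    evalAt₂ b c x y (tensorSubst b c M p) = evalAt₂ b c (x ᵥ* M) (y ᵥ* M) p := by
  suffices h : evalAt₂ b c x y ∘ₗ tensorSubst b c M = evalAt₂ b c (x ᵥ* M) (y ᵥ* M) from
    LinearMap.congr_fun h p
  refine TensorProduct.ext' fun p q => ?_
  rw [LinearMap.comp_apply, TensorProduct.map_tmul, evalAt₂_tmul, evalAt₂_tmul, evalAt_linSubst,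
    evalAt_linSubst]

end LinearSubstitution

section PolynomialFunctions

variable {K V W : Type*} [CommRing K] [AddCommMonoid V] [Module K V] [AddCommMonoid W] [Module K W]

variable (K V) in
/-- The algebra of polynomial functions on a vector space, generated by the linear forms. -/
def polyFun : Subalgebra K (V → K) :=
  Algebra.adjoin K (Set.range fun φ : Module.Dual K V => ⇑φ)

lemma dual_mem_polyFun (φ : Module.Dual K V) : ⇑φ ∈ polyFun K V :=
  Algebra.subset_adjoin (Set.mem_range_self φ)

lemma const_mem_polyFun (a : K) : (fun _ => a) ∈ polyFun K V :=
  (polyFun K V).algebraMap_mem a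

lemma sum_mem_polyFun {ι : Type*} (s : Finset ι) {f : ι → V → K}
    (h : ∀ i ∈ s, f i ∈ polyFun K V) : (fun v => ∑ i ∈ s, f i v) ∈ polyFun K V := by
  simpa only [Finset.sum_fn] using (polyFun K V).sum_mem h

lemma comp_linearMap_mem_polyFun {f : W → K} (hf : f ∈ polyFun K W) (L : V →ₗ[K] W) :
    f ∘ L ∈ polyFun K V := by
  induction hf using Algebra.adjoin_induction with
  | mem f hf =>
    obtain ⟨φ, rfl⟩ := hf
    exact dual_mem_polyFun (φ ∘ₗ L)
  | algebraMap a => exact const_mem_polyFun a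
  | add f g _ _ hf hg => exact (polyFun K V).add_mem hf hg
  | mul f g _ _ hf hg => exact (polyFun K V).mul_mem hf hg

lemma exists_eval_eq_of_mem_polyFun {ι : Type*} [Finite ι] {f : (ι → K) → K}
    (hf : f ∈ polyFun K (ι → K)) : ∃ P : MvPolynomial ι K, ∀ x, eval x P = f x := by
  classical
  have := Fintype.ofFinite ι
  induction hf using Algebra.adjoin_induction with
  | mem f hf =>
    obtain ⟨φ, rfl⟩ := hf
    exact ⟨∑ i, φ (fun j => if i = j then 1 else 0) • X i, fun x => by
      simp [LinearMap.pi_apply_eq_sum_univ φ x, smul_eval, mul_comm]⟩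
  | algebraMap a => exact ⟨C a, fun x => eval_C a⟩
  | add f g _ _ hf hg =>
    obtain ⟨⟨P, hP⟩, ⟨Q, hQ⟩⟩ := hf, hg
    exact ⟨P + Q, fun x => by rw [map_add, hP, hQ, Pi.add_apply]⟩
  | mul f g _ _ hf hg =>
    obtain ⟨⟨P, hP⟩, ⟨Q, hQ⟩⟩ := hf, hg
    exact ⟨P * Q, fun x => by rw [map_mul, hP, hQ, Pi.mul_apply]⟩

lemma polyFun_ext_of_pi [IsDomain K] {ι : Type*} [Finite ι] {S : Set K} (hS : S.Infinite)
    {f g : (ι → K) → K} (hf : f ∈ polyFun K (ι → K)) (hg : g ∈ polyFun K (ι → K))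
    (h : ∀ x, (∀ i, x i ∈ S) → f x = g x) : f = g := by
  obtain ⟨P, hP⟩ := exists_eval_eq_of_mem_polyFun hf
  obtain ⟨Q, hQ⟩ := exists_eval_eq_of_mem_polyFun hg
  have hPQ : P = Q := funext_set (fun _ => S) (fun _ => hS) fun x hx => by
    rw [hP, hQ, h x fun i => hx i (Set.mem_univ i)]
  exact funext fun x => by rw [← hP, ← hQ, hPQ]

lemma entry_mem_polyFun {n : Type*} (i j : n) :
    (fun M : Matrix n n K => M i j) ∈ polyFun K (Matrix n n K) :=
  dual_mem_polyFun (Matrix.entryLinearMap K K i j)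

lemma det_mem_polyFun {n : Type*} [Fintype n] [DecidableEq n] :
    (fun M : Matrix n n K => M.det) ∈ polyFun K (Matrix n n K) := by
  simp only [Matrix.det_apply']
  refine sum_mem_polyFun _ fun σ _ => (polyFun K _).mul_mem (const_mem_polyFun _) ?_
  simpa only [Finset.prod_fn] using
    (polyFun K (Matrix n n K)).prod_mem fun i _ => entry_mem_polyFun (σ i) i

end PolynomialFunctions

section UnitarianTrick

/-- The matrix `x₀ + x₁ i + x₂ j + x₃ k` of a complexified quaternion; the matrices of real
quaternions are exactly the real multiples of elements of `SU(2)`. -/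
def quatMatrix : (Fin 4 → ℂ) →ₗ[ℂ] Matrix (Fin 2) (Fin 2) ℂ :=
  Fintype.linearCombination ℂ
    ![1, !![Complex.I, 0; 0, -Complex.I], !![0, 1; -1, 0], !![0, Complex.I; Complex.I, 0]]

lemma quatMatrix_apply (x : Fin 4 → ℂ) :
    quatMatrix x = !![x 0 + Complex.I * x 1, x 2 + Complex.I * x 3;
      -x 2 + Complex.I * x 3, x 0 - Complex.I * x 1] := by
  ext i j
  fin_cases i <;> fin_cases j <;>
    simp [quatMatrix, Fintype.linearCombination_apply, Fin.sum_univ_four] <;> ring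

lemma quatMatrix_surjective : Function.Surjective quatMatrix := fun M => by
  refine ⟨![(M 0 0 + M 1 1) / 2, (M 0 0 - M 1 1) / (2 * Complex.I),
    (M 0 1 - M 1 0) / 2, (M 0 1 + M 1 0) / (2 * Complex.I)], ?_⟩
  rw [quatMatrix_apply, Matrix.eta_fin_two M]
  congr <;> simp <;> field_simp <;> ring

lemma det_quatMatrix (x : Fin 4 → ℂ) : (quatMatrix x).det = ∑ i, x i ^ 2 := by
  rw [quatMatrix_apply, Matrix.det_fin_two_of, Fin.sum_univ_four]
  linear_combination (-x 3 ^ 2 - x 1 ^ 2) * Complex.I_sq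

lemma star_quatMatrix_ofReal (x : Fin 4 → ℝ) :
    star (quatMatrix fun i => x i) = (quatMatrix fun i => x i).adjugate := by
  rw [quatMatrix_apply, Matrix.adjugate_fin_two_of]
  ext i j
  fin_cases i <;> fin_cases j <;> simp [Matrix.star_apply] <;> ring

lemma exists_smul_eq_quatMatrix_ofReal (x : Fin 4 → ℝ) :
    ∃ (r : ℂ) (u : SU2), r • (u : Matrix (Fin 2) (Fin 2) ℂ) = quatMatrix fun i => x i := by
  obtain rfl | hx := eq_or_ne x 0
  · exact ⟨0, 1, by simp [← Pi.zero_def]⟩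
  have hN : 0 < ∑ i, x i ^ 2 := by
    obtain ⟨i, hi⟩ := Function.ne_iff.1 hx
    exact Finset.sum_pos' (fun i _ => sq_nonneg (x i)) ⟨i, Finset.mem_univ i, sq_pos_of_ne_zero hi⟩
  set r : ℝ := √(∑ i, x i ^ 2)
  have hr : (r : ℂ) ≠ 0 := Complex.ofReal_ne_zero.2 (Real.sqrt_pos.2 hN).ne'
  have hdet : (quatMatrix fun i => x i).det = (r : ℂ) ^ 2 := by
    rw [det_quatMatrix, ← Complex.ofReal_pow, Real.sq_sqrt hN.le]
    push_cast
    rfl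
  have hmem : (r : ℂ)⁻¹ • (quatMatrix fun i => x i) ∈ Matrix.specialUnitaryGroup (Fin 2) ℂ := by
    rw [Matrix.mem_specialUnitaryGroup_iff, Matrix.mem_unitaryGroup_iff]
    constructor
    · rw [star_smul, star_quatMatrix_ofReal, smul_mul_smul_comm, Matrix.mul_adjugate, hdet,
        smul_smul, star_inv₀, Complex.star_def, Complex.conj_ofReal]
      field_simp
      rw [one_smul]
    · rw [Matrix.det_smul, hdet, Fintype.card_fin]
      field_simp
  exact ⟨r, ⟨_, hmem⟩, smul_inv_smul₀ hr _⟩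

lemma polyFun_ext_of_smul_SU2 {f g : Matrix (Fin 2) (Fin 2) ℂ → ℂ}
    (hf : f ∈ polyFun ℂ (Matrix (Fin 2) (Fin 2) ℂ)) (hg : g ∈ polyFun ℂ (Matrix (Fin 2) (Fin 2) ℂ))
    (h : ∀ (r : ℂ) (u : SU2), f (r • (u : Matrix (Fin 2) (Fin 2) ℂ)) =
      g (r • (u : Matrix (Fin 2) (Fin 2) ℂ))) : f = g := by
  have hreal : (Set.range ((↑) : ℝ → ℂ)).Infinite :=
    Set.infinite_range_of_injective Complex.ofReal_injective
  have hfg : f ∘ quatMatrix = g ∘ quatMatrix := by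
    refine polyFun_ext_of_pi hreal (comp_linearMap_mem_polyFun hf quatMatrix)
      (comp_linearMap_mem_polyFun hg quatMatrix) fun x hx => ?_
    choose y hy using hx
    obtain rfl : (fun i => (y i : ℂ)) = x := funext hy
    obtain ⟨r, u, hru⟩ := exists_smul_eq_quatMatrix_ofReal y
    rw [Function.comp_apply, Function.comp_apply, ← hru, h]
  exact quatMatrix_surjective.injective_comp_right hfg

end UnitarianTrick

section PolynomialActions

/-- A family of operators `A M` on a vector space, depending on a `2 × 2` matrix `M`, whose matrix
coefficients are homogeneous polynomials of degree `k` in the entries of `M`. Multiplicativity in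
`M` is not required. -/
structure IsHomogeneousPolyAction {V : Type*} [AddCommMonoid V] [Module ℂ V] (k : ℕ)
    (A : Matrix (Fin 2) (Fin 2) ℂ → Module.End ℂ V) : Prop where
  apply_mem_polyFun : ∀ (φ : Module.Dual ℂ V) (v : V),
    (fun M => φ (A M v)) ∈ polyFun ℂ (Matrix (Fin 2) (Fin 2) ℂ)
  smul : ∀ (r : ℂ) (M : Matrix (Fin 2) (Fin 2) ℂ), A (r • M) = r ^ k • A M

variable {V W : Type*} [AddCommMonoid V] [Module ℂ V] [AddCommMonoid W] [Module ℂ W] {k l : ℕ}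
  {A : Matrix (Fin 2) (Fin 2) ℂ → Module.End ℂ V} {B : Matrix (Fin 2) (Fin 2) ℂ → Module.End ℂ W}

lemma IsHomogeneousPolyAction.tensor [Module.Free ℂ V] [Module.Finite ℂ V]
    (hA : IsHomogeneousPolyAction k A) (hB : IsHomogeneousPolyAction l B) :
    IsHomogeneousPolyAction (k + l) fun M => TensorProduct.map (A M) (B M) where
  apply_mem_polyFun φ x := by
    induction x using TensorProduct.induction_on with
    | zero => simpa using const_mem_polyFun 0
    | add x y hx hy =>
      simp only [map_add]
      exact (polyFun ℂ _).add_mem hx hy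
    | tmul v w =>
      let b := Module.Free.chooseBasis ℂ V
      have hφ : ∀ M, φ (TensorProduct.map (A M) (B M) (v ⊗ₜ w)) =
          ∑ i, b.coord i (A M v) * (φ ∘ₗ TensorProduct.mk ℂ V W (b i)) (B M w) := fun M => by
        rw [TensorProduct.map_tmul]
        conv_lhs => rw [← b.sum_repr (A M v)]
        simp only [TensorProduct.sum_tmul, ← TensorProduct.smul_tmul', map_sum, map_smul,
          smul_eq_mul, Module.Basis.coord_apply, LinearMap.comp_apply, TensorProduct.mk_apply]
      simp only [hφ]
      exact sum_mem_polyFun _ fun i _ =>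
        (polyFun ℂ _).mul_mem (hA.apply_mem_polyFun _ v) (hB.apply_mem_polyFun _ w)
  smul r M := by
    rw [hA.smul, hB.smul, TensorProduct.map_smul_left, TensorProduct.map_smul_right, smul_smul,
      pow_add]

lemma IsHomogeneousPolyAction.det_pow_smul_comm [Module.Free ℂ W]
    (hA : IsHomogeneousPolyAction k A) (hB : IsHomogeneousPolyAction l B) {p q : ℕ}
    (hdeg : 2 * p + k = 2 * q + l) {L : V →ₗ[ℂ] W} (hL : ∀ (u : SU2) v, L (A u v) = B u (L v))
    (M : Matrix (Fin 2) (Fin 2) ℂ) (v : V) :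
    M.det ^ p • L (A M v) = M.det ^ q • B M (L v) := by
  refine (Module.Free.chooseBasis ℂ W).ext_elem fun i => ?_
  set φ := (Module.Free.chooseBasis ℂ W).coord i
  have hdet : ∀ n : ℕ, (fun M : Matrix (Fin 2) (Fin 2) ℂ => M.det ^ n) ∈ polyFun ℂ _ :=
    fun n => (polyFun ℂ _).pow_mem det_mem_polyFun n
  have hfun : (fun M => M.det ^ p * φ (L (A M v))) = fun M => M.det ^ q * φ (B M (L v)) := by
    refine polyFun_ext_of_smul_SU2
      ((polyFun ℂ _).mul_mem (hdet p) (hA.apply_mem_polyFun (φ ∘ₗ L) v))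
      ((polyFun ℂ _).mul_mem (hdet q) (hB.apply_mem_polyFun φ (L v))) fun r u => ?_
    have hu : (u : Matrix (Fin 2) (Fin 2) ℂ).det = 1 := (mem_specialUnitaryGroup_iff.1 u.2).2
    simp only [hA.smul, hB.smul, det_smul, hu, Fintype.card_fin, mul_one, LinearMap.smul_apply,
      map_smul, smul_eq_mul, hL, ← mul_assoc, ← pow_mul, ← pow_add, hdeg]
  simpa [φ] using congrFun hfun M

instance (d : ℕ) : Module.Free ℂ (Hs d) := .of_basis (monomialBasis d)

instance (d : ℕ) : Module.Finite ℂ (Hs d) := .of_basis (monomialBasis d)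

lemma isHomogeneousPolyAction_linSubst (d : ℕ) : IsHomogeneousPolyAction d (linSubst d) where
  apply_mem_polyFun φ p := by
    have hp : p ∈ Submodule.span ℂ (Set.range fun t : ℂ => linPow d ![1, t]) := by
      rw [span_range_linPow]
      trivial
    induction hp using Submodule.span_induction with
    | zero => simpa using const_mem_polyFun 0
    | add p q _ _ hp hq =>
      simp only [map_add]
      exact (polyFun ℂ _).add_mem hp hq
    | smul r p _ hp =>
      simp only [map_smul]
      exact (polyFun ℂ _).smul_mem hp r
    | mem p hp =>
      obtain ⟨t, rfl⟩ := hp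
      have hcoord : ∀ i, (fun M : Matrix (Fin 2) (Fin 2) ℂ => (M *ᵥ ![1, t]) i) ∈ polyFun ℂ _ :=
        fun i => dual_mem_polyFun
          (LinearMap.proj i ∘ₗ (Matrix.mulVecBilin ℂ ℂ).flip ![1, t])
      simp only [linSubst_linPow]
      simp only [linPow_eq_sum, map_sum, map_smul, smul_eq_mul]
      exact sum_mem_polyFun _ fun i _ => (polyFun ℂ _).mul_mem ((polyFun ℂ _).mul_mem
        ((polyFun ℂ _).mul_mem ((polyFun ℂ _).pow_mem (hcoord 0) _)
          ((polyFun ℂ _).pow_mem (hcoord 1) _)) (const_mem_polyFun _)) (const_mem_polyFun _)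
  smul := linSubst_smul d

lemma isHomogeneousPolyAction_tensorSubst (b c : ℕ) :
    IsHomogeneousPolyAction (b + c) (tensorSubst b c) :=
  (isHomogeneousPolyAction_linSubst b).tensor (isHomogeneousPolyAction_linSubst c)

end PolynomialActions

section Intertwiners

variable {a b c m : ℕ}

/-- A map `Hs b ⊗ Hs c → Hs a` intertwining the actions of all `2 × 2` matrices up to the `m`-th
power of the determinant; the weight `m` is `j₁ + j₂ - j` in terms of the spins. -/
def IsMerging (m : ℕ) (π : Hs b ⊗[ℂ] Hs c →ₗ[ℂ] Hs a) : Prop :=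
  ∀ (M : Matrix (Fin 2) (Fin 2) ℂ) (x : Hs b ⊗[ℂ] Hs c),
    π (tensorSubst b c M x) = M.det ^ m • linSubst a M (π x)

/-- A map `Hs a → Hs b ⊗ Hs c` intertwining the actions of all `2 × 2` matrices up to the `m`-th
power of the determinant; the weight `m` is `j₁ + j₂ - j` in terms of the spins. -/
def IsSplitting (m : ℕ) (ε : Hs a →ₗ[ℂ] Hs b ⊗[ℂ] Hs c) : Prop :=
  ∀ (M : Matrix (Fin 2) (Fin 2) ℂ) (v : Hs a),
    tensorSubst b c M (ε v) = M.det ^ m • ε (linSubst a M v)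

lemma isMerging_of_equivariant (h : b + c = a + 2 * m) {π : Hs b ⊗[ℂ] Hs c →ₗ[ℂ] Hs a}
    (hπ : ∀ (u : SU2) x, π (tensorSubst b c u x) = linSubst a u (π x)) : IsMerging m π :=
  fun M x => by
    simpa using (isHomogeneousPolyAction_tensorSubst b c).det_pow_smul_comm
      (isHomogeneousPolyAction_linSubst a) (p := 0) (q := m) (by omega) hπ M x

lemma isSplitting_of_equivariant (h : b + c = a + 2 * m) {ε : Hs a →ₗ[ℂ] Hs b ⊗[ℂ] Hs c}
    (hε : ∀ (u : SU2) v, ε (linSubst a u v) = tensorSubst b c u (ε v)) : IsSplitting m ε :=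
  fun M v => by
    simpa using ((isHomogeneousPolyAction_linSubst a).det_pow_smul_comm
      (isHomogeneousPolyAction_tensorSubst b c) (p := m) (q := 0) (by omega) hε M v).symm

lemma IsMerging.evalAt_apply {π : Hs b ⊗[ℂ] Hs c →ₗ[ℂ] Hs a} (hπ : IsMerging m π) (z : ℂ)
    (x : Hs b ⊗[ℂ] Hs c) :
    evalAt a ![1, z] (π x) = evalAt a ![1, 0] (π (tensorSubst b c !![1, z; 0, 1] x)) := by
  rw [hπ, map_smul, evalAt_linSubst]
  simp

lemma IsMerging.evalAt_comp_ne_zero {π : Hs b ⊗[ℂ] Hs c →ₗ[ℂ] Hs a} (hπ : IsMerging m π)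
    (hπ0 : π ≠ 0) : evalAt a ![1, 0] ∘ₗ π ≠ 0 := fun h0 =>
  hπ0 <| LinearMap.ext fun x => ext_evalAt fun z => by
    rw [hπ.evalAt_apply, ← LinearMap.comp_apply, h0, LinearMap.zero_apply, LinearMap.zero_apply,
      map_zero]

lemma IsMerging.exists_evalAt_apply_linPow {π : Hs b ⊗[ℂ] Hs c →ₗ[ℂ] Hs a} (hπ : IsMerging m π)
    (hπ0 : π ≠ 0) : ∃ κ : ℂ, κ ≠ 0 ∧ ∀ s t : ℂ,
      evalAt a ![1, 0] (π (linPow b ![1, s] ⊗ₜ linPow c ![1, t])) = κ * (t - s) ^ m := by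
  have h : ∀ s t : ℂ, evalAt a ![1, 0] (π (linPow b ![1, s] ⊗ₜ linPow c ![1, t])) =
      evalAt a ![1, 0] (π (linPow b ![1, 0] ⊗ₜ linPow c ![1, 1])) * (t - s) ^ m := fun s t => by
    -- This matrix sends `(1, 0)` and `(1, 1)` to `(1, s)` and `(1, t)`, and has first row `(1, 0)`.
    have hM := congrArg (evalAt a ![1, 0])
      (hπ !![1, 0; s, t - s] (linPow b ![1, 0] ⊗ₜ linPow c ![1, 1]))
    rw [TensorProduct.map_tmul, linSubst_linPow, linSubst_linPow, map_smul, evalAt_linSubst,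
      mulVec_fin_two, mulVec_fin_two] at hM
    simpa [mul_comm] using hM
  refine ⟨_, fun h0 => hπ.evalAt_comp_ne_zero hπ0 (hom_ext_linPow_tmul fun s t => ?_), h⟩
  rw [LinearMap.comp_apply, h, h0, zero_mul, LinearMap.zero_apply]

lemma IsMerging.apply_linPow_ne_zero {π : Hs b ⊗[ℂ] Hs c →ₗ[ℂ] Hs a} (hπ : IsMerging m π)
    (hπ0 : π ≠ 0) : π (linPow b ![1, 0] ⊗ₜ linPow c ![0, 1]) ≠ 0 := fun h0 =>
  hπ0 <| hom_ext_linPow_tmul fun s t => by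
    have hM := hπ !![1, 1; s, t] (linPow b ![1, 0] ⊗ₜ linPow c ![0, 1])
    rw [TensorProduct.map_tmul, linSubst_linPow, linSubst_linPow, h0,
      mulVec_fin_two, mulVec_fin_two] at hM
    simpa using hM

lemma IsMerging.apply_tmul_ne_zero {δ : Hs b ⊗[ℂ] Hs c →ₗ[ℂ] Hs a} (hδ : IsMerging 0 δ)
    (hδ0 : δ ≠ 0) {p : Hs b} {q : Hs c} (hp : p ≠ 0) (hq : q ≠ 0) : δ (p ⊗ₜ q) ≠ 0 := by
  obtain ⟨κ, hκ, h⟩ := hδ.exists_evalAt_apply_linPow hδ0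
  have hev : evalAt a ![1, 0] ∘ₗ δ = κ • evalAt₂ b c ![1, 0] ![1, 0] :=
    hom_ext_linPow_tmul fun s t => by simp [h, evalAt₂_tmul, evalAt_linPow]
  intro h0
  have hmul : ∀ z : ℂ, evalAt b ![1, z] p * evalAt c ![1, z] q = 0 := fun z => by
    have hz := hδ.evalAt_apply z (p ⊗ₜ q)
    rw [h0, map_zero, ← LinearMap.comp_apply, hev, LinearMap.smul_apply, evalAt₂_tensorSubst,
      evalAt₂_tmul] at hz
    simpa [hκ] using hz
  have hdeg : (p * q : MvPolynomial (Fin 2) ℂ) ∈ homogeneousSubmodule (Fin 2) ℂ (b + c) :=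
    ((mem_homogeneousSubmodule _ _).1 p.2).mul ((mem_homogeneousSubmodule _ _).1 q.2)
  have hpq : (⟨_, hdeg⟩ : Hs (b + c)) = 0 := ext_evalAt fun z => by
    rw [map_zero]
    exact (map_mul (aeval ![1, z]) _ _).trans (hmul z)
  obtain hp' | hq' := mul_eq_zero.1 (congrArg Subtype.val hpq)
  · exact hp (Subtype.ext hp')
  · exact hq (Subtype.ext hq')

lemma IsSplitting.apply_linPow_ne_zero {ε : Hs a →ₗ[ℂ] Hs b ⊗[ℂ] Hs c} (hε : IsSplitting m ε)
    (hε0 : ε ≠ 0) : ε (linPow a ![1, 0]) ≠ 0 := fun h0 =>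
  hε0 <| hom_ext_linPow fun t => by
    have hM := hε !![1, 0; t, 1] (linPow a ![1, 0])
    rw [h0, linSubst_linPow, mulVec_fin_two] at hM
    simpa using hM.symm

lemma IsSplitting.exists_evalAt₂_apply_linPow {ε : Hs a →ₗ[ℂ] Hs b ⊗[ℂ] Hs c}
    (hε : IsSplitting m ε) (hε0 : ε ≠ 0) : ∃ κ : ℂ, κ ≠ 0 ∧ ∀ s t : ℂ,
      evalAt₂ b c ![1, s] ![1, t] (ε (linPow a ![1, 0])) = κ * (t - s) ^ m := by
  have h : ∀ s t : ℂ, evalAt₂ b c ![1, s] ![1, t] (ε (linPow a ![1, 0])) =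
      evalAt₂ b c ![1, 0] ![1, 1] (ε (linPow a ![1, 0])) * (t - s) ^ m := fun s t => by
    have hM := congrArg (evalAt₂ b c ![1, 0] ![1, 1])
      (hε !![1, s; 0, t - s] (linPow a ![1, 0]))
    rw [evalAt₂_tensorSubst, linSubst_linPow, mulVec_fin_two, map_smul] at hM
    simpa [mul_comm] using hM
  refine ⟨_, fun h0 => hε.apply_linPow_ne_zero hε0 (ext_evalAt₂ fun s t => ?_), h⟩
  rw [h, h0, zero_mul, map_zero]

lemma IsSplitting.exists_apply_linPow_eq_smul {ε : Hs a →ₗ[ℂ] Hs b ⊗[ℂ] Hs c}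
    (hε : IsSplitting 0 ε) (hε0 : ε ≠ 0) : ∃ κ : ℂ, κ ≠ 0 ∧ ∀ w : Fin 2 → ℂ,
      ε (linPow a w) = κ • (linPow b w ⊗ₜ linPow c w) := by
  obtain ⟨κ, hκ, h⟩ := hε.exists_evalAt₂_apply_linPow hε0
  have h0 : ε (linPow a ![1, 0]) = κ • (linPow b ![1, 0] ⊗ₜ linPow c ![1, 0]) :=
    ext_evalAt₂ fun s t => by simp [h, evalAt₂_tmul, evalAt_linPow]
  refine ⟨κ, hκ, fun w => ?_⟩
  have hw : !![w 0, 0; w 1, 0] *ᵥ ![1, 0] = w := by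
    rw [mulVec_fin_two]
    ext i
    fin_cases i <;> simp
  have hM := hε !![w 0, 0; w 1, 0] (linPow a ![1, 0])
  rw [h0, map_smul, TensorProduct.map_tmul, linSubst_linPow, linSubst_linPow, linSubst_linPow,
    hw, pow_zero, one_smul] at hM
  exact hM.symm

end Intertwiners

section Bracket

lemma sub_pow_eq_sum_fin {R : Type*} [CommRing R] (s t : R) (m : ℕ) :
    (t - s) ^ m =
      ∑ i : Fin (m + 1), (-1) ^ (i : ℕ) * m.choose i * (s ^ (i : ℕ) * t ^ (m - (i : ℕ))) := by
  rw [sub_eq_neg_add, add_pow, Fin.sum_univ_eq_sum_range fun i =>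
    (-1) ^ i * (m.choose i : R) * (s ^ i * t ^ (m - i))]
  refine Finset.sum_congr rfl fun i _ => ?_
  rw [neg_pow s]
  ring

variable {b c m : ℕ}

/-- The `m`-th power of the bracket `x₀ y₁ - x₁ y₀`, homogenized to bidegree `(b, c)` by powers of
`x₀` and `y₀`. -/
def bracketTensor (hb : m ≤ b) (hc : m ≤ c) : Hs b ⊗[ℂ] Hs c :=
  ∑ i : Fin (m + 1), ((-1) ^ (i : ℕ) * m.choose i : ℂ) •
    (monomialBasis b (i.castLE (Nat.succ_le_succ hb)) ⊗ₜ
      monomialBasis c (i.rev.castLE (Nat.succ_le_succ hc)))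

lemma evalAt₂_bracketTensor (hb : m ≤ b) (hc : m ≤ c) (s t : ℂ) :
    evalAt₂ b c ![1, s] ![1, t] (bracketTensor hb hc) = (t - s) ^ m := by
  rw [bracketTensor, map_sum, sub_pow_eq_sum_fin]
  refine Finset.sum_congr rfl fun i _ => ?_
  rw [map_smul, evalAt₂_tmul, evalAt_monomialBasis, evalAt_monomialBasis]
  simp [Fin.val_rev]

/-- The linear form on `Hs b ⊗ Hs c` whose values on products of powers of linear forms are the
powers of the bracket. -/
def bracketForm (hb : m ≤ b) (hc : m ≤ c) : Module.Dual ℂ (Hs b ⊗[ℂ] Hs c) :=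
  ∑ i : Fin (m + 1),
    ((-1) ^ (i : ℕ) * m.choose i / (b.choose i * c.choose (m - (i : ℕ))) : ℂ) •
      TensorProduct.dualDistrib ℂ (Hs b) (Hs c)
        ((monomialBasis b).coord (i.castLE (Nat.succ_le_succ hb)) ⊗ₜ
          (monomialBasis c).coord (i.rev.castLE (Nat.succ_le_succ hc)))

lemma coord_linPow (d : ℕ) (t : ℂ) (i : Fin (d + 1)) :
    (monomialBasis d).coord i (linPow d ![1, t]) = t ^ (i : ℕ) * d.choose i := by
  rw [Module.Basis.coord_apply, linPow_eq_sum, Module.Basis.repr_sum_self]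
  simp

lemma bracketForm_linPow (hb : m ≤ b) (hc : m ≤ c) (s t : ℂ) :
    bracketForm hb hc (linPow b ![1, s] ⊗ₜ linPow c ![1, t]) = (t - s) ^ m := by
  rw [bracketForm, LinearMap.sum_apply, sub_pow_eq_sum_fin]
  refine Finset.sum_congr rfl fun i _ => ?_
  have hbi : (b.choose i : ℂ) ≠ 0 := Nat.cast_ne_zero.2 (Nat.choose_pos (i.is_le.trans hb)).ne'
  have hci : (c.choose (m - i) : ℂ) ≠ 0 :=
    Nat.cast_ne_zero.2 (Nat.choose_pos ((Nat.sub_le m i).trans hc)).ne'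
  rw [LinearMap.smul_apply, TensorProduct.dualDistrib_apply, coord_linPow, coord_linPow]
  simp only [Fin.val_castLE, Fin.val_rev, Nat.succ_sub_succ, smul_eq_mul]
  field_simp

lemma bracketForm_bracketTensor (hb : m ≤ b) (hc : m ≤ c) :
    bracketForm hb hc (bracketTensor hb hc) = ∑ i : Fin (m + 1),
      (m.choose i : ℂ) ^ 2 / (b.choose i * c.choose (m - (i : ℕ))) := by
  have hsign : ∀ i : ℕ, ((-1) ^ i * (-1) ^ i : ℂ) = 1 := fun i => by
    rw [← mul_pow, neg_one_mul, neg_neg, one_pow]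
  rw [bracketForm, LinearMap.sum_apply]
  refine Finset.sum_congr rfl fun i _ => ?_
  rw [LinearMap.smul_apply, bracketTensor, map_sum, Finset.sum_eq_single i]
  · rw [map_smul, TensorProduct.dualDistrib_apply, Module.Basis.coord_apply,
      Module.Basis.coord_apply, Module.Basis.repr_self, Module.Basis.repr_self,
      Finsupp.single_eq_same, Finsupp.single_eq_same, smul_eq_mul, smul_eq_mul]
    linear_combination (m.choose i : ℂ) ^ 2 / (b.choose i * c.choose (m - (i : ℕ))) * hsign i
  · intro j _ hji
    rw [map_smul, TensorProduct.dualDistrib_apply, Module.Basis.coord_apply,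
      Module.Basis.repr_self, Finsupp.single_eq_of_ne, zero_mul, smul_zero]
    exact fun hij => hji (Fin.castLE_injective _ hij).symm
  · exact fun hi => absurd (Finset.mem_univ i) hi

lemma bracketForm_bracketTensor_ne_zero (hb : m ≤ b) (hc : m ≤ c) :
    bracketForm hb hc (bracketTensor hb hc) ≠ 0 := by
  rw [bracketForm_bracketTensor]
  have hpos : 0 < ∑ i : Fin (m + 1), (m.choose i : ℝ) ^ 2 / (b.choose i * c.choose (m - (i : ℕ))) :=
    Finset.sum_pos (fun i _ => by
      have := Nat.choose_pos i.is_le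
      have := Nat.choose_pos (i.is_le.trans hb)
      have := Nat.choose_pos ((Nat.sub_le m i).trans hc)
      positivity) Finset.univ_nonempty
  simpa using Complex.ofReal_ne_zero.2 hpos.ne'

lemma dual_apply_ne_zero_of_sub_pow (hb : m ≤ b) (hc : m ≤ c)
    {φ : Module.Dual ℂ (Hs b ⊗[ℂ] Hs c)} {κ : ℂ} (hκ : κ ≠ 0)
    (hφ : ∀ s t : ℂ, φ (linPow b ![1, s] ⊗ₜ linPow c ![1, t]) = κ * (t - s) ^ m)
    {x : Hs b ⊗[ℂ] Hs c} {μ : ℂ} (hμ : μ ≠ 0)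
    (hx : ∀ s t : ℂ, evalAt₂ b c ![1, s] ![1, t] x = μ * (t - s) ^ m) : φ x ≠ 0 := by
  have hφ' : φ = κ • bracketForm hb hc := hom_ext_linPow_tmul fun s t => by
    rw [hφ, LinearMap.smul_apply, bracketForm_linPow, smul_eq_mul]
  have hx' : x = μ • bracketTensor hb hc := ext_evalAt₂ fun s t => by
    rw [hx, map_smul, evalAt₂_bracketTensor, smul_eq_mul]
  rw [hφ', hx', LinearMap.smul_apply, map_smul]
  exact smul_ne_zero hκ (smul_ne_zero hμ (bracketForm_bracketTensor_ne_zero hb hc))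

end Bracket

section Schur

lemma eq_smul_id_of_forall_comm_linSubst {d : ℕ} {T : Module.End ℂ (Hs d)}
    (hT : ∀ M : Matrix (Fin 2) (Fin 2) ℂ, M.det = 1 →
      ∀ p, T (linSubst d M p) = linSubst d M (T p)) :
    T = evalAt d ![1, 0] (T (linPow d ![1, 0])) • LinearMap.id := by
  set κ := evalAt d ![1, 0] (T (linPow d ![1, 0])) with hκ
  have hhigh : T (linPow d ![1, 0]) = κ • linPow d ![1, 0] := ext_evalAt fun s => by
    have hM := congrArg (evalAt d ![1, 0]) (hT !![1, s; 0, 1] (by simp) (linPow d ![1, 0]))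
    rw [linSubst_linPow, mulVec_fin_two, evalAt_linSubst] at hM
    simpa [evalAt_linPow, hκ] using hM.symm
  refine hom_ext_linPow fun t => ?_
  have hM := hT !![1, 0; t, 1] (by simp) (linPow d ![1, 0])
  rw [hhigh, map_smul, linSubst_linPow, mulVec_fin_two] at hM
  simpa using hM

lemma IsMerging.exists_comp_eq_smul_id {a b c m : ℕ} (hb : m ≤ b) (hc : m ≤ c)
    {π : Hs b ⊗[ℂ] Hs c →ₗ[ℂ] Hs a} (hπ : IsMerging m π) (hπ0 : π ≠ 0)
    {ε : Hs a →ₗ[ℂ] Hs b ⊗[ℂ] Hs c} (hε : IsSplitting m ε) (hε0 : ε ≠ 0) :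
    ∃ κ : ℂ, κ ≠ 0 ∧ π ∘ₗ ε = κ • LinearMap.id := by
  obtain ⟨κ, hκ, hφ⟩ := hπ.exists_evalAt_apply_linPow hπ0
  obtain ⟨μ, hμ, hx⟩ := hε.exists_evalAt₂_apply_linPow hε0
  refine ⟨_, dual_apply_ne_zero_of_sub_pow hb hc (φ := evalAt a ![1, 0] ∘ₗ π) hκ hφ hμ hx,
    eq_smul_id_of_forall_comm_linSubst fun M hM p => ?_⟩
  have hMp := hπ M (ε p)
  rwa [hε M, hM, one_pow, one_smul, one_smul] at hMp

end Schur

section Recoupling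

variable {R : Type*} [CommSemiring R]
  {K₁ K₂ K P₁ Q₁ P₂ Q₂ P Q : Type*}
  [AddCommMonoid K₁] [Module R K₁] [AddCommMonoid K₂] [Module R K₂] [AddCommMonoid K] [Module R K]
  [AddCommMonoid P₁] [Module R P₁] [AddCommMonoid Q₁] [Module R Q₁]
  [AddCommMonoid P₂] [Module R P₂] [AddCommMonoid Q₂] [Module R Q₂]
  [AddCommMonoid P] [Module R P] [AddCommMonoid Q] [Module R Q]

/-- The map `K₁ ⊗ K₂ → K` obtained by splitting both factors, exchanging the two inner factors of
`(P₁ ⊗ Q₁) ⊗ (P₂ ⊗ Q₂)`, and merging. -/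
def recoupling (C₁ : K₁ →ₗ[R] P₁ ⊗[R] Q₁) (C₂ : K₂ →ₗ[R] P₂ ⊗[R] Q₂) (πp : P₁ ⊗[R] P₂ →ₗ[R] P)
    (πm : Q₁ ⊗[R] Q₂ →ₗ[R] Q) (δ : P ⊗[R] Q →ₗ[R] K) : K₁ ⊗[R] K₂ →ₗ[R] K :=
  δ ∘ₗ TensorProduct.map πp πm ∘ₗ
    (TensorProduct.tensorTensorTensorComm R P₁ Q₁ P₂ Q₂).toLinearMap ∘ₗ TensorProduct.map C₁ C₂

lemma recoupling_comp_map {C₁ : K₁ →ₗ[R] P₁ ⊗[R] Q₁} {C₂ : K₂ →ₗ[R] P₂ ⊗[R] Q₂}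
    {πp : P₁ ⊗[R] P₂ →ₗ[R] P} {πm : Q₁ ⊗[R] Q₂ →ₗ[R] Q} {δ : P ⊗[R] Q →ₗ[R] K}
    {f₁ : Module.End R K₁} {f₂ : Module.End R K₂} {f : Module.End R K}
    {p₁ : Module.End R P₁} {p₂ : Module.End R P₂} {p : Module.End R P}
    {q₁ : Module.End R Q₁} {q₂ : Module.End R Q₂} {q : Module.End R Q}
    (hC₁ : C₁ ∘ₗ f₁ = TensorProduct.map p₁ q₁ ∘ₗ C₁)
    (hC₂ : C₂ ∘ₗ f₂ = TensorProduct.map p₂ q₂ ∘ₗ C₂)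
    (hπp : πp ∘ₗ TensorProduct.map p₁ p₂ = p ∘ₗ πp)
    (hπm : πm ∘ₗ TensorProduct.map q₁ q₂ = q ∘ₗ πm)
    (hδ : δ ∘ₗ TensorProduct.map p q = f ∘ₗ δ) :
    recoupling C₁ C₂ πp πm δ ∘ₗ TensorProduct.map f₁ f₂ = f ∘ₗ recoupling C₁ C₂ πp πm δ := by
  calc recoupling C₁ C₂ πp πm δ ∘ₗ TensorProduct.map f₁ f₂
      = δ ∘ₗ TensorProduct.map πp πm ∘ₗ
          ((TensorProduct.tensorTensorTensorComm R P₁ Q₁ P₂ Q₂).toLinearMap ∘ₗ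
            TensorProduct.map (TensorProduct.map p₁ q₁) (TensorProduct.map p₂ q₂)) ∘ₗ
          TensorProduct.map C₁ C₂ := by
        simp only [recoupling, LinearMap.comp_assoc, ← TensorProduct.map_comp, hC₁, hC₂]
    _ = δ ∘ₗ (TensorProduct.map πp πm ∘ₗ
          TensorProduct.map (TensorProduct.map p₁ p₂) (TensorProduct.map q₁ q₂)) ∘ₗ
          (TensorProduct.tensorTensorTensorComm R P₁ Q₁ P₂ Q₂).toLinearMap ∘ₗ
          TensorProduct.map C₁ C₂ := by
        rw [TensorProduct.tensorTensorTensorComm_comp_map]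
        rfl
    _ = (δ ∘ₗ TensorProduct.map p q) ∘ₗ TensorProduct.map πp πm ∘ₗ
          (TensorProduct.tensorTensorTensorComm R P₁ Q₁ P₂ Q₂).toLinearMap ∘ₗ
          TensorProduct.map C₁ C₂ := by
        rw [← TensorProduct.map_comp, hπp, hπm, TensorProduct.map_comp]
        rfl
    _ = f ∘ₗ recoupling C₁ C₂ πp πm δ := by
        rw [hδ]
        rfl

lemma isMerging_recoupling {k₁ k₂ k p₁ q₁ p₂ q₂ p q mp mm : ℕ}
    {C₁ : Hs k₁ →ₗ[ℂ] Hs p₁ ⊗[ℂ] Hs q₁} (hC₁ : IsSplitting 0 C₁)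
    {C₂ : Hs k₂ →ₗ[ℂ] Hs p₂ ⊗[ℂ] Hs q₂} (hC₂ : IsSplitting 0 C₂)
    {πp : Hs p₁ ⊗[ℂ] Hs p₂ →ₗ[ℂ] Hs p} (hπp : IsMerging mp πp)
    {πm : Hs q₁ ⊗[ℂ] Hs q₂ →ₗ[ℂ] Hs q} (hπm : IsMerging mm πm)
    {δ : Hs p ⊗[ℂ] Hs q →ₗ[ℂ] Hs k} (hδ : IsMerging 0 δ) :
    IsMerging (mp + mm) (recoupling C₁ C₂ πp πm δ) := fun M x => by
  have hδM : δ ∘ₗ TensorProduct.map (M.det ^ mp • linSubst p M) (M.det ^ mm • linSubst q M) =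
      (M.det ^ (mp + mm) • linSubst k M) ∘ₗ δ := by
    rw [TensorProduct.map_smul_left, TensorProduct.map_smul_right, smul_smul, ← pow_add]
    refine LinearMap.ext fun y => ?_
    simpa using congrArg (M.det ^ (mp + mm) • ·) (hδ M y)
  have hM := recoupling_comp_map (C₁ := C₁) (C₂ := C₂) (πp := πp) (πm := πm)
    (LinearMap.ext fun v => by simpa using (hC₁ M v).symm)
    (LinearMap.ext fun v => by simpa using (hC₂ M v).symm)
    (LinearMap.ext (hπp M)) (LinearMap.ext (hπm M)) hδM
  exact LinearMap.congr_fun hM x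

lemma recoupling_ne_zero {k₁ k₂ k p₁ q₁ p₂ q₂ p q mp mm : ℕ}
    {C₁ : Hs k₁ →ₗ[ℂ] Hs p₁ ⊗[ℂ] Hs q₁} (hC₁ : IsSplitting 0 C₁) (hC₁0 : C₁ ≠ 0)
    {C₂ : Hs k₂ →ₗ[ℂ] Hs p₂ ⊗[ℂ] Hs q₂} (hC₂ : IsSplitting 0 C₂) (hC₂0 : C₂ ≠ 0)
    {πp : Hs p₁ ⊗[ℂ] Hs p₂ →ₗ[ℂ] Hs p} (hπp : IsMerging mp πp) (hπp0 : πp ≠ 0)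
    {πm : Hs q₁ ⊗[ℂ] Hs q₂ →ₗ[ℂ] Hs q} (hπm : IsMerging mm πm) (hπm0 : πm ≠ 0)
    {δ : Hs p ⊗[ℂ] Hs q →ₗ[ℂ] Hs k} (hδ : IsMerging 0 δ) (hδ0 : δ ≠ 0) :
    recoupling C₁ C₂ πp πm δ ≠ 0 := fun h0 => by
  obtain ⟨κ₁, hκ₁, h₁⟩ := hC₁.exists_apply_linPow_eq_smul hC₁0
  obtain ⟨κ₂, hκ₂, h₂⟩ := hC₂.exists_apply_linPow_eq_smul hC₂0
  have hx := LinearMap.congr_fun h0 (linPow k₁ ![1, 0] ⊗ₜ linPow k₂ ![0, 1])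
  simp only [recoupling, LinearMap.comp_apply, TensorProduct.map_tmul, h₁, h₂,
    TensorProduct.smul_tmul_smul, map_smul, LinearEquiv.coe_coe,
    TensorProduct.tensorTensorTensorComm_tmul, LinearMap.zero_apply] at hx
  exact smul_ne_zero (mul_ne_zero hκ₁ hκ₂) (hδ.apply_tmul_ne_zero hδ0
    (hπp.apply_linPow_ne_zero hπp0) (hπm.apply_linPow_ne_zero hπm0)) hx

end Recoupling

lemma exists_weight_of_triangle {a b c : ℕ} (habc : Even (a + b + c)) (ha : a ≤ b + c)
    (hb : b ≤ a + c) (hc : c ≤ a + b) : ∃ m, m ≤ b ∧ m ≤ c ∧ b + c = a + 2 * m := by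
  obtain ⟨n, hn⟩ := habc
  exact ⟨n - a, by omega, by omega, by omega⟩

/-- The key nondegeneracy statement behind Lemma 5 of the paper (subsection "Relation among
intertwiners"): spins are half-integers, encoded by natural numbers that are twice the spin
(`dk1 = 2k₁`, `djp1 = 2j⁺₁`, etc.).  Given the splitting `j⁺ᵢ + j⁻ᵢ = kᵢ` for
`i ∈ {1, 2, α}`, the triangle inequalities for `(k_α,k₁,k₂)`, `(j⁺_α,j⁺₁,j⁺₂)`,
`(j⁻_α,j⁻₁,j⁻₂)`, the integrality conditions `k_α+k₁+k₂ ∈ ℕ`, `j⁺_α+j⁺₁+j⁺₂ ∈ ℕ`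
(evenness of the corresponding sums of twice-spins), and arbitrary nonzero
`SU(2)`-equivariant maps `ε, C₁, C₂, π⁺, π⁻, δ` as below, the composite
`δ ∘ (π⁺ ⊗ π⁻) ∘ σ ∘ (C₁ ⊗ C₂) ∘ ε : H_{k_α} → H_{k_α}` is a nonzero scalar multiple of the
identity. -/
theorem composite_is_nonzero_multiple_of_id
    (dk1 dk2 dka djp1 djm1 djp2 djm2 djpa djma : ℕ)
    (hsum1 : djp1 + djm1 = dk1) (hsum2 : djp2 + djm2 = dk2) (hsuma : djpa + djma = dka)
    (htrik : dka ≤ dk1 + dk2 ∧ dk1 ≤ dka + dk2 ∧ dk2 ≤ dka + dk1)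
    (htrip : djpa ≤ djp1 + djp2 ∧ djp1 ≤ djpa + djp2 ∧ djp2 ≤ djpa + djp1)
    (htrim : djma ≤ djm1 + djm2 ∧ djm1 ≤ djma + djm2 ∧ djm2 ≤ djma + djm1)
    (hek : Even (dka + dk1 + dk2)) (hep : Even (djpa + djp1 + djp2))
    (ρk1 : Representation ℂ SU2 (Hs dk1)) (hρk1 : IsSpinRep dk1 ρk1)
    (ρk2 : Representation ℂ SU2 (Hs dk2)) (hρk2 : IsSpinRep dk2 ρk2)
    (ρka : Representation ℂ SU2 (Hs dka)) (hρka : IsSpinRep dka ρka)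
    (ρjp1 : Representation ℂ SU2 (Hs djp1)) (hρjp1 : IsSpinRep djp1 ρjp1)
    (ρjm1 : Representation ℂ SU2 (Hs djm1)) (hρjm1 : IsSpinRep djm1 ρjm1)
    (ρjp2 : Representation ℂ SU2 (Hs djp2)) (hρjp2 : IsSpinRep djp2 ρjp2)
    (ρjm2 : Representation ℂ SU2 (Hs djm2)) (hρjm2 : IsSpinRep djm2 ρjm2)
    (ρjpa : Representation ℂ SU2 (Hs djpa)) (hρjpa : IsSpinRep djpa ρjpa)
    (ρjma : Representation ℂ SU2 (Hs djma)) (hρjma : IsSpinRep djma ρjma)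
    -- ε : H_{k_α} → H_{k₁} ⊗ H_{k₂}, nonzero and equivariant
    (ε : Hs dka →ₗ[ℂ] Hs dk1 ⊗[ℂ] Hs dk2) (hε0 : ε ≠ 0)
    (hε : ∀ (g : SU2) (v : Hs dka),
      ε (ρka g v) = TensorProduct.map (ρk1 g) (ρk2 g) (ε v))
    -- C₁ : H_{k₁} → H_{j⁺₁} ⊗ H_{j⁻₁}, nonzero and equivariant
    (C₁ : Hs dk1 →ₗ[ℂ] Hs djp1 ⊗[ℂ] Hs djm1) (hC₁0 : C₁ ≠ 0)
    (hC₁ : ∀ (g : SU2) (v : Hs dk1),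
      C₁ (ρk1 g v) = TensorProduct.map (ρjp1 g) (ρjm1 g) (C₁ v))
    -- C₂ : H_{k₂} → H_{j⁺₂} ⊗ H_{j⁻₂}, nonzero and equivariant
    (C₂ : Hs dk2 →ₗ[ℂ] Hs djp2 ⊗[ℂ] Hs djm2) (hC₂0 : C₂ ≠ 0)
    (hC₂ : ∀ (g : SU2) (v : Hs dk2),
      C₂ (ρk2 g v) = TensorProduct.map (ρjp2 g) (ρjm2 g) (C₂ v))
    -- π⁺ : H_{j⁺₁} ⊗ H_{j⁺₂} → H_{j⁺_α}, nonzero and equivariant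
    (πp : Hs djp1 ⊗[ℂ] Hs djp2 →ₗ[ℂ] Hs djpa) (hπp0 : πp ≠ 0)
    (hπp : ∀ (g : SU2) (x : Hs djp1 ⊗[ℂ] Hs djp2),
      πp (TensorProduct.map (ρjp1 g) (ρjp2 g) x) = ρjpa g (πp x))
    -- π⁻ : H_{j⁻₁} ⊗ H_{j⁻₂} → H_{j⁻_α}, nonzero and equivariant
    (πm : Hs djm1 ⊗[ℂ] Hs djm2 →ₗ[ℂ] Hs djma) (hπm0 : πm ≠ 0)
    (hπm : ∀ (g : SU2) (x : Hs djm1 ⊗[ℂ] Hs djm2),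
      πm (TensorProduct.map (ρjm1 g) (ρjm2 g) x) = ρjma g (πm x))
    -- δ : H_{j⁺_α} ⊗ H_{j⁻_α} → H_{k_α}, nonzero and equivariant
    (δ : Hs djpa ⊗[ℂ] Hs djma →ₗ[ℂ] Hs dka) (hδ0 : δ ≠ 0)
    (hδ : ∀ (g : SU2) (x : Hs djpa ⊗[ℂ] Hs djma),
      δ (TensorProduct.map (ρjpa g) (ρjma g) x) = ρka g (δ x)) :
    ∃ c : ℂ, c ≠ 0 ∧
      (δ ∘ₗ TensorProduct.map πp πm ∘ₗ
        (TensorProduct.tensorTensorTensorComm ℂ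
          (Hs djp1) (Hs djm1) (Hs djp2) (Hs djm2)).toLinearMap ∘ₗ
        TensorProduct.map C₁ C₂ ∘ₗ ε) = c • LinearMap.id := by
  subst hsum1 hsum2 hsuma
  have hem : Even (djma + djm1 + djm2) := by
    rw [Nat.even_iff] at hek hep ⊢
    omega
  obtain ⟨mp, hp₁, hp₂, hmp⟩ := exists_weight_of_triangle hep htrip.1 htrip.2.1 htrip.2.2
  obtain ⟨mm, hm₁, hm₂, hmm⟩ := exists_weight_of_triangle hem htrim.1 htrim.2.1 htrim.2.2
  simp only [hρk1.eq_linSubst, hρk2.eq_linSubst, hρka.eq_linSubst, hρjp1.eq_linSubst,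
    hρjm1.eq_linSubst, hρjp2.eq_linSubst, hρjm2.eq_linSubst, hρjpa.eq_linSubst,
    hρjma.eq_linSubst] at hε hC₁ hC₂ hπp hπm hδ
  have hC₁' : IsSplitting 0 C₁ := isSplitting_of_equivariant (by omega) hC₁
  have hC₂' : IsSplitting 0 C₂ := isSplitting_of_equivariant (by omega) hC₂
  have hπp' : IsMerging mp πp := isMerging_of_equivariant hmp hπp
  have hπm' : IsMerging mm πm := isMerging_of_equivariant hmm hπm
  have hδ' : IsMerging 0 δ := isMerging_of_equivariant (by omega) hδ
  have hε' : IsSplitting (mp + mm) ε := isSplitting_of_equivariant (by omega) hε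
  have hF : IsMerging (mp + mm) (recoupling C₁ C₂ πp πm δ) :=
    isMerging_recoupling hC₁' hC₂' hπp' hπm' hδ'
  have hF0 : recoupling C₁ C₂ πp πm δ ≠ 0 :=
    recoupling_ne_zero hC₁' hC₁0 hC₂' hC₂0 hπp' hπp0 hπm' hπm0 hδ' hδ0
  exact hF.exists_comp_eq_smul_id (add_le_add hp₁ hm₁) (add_le_add hp₂ hm₂) hF0 hε' hε0

end
end

section
/- (Injectivity of the EPRL map.) Let γ be a real number with |γ| < 1, and let (k₁,…,kₙ) be natural numbers such that j⁺ᵢ := (1+γ)kᵢ/2 is a natural number for every i; set j⁻ᵢ := (1−γ)kᵢ/2 = kᵢ − j⁺ᵢ (also a natural number). For each i fix a nonzero SU(2)-equivariant linear map C_i : H_{k_i} → H_{j⁺ᵢ} ⊗ H_{j⁻ᵢ}, and define the EPRL map ι^{EPRL} : Inv(H_{k₁} ⊗ ⋯ ⊗ H_{kₙ}) → Inv(H_{j⁺₁} ⊗ ⋯ ⊗ H_{j⁺ₙ}) ⊗ Inv(H_{j⁻₁} ⊗ ⋯ ⊗ H_{j⁻ₙ}) by ι^{EPRL}(I) = (P⁺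 ⊗ P⁻)((C₁ ⊗ ⋯ ⊗ Cₙ)(I)), where the tensor factors are regrouped so that all H_{j⁺ᵢ} come first and P± is the orthogonal projection of H_{j±₁} ⊗ ⋯ ⊗ H_{j±ₙ} onto its SU(2)-invariant subspace. Then ι^{EPRL} is injective. -/
open scoped TensorProduct

set_option synthInstance.maxHeartbeats 1000000
set_option maxHeartbeats 1000000

noncomputable section

/-- The subspace of `SU(2)`-invariant vectors of the tensor product of the representations
`ρ i`: the vectors fixed by all operators `⨂ᵢ ρᵢ(g) = PiTensorProduct.map (fun i => ρ i g)`. -/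
def piInvariants {n : ℕ} {V : Fin n → Type} [∀ i, AddCommMonoid (V i)] [∀ i, Module ℂ (V i)]
    (ρ : ∀ i, Representation ℂ SU2 (V i)) : Submodule ℂ (⨂[ℂ] i, V i) where
  carrier := {v | ∀ g : SU2, PiTensorProduct.map (fun i => ρ i g) v = v}
  add_mem' := fun hv hw g => by simp only [map_add, hv g, hw g]
  zero_mem' := fun g => by simp only [map_zero]
  smul_mem' := fun c v hv g => by simp only [map_smul, hv g]

/-!
Tensors of spin representations are multihomogeneous polynomials in `n` vectors of `ℂ²`. For the
Fischer form, pairing with a product of powers of linear forms is evaluation up to factorials, and a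
Clebsch–Gordan embedding sends each power of a linear form `ℓ` to a fixed nonzero multiple of a
tensor product of two powers of `ℓ`. So pairing the EPRL image of a tensor with `f⁺ ⊗ f⁻`, where
`f±` are invariants, amounts to pairing the tensor with the product `f⁺ f⁻`, and it remains to see
that the invariants of degrees `2 kᵢ` are spanned by products of invariants of degrees `2 j⁺ᵢ` and
`2 j⁻ᵢ`.

This is a statement about leading exponents. The lexicographically leading exponents of invariants
are exactly the ballot sequences: an `sl₂` weight argument shows that they are ballot sequences, and
products of brackets realize all of these. Half the excess of first over second coordinates in
the first `t` vectors is an integer height `L t`, and a ballot sequence of degrees `2 kᵢ` is a path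
of heights whose steps satisfy the triangle inequalities with `kᵢ`. Since `j⁺ᵢ` is a fixed multiple
`c kᵢ`, rounding `c * L t` to a nearest integer `r t` splits the path into the paths `r` and
`L - r`, with steps `j⁺ᵢ` and `j⁻ᵢ`. When `c * L t` is a half-integer, the rounding direction has to
be chosen along the path.
-/

namespace EPRL

open MvPolynomial

section Fischer

variable {σ τ ι : Type*}

/-- Coefficientwise complex conjugation. -/
def conj : MvPolynomial σ ℂ →+* MvPolynomial σ ℂ := map (starRingEnd ℂ)

@[simp] lemma coeff_conj (m : σ →₀ ℕ) (f : MvPolynomial σ ℂ) :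
    coeff m (conj f) = starRingEnd ℂ (coeff m f) := coeff_map _ _ _

variable [Fintype τ]

/-- The linear substitution `X j ↦ ∑ i, G i j • X i`. -/
def linSubst (G : Matrix τ σ ℂ) : MvPolynomial σ ℂ →ₐ[ℂ] MvPolynomial τ ℂ :=
  aeval fun j => ∑ i, G i j • X i

@[simp] lemma linSubst_X (G : Matrix τ σ ℂ) (j : σ) : linSubst G (X j) = ∑ i, G i j • X i :=
  aeval_X _ _

lemma constantCoeff_linSubst (G : Matrix τ σ ℂ) (p : MvPolynomial σ ℂ) :
    constantCoeff (linSubst G p) = constantCoeff p := by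
  induction p using MvPolynomial.induction_on with
  | C a => simp [linSubst]
  | add p q hp hq => simp [hp, hq]
  | mul_X p k _ => simp

variable [Fintype σ]

/-- The multi-index factorial `m! = ∏ j, (m j)!`. -/
def multiFactorial (m : σ →₀ ℕ) : ℂ := ∏ j, ((m j).factorial : ℂ)

lemma multiFactorial_add_single (m : σ →₀ ℕ) (j : σ) :
    multiFactorial (m + Finsupp.single j 1) = ((m j : ℂ) + 1) * multiFactorial m := by
  classical
  unfold multiFactorial
  rw [← Finset.mul_prod_erase _ _ (Finset.mem_univ j),
    ← Finset.mul_prod_erase (a := j) _ (fun j => ((m j).factorial : ℂ)) (Finset.mem_univ j),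
    ← mul_assoc]
  congr 1
  · simp [Nat.factorial_succ]
  · refine Finset.prod_congr rfl fun i hi => ?_
    simp [(Finset.ne_of_mem_erase hi).symm]

/-- The bilinear Fischer form on polynomials: distinct monomials are orthogonal, and the square of
`X ^ m` is `m!`. -/
def fischer : MvPolynomial σ ℂ →ₗ[ℂ] MvPolynomial σ ℂ →ₗ[ℂ] ℂ :=
  (basisMonomials σ ℂ).constr ℂ fun m => multiFactorial m • lcoeff ℂ m

lemma fischer_monomial (m : σ →₀ ℕ) (c : ℂ) (g : MvPolynomial σ ℂ) :
    fischer (monomial m c) g = c * (multiFactorial m * coeff m g) := by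
  have h : monomial m c = c • basisMonomials σ ℂ m := by simp [smul_monomial]
  rw [h, map_smul, fischer, Module.Basis.constr_basis]
  simp

lemma fischer_apply (f g : MvPolynomial σ ℂ) :
    fischer f g = ∑ m ∈ f.support, coeff m f * (multiFactorial m * coeff m g) := by
  conv_lhs => rw [f.as_sum, map_sum, LinearMap.sum_apply]
  simp only [fischer_monomial]

lemma fischer_comm (f g : MvPolynomial σ ℂ) : fischer f g = fischer g f := by
  classical
  induction f using MvPolynomial.induction_on' with
  | add p q hp hq => simp [hp, hq]
  | monomial m c =>
    rw [fischer_monomial, fischer_apply]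
    rw [Finset.sum_eq_single m (by simp +contextual [coeff_monomial, eq_comm])
      (by simp +contextual), coeff_monomial, if_pos rfl]
    ring

lemma fischer_X_mul (j : σ) (f g : MvPolynomial σ ℂ) :
    fischer (X j * f) g = fischer f (pderiv j g) := by
  induction f using MvPolynomial.induction_on' with
  | add p q hp hq => simp [mul_add, hp, hq]
  | monomial m c =>
    rw [mul_comm, X, monomial_mul, fischer_monomial, fischer_monomial, coeff_pderiv,
      multiFactorial_add_single]
    ring

lemma fischer_C (a : ℂ) (g : MvPolynomial σ ℂ) : fischer (C a) g = a * constantCoeff g := by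
  rw [C_apply, fischer_monomial, constantCoeff_eq]
  simp [multiFactorial]

lemma eq_zero_of_fischer_conj_self {f : MvPolynomial σ ℂ} (h : fischer (conj f) f = 0) :
    f = 0 := by
  have hsum : ∑ m ∈ f.support, (∏ j, ((m j).factorial : ℝ)) * Complex.normSq (coeff m f) = 0 := by
    have : fischer f (conj f) = 0 := by rw [fischer_comm, h]
    rw [← Complex.ofReal_eq_zero, ← this, fischer_apply]
    push_cast
    refine Finset.sum_congr rfl fun m _ => ?_
    rw [coeff_conj, Complex.normSq_eq_conj_mul_self, multiFactorial]
    ring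
  rw [Finset.sum_eq_zero_iff_of_nonneg
    fun m _ => mul_nonneg (by positivity) (Complex.normSq_nonneg _)] at hsum
  ext m
  by_contra hm
  have hpos : 0 < ∏ j, ((m j).factorial : ℝ) := by positivity
  exact hm (Complex.normSq_eq_zero.1
    ((mul_eq_zero.1 (hsum m (mem_support_iff.2 hm))).resolve_left hpos.ne'))

lemma pderiv_linSubst_transpose (G : Matrix τ σ ℂ) (j : σ) (p : MvPolynomial τ ℂ) :
    pderiv j (linSubst G.transpose p) = ∑ i, G i j • linSubst G.transpose (pderiv i p) := by
  classical
  induction p using MvPolynomial.induction_on with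
  | C a => simp [linSubst]
  | add p q hp hq => simp [hp, hq, Finset.sum_add_distrib]
  | mul_X p k hp =>
    simp only [map_mul, linSubst_X, Derivation.leibniz, hp, map_add, map_sum, smul_eq_mul,
      smul_add, Finset.sum_add_distrib, pderiv_X]
    congr 1
    · simp [Pi.single_apply, Matrix.transpose_apply]
    · simp only [Finset.mul_sum, mul_smul_comm]

lemma fischer_linSubst (G : Matrix τ σ ℂ) (f : MvPolynomial σ ℂ) (p : MvPolynomial τ ℂ) :
    fischer (linSubst G f) p = fischer f (linSubst G.transpose p) := by
  induction f using MvPolynomial.induction_on generalizing p with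
  | C a => rw [fischer_C, constantCoeff_linSubst, linSubst, aeval_C, algebraMap_eq, fischer_C]
  | add p q hp hq => simp [hp, hq]
  | mul_X f j hf =>
    rw [mul_comm f, fischer_X_mul, pderiv_linSubst_transpose, map_mul, linSubst_X,
      Finset.sum_mul]
    simp only [map_sum, map_smul, smul_mul_assoc, LinearMap.sum_apply, LinearMap.smul_apply,
      fischer_X_mul, hf]

/-- The weights of the multigrading by `ι → ℕ` in which the variable `X x` lies in the block
`π x`. -/
def blockWeight [DecidableEq ι] (π : σ → ι) (x : σ) : ι → ℕ := Pi.single (π x) 1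

lemma weight_blockWeight [DecidableEq ι] (π : σ → ι) (m : σ →₀ ℕ) (i : ι) :
    Finsupp.weight (blockWeight π) m i = ∑ x with π x = i, m x := by
  rw [Finsupp.weight_apply, Finsupp.sum_fintype _ _ (by simp), Finset.sum_apply,
    Finset.sum_filter]
  refine Finset.sum_congr rfl fun x _ => ?_
  simp [blockWeight, Pi.single_apply, eq_comm]

lemma aeval_smul_X_block {σ : Type*} [Finite σ] [Fintype ι] [DecidableEq ι] {π : σ → ι}
    {d : ι → ℕ} {h : MvPolynomial σ ℂ} (hh : IsWeightedHomogeneous (blockWeight π) h d)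
    (u : σ → ℂ) :
    aeval (fun x => u x • (X (π x) : MvPolynomial ι ℂ)) h = eval u h • ∏ i, X i ^ d i := by
  have := Fintype.ofFinite σ
  rw [h.as_sum, map_sum, map_sum, Finset.sum_smul]
  refine Finset.sum_congr rfl fun m hm => ?_
  have hblock : ∏ x, (X (π x) : MvPolynomial ι ℂ) ^ m x = ∏ i, X i ^ d i := by
    rw [← Finset.prod_fiberwise _ π]
    refine Finset.prod_congr rfl fun i _ => ?_
    rw [← hh (mem_support_iff.1 hm), weight_blockWeight, ← Finset.prod_pow_eq_pow_sum]
    exact Finset.prod_congr rfl fun x hx => by rw [(Finset.mem_filter.1 hx).2]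
  rw [aeval_monomial, eval_monomial, Finsupp.prod_fintype _ _ (by simp),
    Finsupp.prod_fintype _ _ (by simp), ← hblock]
  simp only [smul_eq_C_mul, mul_pow, Finset.prod_mul_distrib, algebraMap_eq, C_mul, map_prod,
    map_pow, mul_assoc]

lemma fischer_prod_linearForm_pow [Fintype ι] [DecidableEq ι] {π : σ → ι} {d : ι → ℕ}
    {h : MvPolynomial σ ℂ} (hh : IsWeightedHomogeneous (blockWeight π) h d) (u : σ → ℂ) :
    fischer h (∏ i, (∑ x with π x = i, u x • X x) ^ d i) =
      (∏ i, ((d i).factorial : ℂ)) * eval u h := by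
  set G : Matrix σ ι ℂ := Matrix.of fun x i => if π x = i then u x else 0
  set e : ι →₀ ℕ := Finsupp.equivFunOnFinite.symm d
  have hX : ∏ i, (X i : MvPolynomial ι ℂ) ^ d i = monomial e 1 := by
    simp [monomial_eq, Finsupp.prod_fintype, e]
  have hpow : ∏ i, (∑ x with π x = i, u x • X x) ^ d i = linSubst G (monomial e 1) := by
    rw [← hX, map_prod]
    simp [G, Finset.sum_filter, ite_smul]
  have heval : linSubst G.transpose h = eval u h • monomial e 1 := by
    rw [← hX, ← aeval_smul_X_block hh u, linSubst]
    simp [G, ite_smul]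
  rw [hpow, fischer_comm, fischer_linSubst, heval, map_smul, fischer_monomial]
  simp [multiFactorial, e, mul_comm]

end Fischer

section SlTwo

/-- The nilpotent element of `sl₂` sending the first basis vector of `ℂ²` to the second. -/
def sl2E : Matrix (Fin 2) (Fin 2) ℂ := !![0, 0; 1, 0]

/-- The nilpotent element of `sl₂` sending the second basis vector of `ℂ²` to the first. -/
def sl2F : Matrix (Fin 2) (Fin 2) ℂ := !![0, 1; 0, 0]

/-- The weight element `[sl2E, sl2F]` of `sl₂`; it is minus the usual Cartan generator because
`sl2E` raises towards the *second* basis vector. -/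
def sl2H : Matrix (Fin 2) (Fin 2) ℂ := !![-1, 0; 0, 1]

lemma lie_sl2E_sl2F : ⁅sl2E, sl2F⁆ = sl2H := by
  simp [sl2E, sl2F, sl2H, Ring.lie_def]

lemma lie_sl2H_sl2E : ⁅sl2H, sl2E⁆ = 2 • sl2E := by
  ext i j
  fin_cases i <;> fin_cases j <;> norm_num [sl2E, sl2H, Ring.lie_def]

lemma lie_sl2H_sl2F : ⁅sl2H, sl2F⁆ = -(2 • sl2F) := by
  ext i j
  fin_cases i <;> fin_cases j <;> norm_num [sl2F, sl2H, Ring.lie_def]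

lemma exists_nat_weight_of_pow_eq_zero {L M : Type*} [LieRing L] [LieAlgebra ℂ L]
    [AddCommGroup M] [Module ℂ M] [LieRingModule L M] [LieModule ℂ L M] {h e f : L}
    {t : IsSl2Triple h e f} {m : M} {μ : ℂ} (P : t.HasPrimitiveVectorWith m μ)
    (hf : ∃ N, (LieModule.toEnd ℂ L M f ^ N) m = 0) : ∃ N : ℕ, μ = N := by
  obtain ⟨N, hN, hN'⟩ := Nat.exists_not_and_succ_of_not_zero_of_exists
    (p := fun N => (LieModule.toEnd ℂ L M f ^ N) m = 0) P.ne_zero hf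
  have h0 := P.lie_e_pow_succ_toEnd_f N
  rw [hN', lie_zero, eq_comm, smul_eq_zero_iff_left hN, mul_eq_zero, sub_eq_zero] at h0
  exact ⟨N, h0.resolve_left N.cast_add_one_ne_zero⟩

lemma exists_derivation_pow_eq_zero {σ R : Type*} [CommRing R]
    (D : Derivation R (MvPolynomial σ R) (MvPolynomial σ R)) (hD : ∀ x, D (D (X x)) = 0)
    (p : MvPolynomial σ R) : ∃ N, (D.toLinearMap ^ N) p = 0 := by
  have hmul (x : σ) (q : MvPolynomial σ R) (N : ℕ) : (D.toLinearMap ^ (N + 1)) (q * X x) =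
      (D.toLinearMap ^ (N + 1)) q * X x + (N + 1) • ((D.toLinearMap ^ N) q * D (X x)) := by
    induction N with
    | zero => simp [add_comm, mul_comm]
    | succ N ih =>
      rw [pow_succ', Module.End.mul_apply, ih]
      simp only [map_add, map_nsmul, Derivation.coeFn_coe, Derivation.leibniz, hD,
        smul_eq_mul, mul_zero, zero_add, pow_succ' _ N, Module.End.mul_apply]
      ring
  induction p using MvPolynomial.induction_on with
  | C a => exact ⟨1, by simp⟩
  | add p q hp hq =>
    obtain ⟨M, hM⟩ := hp
    obtain ⟨N, hN⟩ := hq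
    refine ⟨M + N, ?_⟩
    rw [map_add, Module.End.pow_map_zero_of_le (Nat.le_add_right M N) hM,
      Module.End.pow_map_zero_of_le (Nat.le_add_left N M) hN, add_zero]
  | mul_X p x hp =>
    obtain ⟨N, hN⟩ := hp
    exact ⟨N + 1, by rw [hmul, hN, Module.End.pow_map_zero_of_le N.le_succ hN]; simp⟩

end SlTwo

section Vectors

/-- Indices for the coordinates of `n` vectors of `ℂ²`, ordered vector by vector. -/
abbrev Vars (n : ℕ) : Type := Fin n ×ₗ Fin 2

/-- The index of the first coordinate of the `i`-th vector. -/
abbrev av {n : ℕ} (i : Fin n) : Vars n := toLex (i, 0)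

/-- The index of the second coordinate of the `i`-th vector. -/
abbrev bv {n : ℕ} (i : Fin n) : Vars n := toLex (i, 1)

variable {n : ℕ}

lemma forall_vars {P : Vars n → Prop} : (∀ x, P x) ↔ ∀ i, P (av i) ∧ P (bv i) := by
  simp [Prod.forall, Fin.forall_fin_two]

lemma sum_vars {M : Type*} [AddCommMonoid M] (f : Vars n → M) :
    ∑ x, f x = ∑ i, ∑ s, f (toLex (i, s)) := by
  rw [← Fintype.sum_prod_type', ← Equiv.sum_comp toLex]

/-- The block diagonal matrix acting by `g` on each of `n` vectors. -/
def blockMatrix (g : Matrix (Fin 2) (Fin 2) ℂ) : Matrix (Vars n) (Vars n) ℂ := fun x y =>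
  if (ofLex x).1 = (ofLex y).1 then g (ofLex x).2 (ofLex y).2 else 0

/-- The diagonal action of a `2 × 2` matrix on polynomials in `n` vectors. -/
def act (g : Matrix (Fin 2) (Fin 2) ℂ) :
    MvPolynomial (Vars n) ℂ →ₐ[ℂ] MvPolynomial (Vars n) ℂ := linSubst (blockMatrix g)

@[simp] lemma act_X (g : Matrix (Fin 2) (Fin 2) ℂ) (i : Fin n) (s : Fin 2) :
    act g (X (toLex (i, s))) = ∑ t, g t s • X (toLex (i, t)) := by
  rw [act, linSubst_X, sum_vars, Finset.sum_eq_single i (by simp +contextual [blockMatrix])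
    (by simp)]
  simp [blockMatrix]

lemma fischer_act (g : Matrix (Fin 2) (Fin 2) ℂ) (f p : MvPolynomial (Vars n) ℂ) :
    fischer (act g f) p = fischer f (act g.transpose p) := by
  have h : (blockMatrix g : Matrix (Vars n) (Vars n) ℂ).transpose = blockMatrix g.transpose := by
    ext x y
    simp [blockMatrix, Matrix.transpose_apply, eq_comm]
  rw [act, act, fischer_linSubst, h]

lemma act_conj (g : Matrix (Fin 2) (Fin 2) ℂ) (f : MvPolynomial (Vars n) ℂ) :
    act g (conj f) = conj (act (g.map (starRingEnd ℂ)) f) := by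
  induction f using MvPolynomial.induction_on with
  | C a => simp [conj, act, linSubst]
  | add p q hp hq => simp [hp, hq]
  | mul_X p x hp =>
    obtain ⟨⟨i, s⟩, rfl⟩ := toLex.surjective x
    rw [map_mul, map_mul, hp]
    simp [conj, smul_eq_C_mul]

/-- The infinitesimal diagonal action of a `2 × 2` matrix on the vectors in `S`. -/
def infAct (S : Finset (Fin n)) : Matrix (Fin 2) (Fin 2) ℂ →ₗ[ℂ]
    Derivation ℂ (MvPolynomial (Vars n) ℂ) (MvPolynomial (Vars n) ℂ) where
  toFun A := mkDerivation ℂ fun x =>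
    if (ofLex x).1 ∈ S then ∑ t, A t (ofLex x).2 • X (toLex ((ofLex x).1, t)) else 0
  map_add' A B := derivation_ext fun x => by
    by_cases hx : (ofLex x).1 ∈ S <;> simp [mkDerivation_X, hx, add_smul]; abel
  map_smul' c A := derivation_ext fun x => by
    by_cases hx : (ofLex x).1 ∈ S <;> simp [mkDerivation_X, hx, mul_smul]

lemma infAct_X (S : Finset (Fin n)) (A : Matrix (Fin 2) (Fin 2) ℂ) (i : Fin n) (s : Fin 2) :
    infAct S A (X (toLex (i, s))) = if i ∈ S then ∑ t, A t s • X (toLex (i, t)) else 0 :=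
  mkDerivation_X ..

lemma lie_infAct (S : Finset (Fin n)) (A B : Matrix (Fin 2) (Fin 2) ℂ) :
    ⁅infAct S A, infAct S B⁆ = infAct S ⁅A, B⁆ := by
  refine derivation_ext fun x => ?_
  obtain ⟨⟨i, s⟩, rfl⟩ := toLex.surjective x
  by_cases hi : i ∈ S
  · simp only [Derivation.commutator_apply, infAct_X, hi, if_true, Fin.sum_univ_two, map_add,
      Derivation.map_smul, Ring.lie_def, Matrix.sub_apply, Matrix.mul_apply]
    module
  · simp [Derivation.commutator_apply, infAct_X, hi]

lemma sum_derivation_apply {ι R A : Type*} [CommRing R] [CommRing A] [Algebra R A]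
    (S : Finset ι) (D : ι → Derivation R A A) (f : A) : (∑ i ∈ S, D i) f = ∑ i ∈ S, D i f := by
  classical induction S using Finset.induction_on <;> simp_all

lemma infAct_apply (S : Finset (Fin n)) (A : Matrix (Fin 2) (Fin 2) ℂ)
    (f : MvPolynomial (Vars n) ℂ) : infAct S A f =
      ∑ i ∈ S, ∑ t, ∑ s, A t s • (X (toLex (i, t)) * pderiv (toLex (i, s)) f) := by
  have h : infAct S A = ∑ i ∈ S, ∑ t, ∑ s,
      A t s • (X (toLex (i, t)) : MvPolynomial (Vars n) ℂ) • pderiv (toLex (i, s)) := by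
    refine derivation_ext fun x => ?_
    obtain ⟨⟨j, s⟩, rfl⟩ := toLex.surjective x
    simp only [infAct_X, sum_derivation_apply, Derivation.smul_apply, pderiv_X, Pi.single_apply]
    fin_cases s <;> simp
  simp only [h, sum_derivation_apply, Derivation.smul_apply, smul_eq_mul]

lemma exists_nat_weight_of_infAct {S : Finset (Fin n)} (hS : S.Nonempty)
    {p : MvPolynomial (Vars n) ℂ} (hp : p ≠ 0) (hE : infAct S sl2E p = 0) {μ : ℂ}
    (hH : infAct S sl2H p = μ • p) : ∃ N : ℕ, μ = N := by
  have t : IsSl2Triple (infAct S sl2H) (infAct S sl2E) (infAct S sl2F) :=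
    { h_ne_zero := fun h => by
        obtain ⟨i, hi⟩ := hS
        have := congrArg (fun D => D (X (bv i))) h
        simp [infAct_X, hi, sl2H] at this
      lie_e_f := by rw [lie_infAct, lie_sl2E_sl2F]
      lie_h_e_nsmul := by rw [lie_infAct, lie_sl2H_sl2E, map_nsmul]
      lie_h_f_nsmul := by rw [lie_infAct, lie_sl2H_sl2F, map_neg, map_nsmul] }
  have P : t.HasPrimitiveVectorWith p μ := ⟨hp, hH, hE⟩
  refine exists_nat_weight_of_pow_eq_zero P ?_
  refine exists_derivation_pow_eq_zero (infAct S sl2F) (fun x => ?_) p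
  obtain ⟨⟨i, s⟩, rfl⟩ := toLex.surjective x
  by_cases hi : i ∈ S <;> fin_cases s <;> simp [infAct_X, hi, sl2F]

end Vectors

section Invariants

variable {n : ℕ}

/-- Polynomials in `n` vectors invariant under the diagonal action of `SU(2)`. -/
def invariants (n : ℕ) : Subalgebra ℂ (MvPolynomial (Vars n) ℂ) :=
  ⨅ g : SU2, AlgHom.equalizer (act (g : Matrix (Fin 2) (Fin 2) ℂ)) (AlgHom.id ℂ _)

lemma mem_invariants {f : MvPolynomial (Vars n) ℂ} :
    f ∈ invariants n ↔ ∀ g : SU2, act (g : Matrix (Fin 2) (Fin 2) ℂ) f = f := by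
  simp [invariants, Algebra.mem_iInf, AlgHom.mem_equalizer]

/-- Polynomials that are homogeneous of degree `d i` in the `i`-th vector. -/
def multiHom (d : Fin n → ℕ) : Submodule ℂ (MvPolynomial (Vars n) ℂ) :=
  weightedHomogeneousSubmodule ℂ (blockWeight fun x : Vars n => (ofLex x).1) d

/-- The degrees of a monomial in each of the `n` vectors. -/
def vecDeg (m : Vars n →₀ ℕ) (i : Fin n) : ℕ := m (av i) + m (bv i)

lemma weight_blockWeight_vars (m : Vars n →₀ ℕ) :
    Finsupp.weight (blockWeight fun x : Vars n => (ofLex x).1) m = vecDeg m := by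
  funext i
  rw [weight_blockWeight, Finset.sum_filter, sum_vars]
  rw [Finset.sum_eq_single i (by simp +contextual) (by simp)]
  simp [vecDeg]

lemma vecDeg_add (m m' : Vars n →₀ ℕ) : vecDeg (m + m') = vecDeg m + vecDeg m' := by
  simp only [← weight_blockWeight_vars, map_add]

lemma mem_multiHom {d : Fin n → ℕ} {f : MvPolynomial (Vars n) ℂ} :
    f ∈ multiHom d ↔ ∀ m ∈ f.support, vecDeg m = d := by
  simp only [multiHom, mem_weightedHomogeneousSubmodule, IsWeightedHomogeneous,
    weight_blockWeight_vars, mem_support_iff]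

/-- The `SU(2)`-invariants that are homogeneous of degree `d i` in the `i`-th vector. -/
def invPoly (d : Fin n → ℕ) : Submodule ℂ (MvPolynomial (Vars n) ℂ) :=
  multiHom d ⊓ (invariants n).toSubmodule

lemma mul_mem_invPoly {d e : Fin n → ℕ} {f g : MvPolynomial (Vars n) ℂ} (hf : f ∈ invPoly d)
    (hg : g ∈ invPoly e) : f * g ∈ invPoly (d + e) :=
  ⟨IsWeightedHomogeneous.mul hf.1 hg.1, Subalgebra.mul_mem _ hf.2 hg.2⟩

lemma transpose_mem_SU2 (g : SU2) :
    (g : Matrix (Fin 2) (Fin 2) ℂ).transpose ∈ Matrix.specialUnitaryGroup (Fin 2) ℂ := by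
  have h := Matrix.mem_specialUnitaryGroup_iff.1 g.2
  exact Matrix.mem_specialUnitaryGroup_iff.2
    ⟨Matrix.transpose_mem_unitaryGroup_iff.2 h.1, by rw [Matrix.det_transpose, h.2]⟩

lemma map_star_mem_SU2 (g : SU2) :
    (g : Matrix (Fin 2) (Fin 2) ℂ).map (starRingEnd ℂ) ∈
      Matrix.specialUnitaryGroup (Fin 2) ℂ :=
  transpose_mem_SU2 (star g)

lemma conj_mem_multiHom {d : Fin n → ℕ} {f : MvPolynomial (Vars n) ℂ} (hf : f ∈ multiHom d) :
    conj f ∈ multiHom d :=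
  mem_multiHom.2 fun m hm => mem_multiHom.1 hf m (support_map_subset _ _ hm)

lemma conj_mem_invPoly {d : Fin n → ℕ} {f : MvPolynomial (Vars n) ℂ} (hf : f ∈ invPoly d) :
    conj f ∈ invPoly d := by
  refine ⟨conj_mem_multiHom hf.1, mem_invariants.2 fun g => ?_⟩
  rw [act_conj, mem_invariants.1 hf.2 ⟨_, map_star_mem_SU2 g⟩]

lemma mem_SU2_of {a b : ℂ} (h : a * starRingEnd ℂ a + b * starRingEnd ℂ b = 1) :
    !![a, -starRingEnd ℂ b; b, starRingEnd ℂ a] ∈ Matrix.specialUnitaryGroup (Fin 2) ℂ := by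
  have hstar : star !![a, -starRingEnd ℂ b; b, starRingEnd ℂ a] =
      !![starRingEnd ℂ a, starRingEnd ℂ b; -b, a] := by
    ext i j
    fin_cases i <;> fin_cases j <;> simp [Matrix.star_apply]
  refine Matrix.mem_specialUnitaryGroup_iff.2 ⟨Matrix.mem_unitaryGroup_iff'.2 ?_, ?_⟩
  · rw [hstar, Matrix.mul_fin_two, Matrix.one_fin_two]
    congr! 4
    · linear_combination h
    · ring
    · ring
    · congr! 1
      linear_combination h
  · rw [Matrix.det_fin_two_of]; linear_combination h

lemma hasDerivAt_eval {σ : Type*} {w : ℝ → σ → ℂ} {t : ℝ}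
    {D : Derivation ℂ (MvPolynomial σ ℂ) (MvPolynomial σ ℂ)}
    (hw : ∀ x, HasDerivAt (fun θ => w θ x) (eval (w t) (D (X x))) t) (f : MvPolynomial σ ℂ) :
    HasDerivAt (fun θ => eval (w θ) f) (eval (w t) (D f)) t := by
  induction f using MvPolynomial.induction_on with
  | C a => simpa using hasDerivAt_const t a
  | add p q hp hq => simpa only [map_add] using hp.fun_add hq
  | mul_X p x hp =>
    simp only [map_mul, eval_X]
    refine (hp.mul (hw x)).congr_deriv ?_
    simp only [Derivation.leibniz, map_add, smul_eq_mul, map_mul, eval_X]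
    ring

lemma infAct_eq_zero_of_hasDerivAt {f : MvPolynomial (Vars n) ℂ} (hf : f ∈ invariants n)
    {g : ℝ → SU2} {A : Matrix (Fin 2) (Fin 2) ℂ} (hg0 : g 0 = 1)
    (hg : ∀ s t, HasDerivAt (fun θ => (g θ : Matrix (Fin 2) (Fin 2) ℂ) s t) (A s t) 0) :
    infAct Finset.univ A f = 0 := by
  refine MvPolynomial.funext fun u => ?_
  let w (θ : ℝ) (x : Vars n) : ℂ := eval u (act (g θ : Matrix (Fin 2) (Fin 2) ℂ) (X x))
  have hw (θ : ℝ) (p : MvPolynomial (Vars n) ℂ) :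
      eval (w θ) p = eval u (act (g θ : Matrix (Fin 2) (Fin 2) ℂ) p) := by
    induction p using MvPolynomial.induction_on with
    | C a => simp [act, linSubst]
    | add p q hp hq => simp only [map_add, hp, hq]
    | mul_X p x hp => simp only [map_mul, hp, eval_X, w]
  have hw0 : w 0 = u := by
    funext x
    obtain ⟨⟨i, s⟩, rfl⟩ := toLex.surjective x
    fin_cases s <;> simp [w, hg0]
  have hderiv : HasDerivAt (fun θ => eval (w θ) f) (eval u (infAct Finset.univ A f)) 0 := by
    rw [← hw0]
    refine hasDerivAt_eval (fun x => ?_) f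
    rw [hw0]
    obtain ⟨⟨i, s⟩, rfl⟩ := toLex.surjective x
    simp only [w, act_X, infAct_X, Finset.mem_univ, if_true, map_sum, smul_eval, eval_X]
    refine HasDerivAt.fun_sum fun t _ => ?_
    exact (hg t s).mul_const _
  simp only [hw, mem_invariants.1 hf] at hderiv
  rw [hderiv.unique (hasDerivAt_const _ _), map_zero]

lemma infAct_antiHermitian_eq_zero {f : MvPolynomial (Vars n) ℂ} (hf : f ∈ invariants n) {c : ℂ}
    (hc : c * starRingEnd ℂ c = 1) :
    infAct Finset.univ !![0, -starRingEnd ℂ c; c, 0] f = 0 := by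
  have hmem (θ : ℝ) : (Real.cos θ : ℂ) * starRingEnd ℂ (Real.cos θ : ℂ) +
      (Real.sin θ * c) * starRingEnd ℂ (Real.sin θ * c) = 1 := by
    simp only [map_mul, Complex.conj_ofReal]
    have := Complex.cos_sq_add_sin_sq θ
    push_cast
    linear_combination this + Complex.sin θ ^ 2 * hc
  refine infAct_eq_zero_of_hasDerivAt (g := fun θ => ⟨_, mem_SU2_of (hmem θ)⟩) hf ?_ ?_
  · refine Subtype.ext ?_
    ext i j
    fin_cases i <;> fin_cases j <;> simp
  have hcos : HasDerivAt (fun θ : ℝ => (Real.cos θ : ℂ)) 0 0 := by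
    simpa using (Real.hasDerivAt_cos 0).ofReal_comp
  have hsin : HasDerivAt (fun θ : ℝ => (Real.sin θ : ℂ)) 1 0 := by
    simpa using (Real.hasDerivAt_sin 0).ofReal_comp
  intro s t
  fin_cases s <;> fin_cases t
  · simpa using hcos
  · simpa [Complex.conj_ofReal, -Complex.ofReal_sin] using
      (hsin.mul_const (starRingEnd ℂ c)).fun_neg
  · simpa using hsin.mul_const c
  · simpa [Complex.conj_ofReal, -Complex.ofReal_cos] using hcos

lemma infAct_sl2E_eq_zero {f : MvPolynomial (Vars n) ℂ} (hf : f ∈ invariants n) :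
    infAct Finset.univ sl2E f = 0 := by
  have h1 := infAct_antiHermitian_eq_zero hf (c := 1) (by simp)
  have hI := infAct_antiHermitian_eq_zero hf (c := Complex.I) (by simp)
  have h : sl2E = (1 / 2 : ℂ) • !![0, -starRingEnd ℂ 1; 1, 0] +
      (-Complex.I / 2) • !![0, -starRingEnd ℂ Complex.I; Complex.I, 0] := by
    ext i j
    fin_cases i <;> fin_cases j <;> simp [sl2E] <;> linear_combination (1 / 2 : ℂ) * Complex.I_sq
  rw [h, map_add, map_smul, map_smul, Derivation.add_apply, Derivation.smul_apply,
    Derivation.smul_apply, h1, hI, smul_zero, smul_zero, add_zero]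

lemma infAct_sl2F_eq_zero {f : MvPolynomial (Vars n) ℂ} (hf : f ∈ invariants n) :
    infAct Finset.univ sl2F f = 0 := by
  have h1 := infAct_antiHermitian_eq_zero hf (c := 1) (by simp)
  have h : sl2F = sl2E - !![0, -starRingEnd ℂ 1; 1, 0] := by
    ext i j
    fin_cases i <;> fin_cases j <;> simp [sl2E, sl2F]
  rw [h, map_sub, Derivation.sub_apply, h1, infAct_sl2E_eq_zero hf, sub_zero]

lemma infAct_sl2H_eq_zero {f : MvPolynomial (Vars n) ℂ} (hf : f ∈ invariants n) :
    infAct Finset.univ sl2H f = 0 := by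
  rw [← lie_sl2E_sl2F, ← lie_infAct, Derivation.commutator_apply, infAct_sl2E_eq_zero hf,
    infAct_sl2F_eq_zero hf, map_zero, map_zero, sub_zero]

end Invariants

section LeadingExponent

lemma exists_eq_X_pow_mul {σ : Type*} {x : σ} {q : ℕ} {f : MvPolynomial σ ℂ}
    (hf : ∀ m ∈ f.support, q ≤ m x) : ∃ p, f = X x ^ q * p := by
  change X x ^ q ∣ f
  rw [f.as_sum]
  refine Finset.dvd_sum fun m hm => ⟨monomial (m - Finsupp.single x q) (coeff m f), ?_⟩
  rw [X_pow_eq_monomial, monomial_mul, one_mul,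
    add_tsub_cancel_of_le (Finsupp.single_le_iff.2 (hf m hm))]

lemma coeff_X_mul_pderiv {σ : Type*} {a b : σ} (hab : a ≠ b) (m : σ →₀ ℕ)
    (f : MvPolynomial σ ℂ) : coeff m (X b * pderiv a f) =
      if m b = 0 then 0
      else ((m a : ℂ) + 1) * coeff (m - Finsupp.single b 1 + Finsupp.single a 1) f := by
  classical
  rw [coeff_X_mul', coeff_pderiv]
  simp [hab.symm, mul_comm]

/-- The sum of the terms of `f` whose exponent satisfies `P`. -/
def monomialPart {σ : Type*} (P : (σ →₀ ℕ) → Prop) (f : MvPolynomial σ ℂ) : MvPolynomial σ ℂ :=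
  open Classical in ∑ m ∈ f.support with P m, monomial m (coeff m f)

open Classical in
lemma coeff_monomialPart {σ : Type*} (P : (σ →₀ ℕ) → Prop) (m : σ →₀ ℕ) (f : MvPolynomial σ ℂ) :
    coeff m (monomialPart P f) = if P m then coeff m f else 0 := by
  rw [monomialPart, coeff_sum]
  simp only [coeff_monomial, Finset.sum_ite_eq', Finset.mem_filter, mem_support_iff]
  by_cases hm : coeff m f = 0 <;> simp [hm]

variable {n : ℕ}

/-- A ballot exponent: every second coordinate can be matched with a first coordinate of an
earlier vector. -/
def Ballot (m : Vars n →₀ ℕ) : Prop :=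
  (∀ i, ∑ s ∈ Finset.Iic i, m (bv s) ≤ ∑ s ∈ Finset.Iio i, m (av s)) ∧
    ∑ s, m (bv s) = ∑ s, m (av s)

/-- The exponents `m` and `m'` agree on the vectors before the `i`-th. -/
def AgreeBelow (i : Fin n) (m m' : Vars n →₀ ℕ) : Prop :=
  ∀ s < i, m (av s) = m' (av s) ∧ m (bv s) = m' (bv s)

lemma AgreeBelow.toLex_lt {i : Fin n} {m m' : Vars n →₀ ℕ} (h : AgreeBelow i m m')
    (hi : m (av i) < m' (av i)) : toLex m < toLex m' := by
  refine Finsupp.Lex.lt_iff.2 ⟨av i, fun x hx => ?_, hi⟩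
  obtain ⟨⟨s, t⟩, rfl⟩ := toLex.surjective x
  have hs : s < i := by
    rcases Prod.Lex.toLex_lt_toLex.1 hx with h | h
    · exact h
    · exact absurd h.2 (by simp)
  fin_cases t
  · exact (h s hs).1
  · exact (h s hs).2

lemma agreeBelow_shift_iff {i s : Fin n} (hs : i ≤ s) {m m' : Vars n →₀ ℕ} :
    AgreeBelow i (m - Finsupp.single (bv s) 1 + Finsupp.single (av s) 1) m' ↔
      AgreeBelow i m m' := by
  refine forall₂_congr fun t ht => ?_
  have hne : s ≠ t := (ht.trans_le hs).ne'
  simp [hne]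

lemma infAct_sl2E_apply (S : Finset (Fin n)) (f : MvPolynomial (Vars n) ℂ) :
    infAct S sl2E f = ∑ s ∈ S, X (bv s) * pderiv (av s) f := by
  simp [infAct_apply, sl2E]

lemma coeff_infAct_sl2H (S : Finset (Fin n)) (m : Vars n →₀ ℕ) (f : MvPolynomial (Vars n) ℂ) :
    coeff m (infAct S sl2H f) = (∑ s ∈ S, ((m (bv s) : ℂ) - m (av s))) * coeff m f := by
  have hX (x : Vars n) : coeff m (X x * pderiv x f) = m x * coeff m f := by
    induction f using MvPolynomial.induction_on' with
    | add p q hp hq => simp only [map_add, mul_add, coeff_add, hp, hq]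
    | monomial l c =>
      classical
      rw [X_mul_pderiv_monomial, coeff_smul, coeff_monomial]
      split_ifs with h <;> simp [h]
  rw [infAct_apply, coeff_sum, Finset.sum_mul]
  refine Finset.sum_congr rfl fun s _ => ?_
  simp [sl2H, hX]
  ring

lemma infAct_sl2E_monomialPart_eq_zero {f : MvPolynomial (Vars n) ℂ}
    (hf : infAct Finset.univ sl2E f = 0) {m₀ : Vars n →₀ ℕ}
    (hmax : ∀ m ∈ f.support, toLex m ≤ toLex m₀) (i : Fin n) :
    infAct (Finset.Ici i) sl2E (monomialPart (AgreeBelow i · m₀) f) = 0 := by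
  classical
  have hne (s : Fin n) : av s ≠ bv s := by simp
  ext m
  rw [infAct_sl2E_apply, coeff_sum, coeff_zero]
  by_cases hm : AgreeBelow i m m₀
  · have hlow (s : Fin n) (hs : s < i) : coeff m (X (bv s) * pderiv (av s) f) = 0 := by
      rw [coeff_X_mul_pderiv (hne s)]
      split_ifs with hb
      · rfl
      refine mul_eq_zero_of_right _ (by_contra fun hcoeff => ?_)
      refine (hmax _ (mem_support_iff.2 hcoeff)).not_gt ?_
      refine AgreeBelow.toLex_lt (i := s) (fun t ht => ?_) ?_
      · simp [ht.ne', hm t (ht.trans hs)]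
      · simp [hm s hs]
    have hhigh (s : Fin n) (hs : s ∈ Finset.Ici i) :
        coeff m (X (bv s) * pderiv (av s) (monomialPart (AgreeBelow i · m₀) f)) =
          coeff m (X (bv s) * pderiv (av s) f) := by
      rw [coeff_X_mul_pderiv (hne s), coeff_X_mul_pderiv (hne s), coeff_monomialPart,
        if_pos ((agreeBelow_shift_iff (Finset.mem_Ici.1 hs)).2 hm)]
    rw [Finset.sum_congr rfl hhigh, Finset.sum_subset (Finset.subset_univ _)
      (fun s _ hs => hlow s (by simpa using hs)), ← coeff_sum, ← infAct_sl2E_apply, hf, coeff_zero]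
  · refine Finset.sum_eq_zero fun s hs => ?_
    rw [coeff_X_mul_pderiv (hne s), coeff_monomialPart,
      if_neg (mt (agreeBelow_shift_iff (Finset.mem_Ici.1 hs)).1 hm), mul_zero, ite_self]

lemma mem_support_monomialPart {σ : Type*} {P : (σ →₀ ℕ) → Prop} {m : σ →₀ ℕ}
    {f : MvPolynomial σ ℂ} : m ∈ (monomialPart P f).support ↔ P m ∧ m ∈ f.support := by
  classical simp [mem_support_iff, coeff_monomialPart]

lemma sum_vecWeight_eq_zero {f : MvPolynomial (Vars n) ℂ} (hf : infAct Finset.univ sl2H f = 0)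
    {m : Vars n →₀ ℕ} (hm : m ∈ f.support) : ∑ s, ((m (bv s) : ℂ) - m (av s)) = 0 := by
  have h := coeff_infAct_sl2H Finset.univ m f
  rw [hf, coeff_zero, eq_comm] at h
  exact (mul_eq_zero.1 h).resolve_right (mem_support_iff.1 hm)

lemma infAct_sl2H_monomialPart {f : MvPolynomial (Vars n) ℂ}
    (hf : infAct Finset.univ sl2H f = 0) (m₀ : Vars n →₀ ℕ) (i : Fin n) :
    infAct (Finset.Ici i) sl2H (monomialPart (AgreeBelow i · m₀) f) =
      (∑ s ∈ Finset.Iio i, ((m₀ (av s) : ℂ) - m₀ (bv s))) •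
        monomialPart (AgreeBelow i · m₀) f := by
  ext m
  rw [coeff_infAct_sl2H, coeff_smul, smul_eq_mul]
  by_cases hm : m ∈ (monomialPart (AgreeBelow i · m₀) f).support
  · obtain ⟨hag, hmf⟩ := mem_support_monomialPart.1 hm
    have htot := sum_vecWeight_eq_zero hf hmf
    have hdisj : Disjoint (Finset.Iio i) (Finset.Ici i) :=
      Finset.disjoint_left.2 fun s => by simp
    have hunion : Finset.Iio i ∪ Finset.Ici i = Finset.univ := by
      ext s
      simp [lt_or_ge]
    have hlow : ∑ s ∈ Finset.Iio i, ((m₀ (av s) : ℂ) - m₀ (bv s)) =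
        -∑ s ∈ Finset.Iio i, ((m (bv s) : ℂ) - m (av s)) := by
      rw [← Finset.sum_neg_distrib]
      refine Finset.sum_congr rfl fun s hs => ?_
      rw [(hag s (Finset.mem_Iio.1 hs)).1, (hag s (Finset.mem_Iio.1 hs)).2, neg_sub]
    rw [← hunion, Finset.sum_union hdisj] at htot
    rw [hlow, eq_neg_of_add_eq_zero_right htot]
  · rw [notMem_support_iff.1 hm, mul_zero, mul_zero]

lemma exists_nat_weight_of_X_pow_mul {S : Finset (Fin n)} {i : Fin n} (hi : i ∈ S) {q : ℕ}
    {p : MvPolynomial (Vars n) ℂ} (hp : p ≠ 0) (hE : infAct S sl2E (X (bv i) ^ q * p) = 0) {μ : ℂ}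
    (hH : infAct S sl2H (X (bv i) ^ q * p) = μ • (X (bv i) ^ q * p)) : ∃ N : ℕ, μ = q + N := by
  have hX : (X (bv i) : MvPolynomial (Vars n) ℂ) ^ q ≠ 0 := pow_ne_zero _ (X_ne_zero _)
  have hEX : infAct S sl2E (X (bv i) : MvPolynomial (Vars n) ℂ) = 0 := by
    simp [infAct_X, hi, sl2E]
  have hHX : infAct S sl2H (X (bv i) : MvPolynomial (Vars n) ℂ) = X (bv i) := by
    simp [infAct_X, hi, sl2H]
  have hHX' : infAct S sl2H (X (bv i) ^ q : MvPolynomial (Vars n) ℂ) = (q : ℂ) • X (bv i) ^ q := by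
    rcases q with _ | q
    · simp
    · rw [Derivation.leibniz_pow, hHX, add_tsub_cancel_right, smul_eq_mul, ← pow_succ,
        Nat.cast_smul_eq_nsmul]
  rw [Derivation.leibniz, Derivation.leibniz_pow, hEX, smul_zero, smul_zero, smul_zero, add_zero,
    smul_eq_mul, mul_eq_zero_iff_left hX] at hE
  have hHp : infAct S sl2H p = (μ - q) • p := by
    refine mul_left_cancel₀ hX ?_
    rw [Derivation.leibniz, hHX', smul_eq_mul, smul_eq_mul, ← eq_sub_iff_add_eq] at hH
    rw [hH, mul_smul_comm, mul_smul_comm, sub_smul, mul_comm p]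
  obtain ⟨N, hN⟩ := exists_nat_weight_of_infAct ⟨i, hi⟩ hp hE hHp
  exact ⟨N, by rw [← hN]; ring⟩

lemma le_of_mem_support_monomialPart {d : Fin n → ℕ} {f : MvPolynomial (Vars n) ℂ}
    (hf : f ∈ multiHom d) {m₀ m : Vars n →₀ ℕ} (h₀ : m₀ ∈ f.support)
    (hmax : ∀ m ∈ f.support, toLex m ≤ toLex m₀) {i : Fin n}
    (hm : m ∈ (monomialPart (AgreeBelow i · m₀) f).support) : m₀ (bv i) ≤ m (bv i) := by
  obtain ⟨hag, hmf⟩ := mem_support_monomialPart.1 hm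
  have ha : m (av i) ≤ m₀ (av i) := not_lt.1 fun hlt =>
    (hmax m hmf).not_gt (AgreeBelow.toLex_lt (fun s hs => (hag s hs).imp Eq.symm Eq.symm) hlt)
  have hdeg := congrFun ((mem_multiHom.1 hf m hmf).trans (mem_multiHom.1 hf m₀ h₀).symm) i
  simp only [vecDeg] at hdeg
  omega

/-- The terms of an invariant that agree with the leading one before the `i`-th vector form a
highest weight vector for `sl₂` acting on the remaining vectors, divisible by the power of the
second coordinate of the `i`-th vector in the leading term; its weight dominates that power. -/
lemma ballot_of_isMax {d : Fin n → ℕ} {f : MvPolynomial (Vars n) ℂ} (hf : f ∈ invPoly d)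
    {m₀ : Vars n →₀ ℕ} (h₀ : m₀ ∈ f.support) (hmax : ∀ m ∈ f.support, toLex m ≤ toLex m₀) :
    Ballot m₀ := by
  refine ⟨fun i => ?_, ?_⟩
  · obtain ⟨p, hp⟩ := exists_eq_X_pow_mul fun m hm =>
      le_of_mem_support_monomialPart (i := i) hf.1 h₀ hmax hm
    have hp0 : p ≠ 0 := by
      rintro rfl
      have hmem : m₀ ∈ (monomialPart (AgreeBelow i · m₀) f).support :=
        mem_support_monomialPart.2 ⟨fun s _ => ⟨rfl, rfl⟩, h₀⟩
      rw [hp, mul_zero] at hmem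
      exact Finset.notMem_empty _ hmem
    have hE := infAct_sl2E_monomialPart_eq_zero (infAct_sl2E_eq_zero hf.2) hmax i
    have hH := infAct_sl2H_monomialPart (infAct_sl2H_eq_zero hf.2) m₀ i
    rw [hp] at hE hH
    obtain ⟨N, hN⟩ := exists_nat_weight_of_X_pow_mul (Finset.mem_Ici.2 le_rfl) hp0 hE hH
    rw [Finset.sum_sub_distrib, sub_eq_iff_eq_add] at hN
    have hN' : ∑ s ∈ Finset.Iio i, m₀ (av s) =
        m₀ (bv i) + N + ∑ s ∈ Finset.Iio i, m₀ (bv s) := mod_cast hN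
    rw [← Finset.Iio_insert, Finset.sum_insert (by simp), hN']
    omega
  · have h := sum_vecWeight_eq_zero (infAct_sl2H_eq_zero hf.2) h₀
    rw [Finset.sum_sub_distrib, sub_eq_zero] at h
    exact_mod_cast h

open MonomialOrder in
lemma ballot_lex_degree {d : Fin n → ℕ} {f : MvPolynomial (Vars n) ℂ} (hf : f ∈ invPoly d)
    (h0 : f ≠ 0) : Ballot (lex.degree f) :=
  ballot_of_isMax hf ((lex.degree_mem_support_iff f).2 h0)
    fun _ hm => lex_le_iff.1 (lex.le_degree hm)

end LeadingExponent

section Brackets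

variable {n : ℕ}

/-- The leading exponent of the bracket of the `i`-th and `j`-th vectors, for `i < j`. -/
def bracketExp (i j : Fin n) : Vars n →₀ ℕ := Finsupp.single (av i) 1 + Finsupp.single (bv j) 1

/-- The bracket of the `i`-th and `j`-th vectors, that is, their determinant. -/
def bracket (i j : Fin n) : MvPolynomial (Vars n) ℂ :=
  monomial (bracketExp i j) 1 - monomial (bracketExp j i) 1

lemma bracketExp_av (i j s : Fin n) : bracketExp i j (av s) = if s = i then 1 else 0 := by
  simp [bracketExp, Finsupp.single_apply, eq_comm]

lemma bracketExp_bv (i j s : Fin n) : bracketExp i j (bv s) = if s = j then 1 else 0 := by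
  simp [bracketExp, Finsupp.single_apply, eq_comm]

lemma vecDeg_bracketExp_comm (i j : Fin n) :
    vecDeg (bracketExp i j) = vecDeg (bracketExp j i) := by
  funext s
  simp only [vecDeg, bracketExp_av, bracketExp_bv, add_comm]

lemma bracket_mem_invPoly (i j : Fin n) : bracket i j ∈ invPoly (vecDeg (bracketExp i j)) := by
  have hmon (m : Vars n →₀ ℕ) : monomial m (1 : ℂ) ∈ multiHom (vecDeg m) :=
    isWeightedHomogeneous_monomial _ _ _ (weight_blockWeight_vars m)
  refine ⟨sub_mem (hmon _) ?_, mem_invariants.2 fun g => ?_⟩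
  · rw [vecDeg_bracketExp_comm]
    exact hmon _
  have hdet := (Matrix.mem_specialUnitaryGroup_iff.1 g.2).2
  rw [Matrix.det_fin_two] at hdet
  have h := congrArg (C : ℂ → MvPolynomial (Vars n) ℂ) hdet
  have hX : bracket i j = X (av i) * X (bv j) - X (av j) * X (bv i) := by
    simp [bracket, bracketExp, X, monomial_mul]
  simp only [map_sub, map_mul, map_one] at h
  simp only [hX, map_sub, map_mul, act_X, Fin.sum_univ_two, smul_eq_C_mul]
  linear_combination (X (av i) * X (bv j) - X (av j) * X (bv i)) * h

open MonomialOrder in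
lemma lex_degree_bracket {i j : Fin n} (hij : i < j) :
    lex.degree (bracket i j) = bracketExp i j := by
  classical
  have hlt : lex.degree (monomial (bracketExp j i) (1 : ℂ)) ≺[lex]
      lex.degree (monomial (bracketExp i j) (1 : ℂ)) := by
    simp only [degree_monomial, one_ne_zero, if_false]
    refine lex_lt_iff.2 (AgreeBelow.toLex_lt (i := i) (fun s hs => ?_) ?_)
    · simp [bracketExp_av, bracketExp_bv, hs.ne, (hs.trans hij).ne]
    · simp [bracketExp_av, hij.ne]
  rw [bracket, degree_sub_of_lt hlt, degree_monomial, if_neg one_ne_zero]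

lemma bracketExp_ne_zero (i j : Fin n) : bracketExp i j ≠ 0 := fun h => by
  simpa [bracketExp_av] using DFunLike.congr_fun h (av i)

lemma Ballot.of_add_bracketExp {m : Vars n →₀ ℕ} {i j : Fin n} (hij : i < j)
    (hm : Ballot (m + bracketExp i j)) (hj : ∀ s < j, m (bv s) = 0) : Ballot m := by
  have ha (S : Finset (Fin n)) : ∑ s ∈ S, (m + bracketExp i j) (av s) =
      ∑ s ∈ S, m (av s) + if i ∈ S then 1 else 0 := by
    simp [bracketExp_av, Finset.sum_add_distrib]
  have hb (S : Finset (Fin n)) : ∑ s ∈ S, (m + bracketExp i j) (bv s) =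
      ∑ s ∈ S, m (bv s) + if j ∈ S then 1 else 0 := by
    simp [bracketExp_bv, Finset.sum_add_distrib]
  refine ⟨fun t => ?_, ?_⟩
  · rcases lt_or_ge t j with htj | htj
    · rw [Finset.sum_eq_zero fun s hs => hj s ((Finset.mem_Iic.1 hs).trans_lt htj)]
      exact Nat.zero_le _
    · have h := hm.1 t
      rw [ha, hb, if_pos (Finset.mem_Iic.2 htj), if_pos (Finset.mem_Iio.2 (hij.trans_le htj))] at h
      exact Nat.le_of_add_le_add_right h
  · have h := hm.2
    rw [ha, hb, if_pos (Finset.mem_univ _), if_pos (Finset.mem_univ _)] at h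
    exact Nat.add_right_cancel h

lemma Ballot.exists_add_bracketExp {m : Vars n →₀ ℕ} (hm : Ballot m) (h0 : m ≠ 0) :
    ∃ i j, i < j ∧ ∃ m', Ballot m' ∧ m = m' + bracketExp i j := by
  obtain ⟨j₀, hj₀⟩ : ∃ j, m (bv j) ≠ 0 := by
    by_contra! hb
    have ha := hm.2.symm
    rw [Finset.sum_eq_zero fun s _ => hb s, Finset.sum_eq_zero_iff] at ha
    exact h0 (Finsupp.ext (forall_vars.2 fun s => ⟨ha s (Finset.mem_univ _), hb s⟩))
  obtain ⟨j, -, hjmin⟩ := exists_minimal_le_of_wellFoundedLT (fun j => m (bv j) ≠ 0) j₀ hj₀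
  have hzero (s : Fin n) (hs : s < j) : m (bv s) = 0 :=
    by_contra fun h => hs.not_ge (hjmin.2 h hs.le)
  obtain ⟨i, hij, hi⟩ : ∃ i < j, m (av i) ≠ 0 := by
    by_contra! h
    have hball := hm.1 j
    rw [Finset.sum_eq_zero fun s hs => h s (Finset.mem_Iio.1 hs)] at hball
    exact hjmin.1 (Nat.le_zero.1 ((Finset.single_le_sum (f := fun s => m (bv s))
      (fun _ _ => Nat.zero_le _) (Finset.mem_Iic.2 le_rfl)).trans hball))
  have hle : bracketExp i j ≤ m := forall_vars.2 fun s => by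
    rw [bracketExp_av, bracketExp_bv]
    constructor <;> split_ifs with h
    exacts [h ▸ Nat.one_le_iff_ne_zero.2 hi, Nat.zero_le _,
      h ▸ Nat.one_le_iff_ne_zero.2 hjmin.1, Nat.zero_le _]
  obtain ⟨m', rfl⟩ := exists_add_of_le hle
  rw [add_comm] at hm hzero
  exact ⟨i, j, hij, m', hm.of_add_bracketExp hij fun s hs =>
    (Nat.add_eq_zero_iff.1 (hzero s hs)).1, add_comm _ _⟩

open MonomialOrder in
lemma Ballot.exists_lex_degree_eq {m : Vars n →₀ ℕ} (hm : Ballot m) :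
    ∃ f ∈ invPoly (vecDeg m), f ≠ 0 ∧ lex.degree f = m := by
  induction m using WellFoundedLT.induction with
  | _ m ih =>
    by_cases h0 : m = 0
    · subst h0
      exact ⟨1, ⟨isWeightedHomogeneous_one _ _, (invariants n).one_mem⟩, one_ne_zero, degree_one⟩
    obtain ⟨i, j, hij, m', hm', rfl⟩ := hm.exists_add_bracketExp h0
    have hlt : m' < m' + bracketExp i j :=
      lt_add_of_pos_right _ (pos_iff_ne_zero.2 (bracketExp_ne_zero i j))
    obtain ⟨f, hf, hf0, hdeg⟩ := ih m' hlt hm'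
    have hb0 : bracket i j ≠ 0 := fun h => bracketExp_ne_zero i j (by
      rw [← lex_degree_bracket hij, h, degree_zero])
    refine ⟨f * bracket i j, ?_, mul_ne_zero hf0 hb0, ?_⟩
    · rw [vecDeg_add]
      exact mul_mem_invPoly hf (bracket_mem_invPoly i j)
    · rw [degree_mul hf0 hb0, hdeg, lex_degree_bracket hij]

end Brackets

section Splitting

/-- The triangle inequalities, with which the spins `L`, `k`, `L'` can be coupled. -/
def Triangle (L L' k : ℤ) : Prop := L - L' ≤ k ∧ L' - L ≤ k ∧ k ≤ L + L'

lemma triangle_add {L L' : ℤ} (hL : 0 ≤ L) (hL' : 0 ≤ L') : Triangle L L' (L + L') :=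
  ⟨by omega, by omega, le_rfl⟩

lemma nonneg_of_abs_sub_le_half {x : ℝ} {r : ℤ} (hx : 0 ≤ x) (hr : |r - x| ≤ 1 / 2) : 0 ≤ r := by
  have h : (-1 : ℝ) < r := by linarith [(abs_le.1 hr).1]
  have h' : -1 < r := mod_cast h
  omega

lemma exists_round_close (x : ℝ) {y : ℝ} {r : ℤ} (hr : |r - y| ≤ 1 / 2) :
    ∃ r' : ℤ, |r' - x| ≤ 1 / 2 ∧ |(r - y) - (r' - x)| < 1 := by
  obtain ⟨hr1, hr2⟩ := abs_le.1 hr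
  rcases hr2.eq_or_lt with h | h
  · have := Int.floor_le (x + 1 / 2)
    have := Int.lt_floor_add_one (x + 1 / 2)
    exact ⟨⌊x + 1 / 2⌋, abs_le.2 ⟨by linarith, by linarith⟩, abs_lt.2 ⟨by linarith, by linarith⟩⟩
  · have := Int.le_ceil (x - 1 / 2)
    have := Int.ceil_lt_add_one (x - 1 / 2)
    exact ⟨⌈x - 1 / 2⌉, abs_le.2 ⟨by linarith, by linarith⟩, abs_lt.2 ⟨by linarith, by linarith⟩⟩

lemma Triangle.round {c : ℝ} (hc : 0 < c) {L L' k m r r' : ℤ} (hm : (m : ℝ) = c * k)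
    (h : Triangle L L' k) (hlt : k < L + L') (hr : |r - c * L| ≤ 1 / 2)
    (hr' : |r' - c * L'| ≤ 1 / 2) (hclose : |(r - c * L) - (r' - c * L')| < 1) :
    Triangle r r' m := by
  obtain ⟨h1, h2, -⟩ := h
  have h1 : c * (L - L') ≤ c * k := mul_le_mul_of_nonneg_left (mod_cast h1) hc.le
  have h2 : c * (L' - L) ≤ c * k := mul_le_mul_of_nonneg_left (mod_cast h2) hc.le
  have h3 : c * k < c * (L + L') := mul_lt_mul_of_pos_left (mod_cast hlt) hc
  obtain ⟨hr, -⟩ := abs_le.1 hr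
  obtain ⟨hr', -⟩ := abs_le.1 hr'
  obtain ⟨hl, hu⟩ := abs_lt.1 hclose
  have e1 : ((r - r' : ℤ) : ℝ) < (m + 1 : ℤ) := by push_cast; linarith
  have e2 : ((r' - r : ℤ) : ℝ) < (m + 1 : ℤ) := by push_cast; linarith
  have e3 : (m : ℝ) < (r + r' + 1 : ℤ) := by push_cast; linarith
  exact ⟨Int.lt_add_one_iff.1 (mod_cast e1), Int.lt_add_one_iff.1 (mod_cast e2),
    Int.lt_add_one_iff.1 (mod_cast e3)⟩

lemma abs_compl_sub_le_half {c : ℝ} {r L : ℤ} (hr : |r - c * L| ≤ 1 / 2) :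
    |((L - r : ℤ) : ℝ) - (1 - c) * L| ≤ 1 / 2 := by
  rw [← abs_neg]
  convert hr using 2
  push_cast
  ring

lemma triangle_add_of_abs_sub_le_half {c : ℝ} (hc : 0 ≤ c) {L L' r r' : ℤ} (hL : 0 ≤ L)
    (hL' : 0 ≤ L') (hr : |r - c * L| ≤ 1 / 2) (hr' : |r' - c * L'| ≤ 1 / 2) :
    Triangle r r' (r + r') :=
  triangle_add (nonneg_of_abs_sub_le_half (mul_nonneg hc (mod_cast hL)) hr)
    (nonneg_of_abs_sub_le_half (mul_nonneg hc (mod_cast hL')) hr')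

lemma Triangle.exists_split {c : ℝ} (hc0 : 0 < c) (hc1 : c < 1) {L L' k m r : ℤ}
    (hm : (m : ℝ) = c * k) (h : Triangle L L' k) (hr : |r - c * L| ≤ 1 / 2) :
    ∃ r' : ℤ, |r' - c * L'| ≤ 1 / 2 ∧ Triangle r r' m ∧ Triangle (L - r) (L' - r') (k - m) := by
  rcases h.2.2.eq_or_lt with rfl | hlt
  · have hL : 0 ≤ L := by linarith [h.2.1]
    have hL' : 0 ≤ L' := by linarith [h.1]
    have hr' : |((m - r : ℤ) : ℝ) - c * L'| ≤ 1 / 2 := by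
      rw [← abs_neg]
      convert hr using 2
      push_cast at hm ⊢
      linarith
    refine ⟨m - r, hr', ?_, ?_⟩
    · convert triangle_add_of_abs_sub_le_half hc0.le hL hL' hr hr' using 1
      ring
    · convert triangle_add_of_abs_sub_le_half (sub_nonneg.2 hc1.le) hL hL'
        (abs_compl_sub_le_half hr) (abs_compl_sub_le_half hr') using 1
      ring
  · obtain ⟨r', hr', hclose⟩ := exists_round_close (c * L') hr
    refine ⟨r', hr', h.round hc0 hm hlt hr hr' hclose, ?_⟩
    refine h.round (sub_pos.2 hc1) (by push_cast; rw [hm]; ring) hlt (abs_compl_sub_le_half hr)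
      (abs_compl_sub_le_half hr') ?_
    rw [← abs_neg]
    convert hclose using 2
    push_cast
    ring

lemma exists_path {n : ℕ} {α : Type*} {P : ℕ → α → Prop} {R : Fin n → α → α → Prop} {x₀ : α}
    (h₀ : P 0 x₀) (hstep : ∀ (s : Fin n) (x), P s x → ∃ y, P (s + 1) y ∧ R s x y) :
    ∃ r : ℕ → α, r 0 = x₀ ∧ (∀ t ≤ n, P t (r t)) ∧ ∀ s : Fin n, R s (r s) (r (s + 1)) := by
  have hex (t : ℕ) (x : α) : ∃ y, ∀ ht : t < n, P t x → P (t + 1) y ∧ R ⟨t, ht⟩ x y := by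
    by_cases h : t < n ∧ P t x
    · obtain ⟨y, hy⟩ := hstep ⟨t, h.1⟩ x h.2
      exact ⟨y, fun _ _ => hy⟩
    · exact ⟨x, fun ht hx => absurd ⟨ht, hx⟩ h⟩
  choose F hF using hex
  let r (t : ℕ) : α := Nat.rec x₀ F t
  have hr (t : ℕ) (ht : t ≤ n) : P t (r t) := by
    induction t with
    | zero => exact h₀
    | succ t ih => exact (hF t (r t) ht (ih (Nat.le_of_succ_le ht))).1
  exact ⟨r, rfl, hr, fun s => (hF s (r s) s.2 (hr s s.2.le)).2⟩

variable {n : ℕ}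

lemma sum_Iio_telescope (g : ℕ → ℤ) (i : Fin n) :
    ∑ s ∈ Finset.Iio i, (g (s + 1) - g s) = g i - g 0 := by
  rw [← Finset.sum_range_sub g i, ← Nat.Iio_eq_range, ← Fin.map_valEmbedding_Iio,
    Finset.sum_map]
  rfl

/-- The exponent `m` has degree `2 * k i` in the `i`-th vector, and `L t` is half the weight of its
part in the first `t` vectors. -/
def IsHeight (k : Fin n → ℕ) (L : ℕ → ℤ) (m : Vars n →₀ ℕ) : Prop :=
  L 0 = 0 ∧ ∀ s, (m (av s) : ℤ) = k s + (L (s + 1) - L s) ∧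
    (m (bv s) : ℤ) = k s - (L (s + 1) - L s)

lemma IsHeight.vecDeg_eq {k : Fin n → ℕ} {L : ℕ → ℤ} {m : Vars n →₀ ℕ} (h : IsHeight k L m) :
    vecDeg m = fun i => 2 * k i := by
  funext i
  have := h.2 i
  simp only [vecDeg]
  omega

lemma exists_isHeight {k : Fin n → ℕ} {m : Vars n →₀ ℕ} (hm : vecDeg m = fun i => 2 * k i) :
    ∃ L, IsHeight k L m := by
  let L (t : ℕ) : ℤ := ∑ s : Fin n with s.val < t, ((m (av s) : ℤ) - k s)
  refine ⟨L, by simp [L], fun i => ?_⟩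
  have hstep : L (i + 1) = (m (av i) - k i) + L i := by
    have hins : Finset.univ.filter (fun s : Fin n => s.val < i.val + 1) =
        insert i (Finset.univ.filter fun s : Fin n => s.val < i.val) := by
      ext s
      simp [le_iff_eq_or_lt, Fin.ext_iff]
    simp only [L]
    rw [hins, Finset.sum_insert (by simp)]
  have hdeg := congrFun hm i
  simp only [vecDeg] at hdeg
  rw [hstep]
  omega

lemma IsHeight.ballot_iff {k : Fin n → ℕ} {L : ℕ → ℤ} {m : Vars n →₀ ℕ} (h : IsHeight k L m) :
    Ballot m ↔ (∀ s : Fin n, Triangle (L s) (L (s + 1)) (k s)) ∧ L n = 0 := by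
  have hsum (S : Finset (Fin n)) : ∑ s ∈ S, (m (av s) : ℤ) - ∑ s ∈ S, (m (bv s) : ℤ) =
      2 * ∑ s ∈ S, (L (s + 1) - L s) := by
    rw [← Finset.sum_sub_distrib, Finset.mul_sum]
    exact Finset.sum_congr rfl fun s _ => by rw [(h.2 s).1, (h.2 s).2]; ring
  refine and_congr (forall_congr' fun i => ?_) ?_
  · have hi := hsum (Finset.Iio i)
    rw [sum_Iio_telescope, h.1] at hi
    obtain ⟨ha, hb⟩ := h.2 i
    rw [← Finset.Iio_insert, Finset.sum_insert (by simp), Triangle]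
    zify
    omega
  · have hn := hsum Finset.univ
    rw [← Finset.sum_range (fun t => L (t + 1) - L t), Finset.sum_range_sub, h.1] at hn
    zify
    omega

lemma exists_ballot {k : Fin n → ℕ} {L : ℕ → ℤ} (h0 : L 0 = 0) (hn : L n = 0)
    (hL : ∀ s : Fin n, Triangle (L s) (L (s + 1)) (k s)) : ∃ m, Ballot m ∧ IsHeight k L m := by
  let m : Vars n →₀ ℕ := Finsupp.equivFunOnFinite.symm fun x =>
    let i := (ofLex x).1
    ![(k i + (L (i + 1) - L i)).toNat, (k i - (L (i + 1) - L i)).toNat] (ofLex x).2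
  have hm : IsHeight k L m := by
    refine ⟨h0, fun s => ?_⟩
    obtain ⟨h1, h2, -⟩ := hL s
    exact ⟨Int.toNat_of_nonneg (a := k s + (L (s + 1) - L s)) (by omega),
      Int.toNat_of_nonneg (a := k s - (L (s + 1) - L s)) (by omega)⟩
  exact ⟨m, hm.ballot_iff.2 ⟨hL, hn⟩, hm⟩

lemma Ballot.exists_split {c : ℝ} (hc0 : 0 < c) (hc1 : c < 1) {k jp jm : Fin n → ℕ}
    (hjp : ∀ i, (jp i : ℝ) = c * k i) (hsum : ∀ i, jp i + jm i = k i) {m : Vars n →₀ ℕ}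
    (hm : Ballot m) (hk : vecDeg m = fun i => 2 * k i) :
    ∃ mp mm, m = mp + mm ∧ (Ballot mp ∧ vecDeg mp = fun i => 2 * jp i) ∧
      Ballot mm ∧ vecDeg mm = fun i => 2 * jm i := by
  obtain ⟨L, hL⟩ := exists_isHeight hk
  obtain ⟨htri, hLn⟩ := hL.ballot_iff.1 hm
  obtain ⟨r, hr0, hround, hr⟩ := exists_path (P := fun t (r : ℤ) => |r - c * L t| ≤ 1 / 2)
    (x₀ := 0) (by simp [hL.1]) fun s x hx => (htri s).exists_split hc0 hc1 (hjp s) hx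
  have hrn : r n = 0 := by
    have h := hround n le_rfl
    rw [hLn, Int.cast_zero, mul_zero, sub_zero] at h
    have h1 : |(r n : ℝ)| < 1 := h.trans_lt (by norm_num)
    exact Int.abs_lt_one_iff.1 (mod_cast h1)
  have hjm (s : Fin n) : (jm s : ℤ) = k s - jp s := by
    have := hsum s
    omega
  obtain ⟨mp, hmp, hmp'⟩ := exists_ballot hr0 hrn fun s => (hr s).1
  obtain ⟨mm, hmm, hmm'⟩ := exists_ballot (k := jm) (L := fun t => L t - r t) (by simp [hr0, hL.1])
    (by simp [hrn, hLn]) fun s => by rw [hjm]; exact (hr s).2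
  refine ⟨mp, mm, Finsupp.ext (forall_vars.2 fun s => ?_), ⟨hmp, hmp'.vecDeg_eq⟩, hmm,
    hmm'.vecDeg_eq⟩
  have hLs := hL.2 s
  have hps := hmp'.2 s
  have hms := hmm'.2 s
  have hjs := hjm s
  simp only [Finsupp.add_apply] at hms ⊢
  omega

end Splitting

section Products

lemma le_of_forall_exists_degree_eq {σ K : Type*} [Field K] (ord : MonomialOrder σ)
    {V W : Submodule K (MvPolynomial σ K)} (hWV : W ≤ V)
    (h : ∀ f ∈ V, f ≠ 0 → ∃ g ∈ W, g ≠ 0 ∧ ord.degree g = ord.degree f) : V ≤ W := by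
  intro f hf
  induction hx : ord.toSyn (ord.degree f) using WellFoundedLT.induction generalizing f with
  | _ x ih =>
    by_cases hf0 : f = 0
    · exact hf0 ▸ W.zero_mem
    obtain ⟨g, hgW, hg0, hdeg⟩ := h f hf hf0
    have hlead : ord.leadingCoeff g ≠ 0 := ord.leadingCoeff_ne_zero_iff.2 hg0
    set c := ord.leadingCoeff f / ord.leadingCoeff g with hc
    have hcg : c • g ∈ W := W.smul_mem c hgW
    have hcoeff : coeff (ord.degree f) (f - c • g) = 0 := by
      rw [coeff_sub, coeff_smul, ← hdeg, ← MonomialOrder.leadingCoeff, smul_eq_mul, hc,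
        div_mul_cancel₀ _ hlead, hdeg, ← MonomialOrder.leadingCoeff, sub_self]
    suffices hsub : f - c • g ∈ W from sub_add_cancel f (c • g) ▸ W.add_mem hsub hcg
    by_cases hzero : f - c • g = 0
    · exact hzero ▸ W.zero_mem
    refine ih _ ?_ (V.sub_mem hf (hWV hcg)) rfl
    have hle : ord.toSyn (ord.degree (f - c • g)) ≤ ord.toSyn (ord.degree f) :=
      (ord.degree_sub_le).trans (sup_le le_rfl (hdeg ▸ ord.degree_smul_le))
    refine hx ▸ lt_of_le_of_ne hle fun heq => ord.leadingCoeff_ne_zero_iff.2 hzero ?_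
    rw [MonomialOrder.leadingCoeff, ord.toSyn.injective heq, hcoeff]

open MonomialOrder in
theorem invPoly_le_mul {n : ℕ} {c : ℝ} (hc0 : 0 < c) (hc1 : c < 1) {k jp jm : Fin n → ℕ}
    (hjp : ∀ i, (jp i : ℝ) = c * k i) (hsum : ∀ i, jp i + jm i = k i) :
    invPoly (fun i => 2 * k i) ≤ invPoly (fun i => 2 * jp i) * invPoly (fun i => 2 * jm i) := by
  have hdeg : (fun i => 2 * k i) = (fun i => 2 * jp i) + fun i => 2 * jm i :=
    funext fun i => by rw [Pi.add_apply, ← mul_add, hsum]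
  refine le_of_forall_exists_degree_eq lex
    (Submodule.mul_le.2 fun p hp q hq => hdeg ▸ mul_mem_invPoly hp hq) fun f hf hf0 => ?_
  obtain ⟨mp, mm, hadd, ⟨hmp, hmpd⟩, hmm, hmmd⟩ := (ballot_lex_degree hf hf0).exists_split
    hc0 hc1 hjp hsum (mem_multiHom.1 hf.1 _ (degree_mem_support hf0))
  obtain ⟨fp, hfp, hfp0, hfpd⟩ := hmp.exists_lex_degree_eq
  obtain ⟨fm, hfm, hfm0, hfmd⟩ := hmm.exists_lex_degree_eq
  refine ⟨fp * fm, Submodule.mul_mem_mul (hmpd ▸ hfp) (hmmd ▸ hfm), mul_ne_zero hfp0 hfm0, ?_⟩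
  rw [degree_mul hfp0 hfm0, hfpd, hfmd, hadd]

end Products

section Tensors

/-- The basis of monomials of the space of homogeneous polynomials of degree `d`. -/
def hsBasis (d : ℕ) : Module.Basis {m : Fin 2 →₀ ℕ // m.degree = d} ℂ (Hs d) :=
  (basisRestrictSupport ℂ _).map
    (LinearEquiv.ofEq _ _ (homogeneousSubmodule_eq_finsupp_supported (Fin 2) ℂ d).symm)

lemma coe_hsBasis (d : ℕ) (m : {m : Fin 2 →₀ ℕ // m.degree = d}) :
    (hsBasis d m : MvPolynomial (Fin 2) ℂ) = monomial (m : Fin 2 →₀ ℕ) 1 := by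
  classical
  have h : hsBasis d m = ⟨monomial m 1, isHomogeneous_monomial 1 m.2⟩ := by
    rw [Module.Basis.apply_eq_iff]
    ext x
    change coeff (x : Fin 2 →₀ ℕ) (monomial (m : Fin 2 →₀ ℕ) 1) = _
    simp only [coeff_monomial, Finsupp.single_apply, Subtype.ext_iff]
  rw [h]

instance (d : ℕ) : Module.Finite ℂ (Hs d) :=
  Module.Finite.iff_fg.2 (homogeneousSubmodule_fg (Fin 2) ℂ d)

variable {n : ℕ}

/-- Polynomials in one vector as polynomials in the `i`-th of `n` vectors. -/
def emb (i : Fin n) : MvPolynomial (Fin 2) ℂ →ₐ[ℂ] MvPolynomial (Vars n) ℂ :=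
  rename fun s => toLex (i, s)

/-- The realization of tensors of spin representations as polynomials in `n` vectors, given by
multiplication. -/
def toPoly (d : Fin n → ℕ) : (⨂[ℂ] i, Hs (d i)) →ₗ[ℂ] MvPolynomial (Vars n) ℂ :=
  PiTensorProduct.lift
    ((MultilinearMap.mkPiAlgebra ℂ (Fin n) (MvPolynomial (Vars n) ℂ)).compLinearMap
      fun i => (emb i).toLinearMap ∘ₗ (homogeneousSubmodule (Fin 2) ℂ (d i)).subtype)

lemma toPoly_tprod (d : Fin n → ℕ) (v : ∀ i, Hs (d i)) :
    toPoly d (PiTensorProduct.tprod ℂ v) = ∏ i, emb i (v i : MvPolynomial (Fin 2) ℂ) := by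
  simp [toPoly, PiTensorProduct.lift.tprod]

/-- The exponent with component `r i` in the `i`-th vector. -/
def joinExp : (Fin n → Fin 2 →₀ ℕ) ≃ (Vars n →₀ ℕ) where
  toFun r := Finsupp.equivFunOnFinite.symm fun x => r (ofLex x).1 (ofLex x).2
  invFun m i := Finsupp.equivFunOnFinite.symm fun s => m (toLex (i, s))
  left_inv _ := funext fun _ => Finsupp.ext fun _ => rfl
  right_inv _ := Finsupp.ext fun _ => rfl

lemma vecDeg_joinExp (r : Fin n → Fin 2 →₀ ℕ) (i : Fin n) :
    vecDeg (joinExp r) i = (r i).degree := by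
  simp [vecDeg, joinExp, Finsupp.degree_eq_sum]

lemma toPoly_tprod_hsBasis (d : Fin n → ℕ) (r : ∀ i, {m : Fin 2 →₀ ℕ // m.degree = d i}) :
    toPoly d (PiTensorProduct.tprod ℂ fun i => hsBasis (d i) (r i)) =
      monomial (joinExp fun i => (r i : Fin 2 →₀ ℕ)) 1 := by
  rw [toPoly_tprod, monomial_eq, Finsupp.prod_fintype _ _ (by simp), ← Equiv.prod_comp toLex,
    Fintype.prod_prod_type]
  simp [coe_hsBasis, emb, monomial_eq, Finsupp.prod_fintype, joinExp]

lemma toPoly_injective (d : Fin n → ℕ) : Function.Injective (toPoly d) := by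
  have hinj : Function.Injective fun r : ∀ i, {m : Fin 2 →₀ ℕ // m.degree = d i} =>
      joinExp fun i => (r i : Fin 2 →₀ ℕ) := fun r s hrs =>
    funext fun i => Subtype.ext (congrFun (joinExp.injective hrs) i)
  have hli := (basisMonomials (Vars n) ℂ).linearIndependent.comp _ hinj
  convert (Basis.piTensorProduct fun i => hsBasis (d i)).injective_constr_of_linearIndependent
    (R₂ := ℂ) hli
  refine Module.Basis.ext (Basis.piTensorProduct fun i => hsBasis (d i)) fun r => ?_
  rw [Module.Basis.constr_basis, Basis.piTensorProduct_apply, toPoly_tprod_hsBasis]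
  simp

lemma range_toPoly (d : Fin n → ℕ) : LinearMap.range (toPoly d) = multiHom d := by
  apply le_antisymm
  · rw [LinearMap.range_eq_map,
      ← (Basis.piTensorProduct fun i => hsBasis (d i)).span_eq, Submodule.map_span_le]
    rintro _ ⟨r, rfl⟩
    rw [Basis.piTensorProduct_apply, toPoly_tprod_hsBasis, mem_multiHom]
    intro m hm
    rw [Finset.mem_singleton.1 (support_monomial_subset hm)]
    exact funext fun i => (vecDeg_joinExp _ i).trans (r i).2
  · intro f hf
    rw [f.as_sum]
    refine Submodule.sum_mem _ fun m hm => ?_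
    have hdeg i : (joinExp.symm m i).degree = d i := by
      rw [← vecDeg_joinExp, Equiv.apply_symm_apply, mem_multiHom.1 hf m hm]
    refine ⟨coeff m f • PiTensorProduct.tprod ℂ fun i =>
      hsBasis (d i) ⟨joinExp.symm m i, hdeg i⟩, ?_⟩
    rw [map_smul, toPoly_tprod_hsBasis, Equiv.apply_symm_apply, smul_monomial, smul_eq_mul, mul_one]

lemma toPoly_mem_multiHom (d : Fin n → ℕ) (v : ⨂[ℂ] i, Hs (d i)) : toPoly d v ∈ multiHom d :=
  range_toPoly d ▸ LinearMap.mem_range_self _ v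

lemma emb_linSubst (g : Matrix (Fin 2) (Fin 2) ℂ) (i : Fin n) (p : MvPolynomial (Fin 2) ℂ) :
    emb i (linSubst g p) = act g (emb i p) := by
  suffices h : (emb i).comp (linSubst g) = (act g).comp (emb i) from DFunLike.congr_fun h p
  refine MvPolynomial.algHom_ext fun s => ?_
  rw [AlgHom.comp_apply, AlgHom.comp_apply, linSubst_X, emb, rename_X, act_X, map_sum]
  simp

lemma toPoly_map {d : Fin n → ℕ} {ρ : ∀ i, Representation ℂ SU2 (Hs (d i))}
    (hρ : ∀ i, IsSpinRep (d i) (ρ i)) (g : SU2) (v : ⨂[ℂ] i, Hs (d i)) :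
    toPoly d (PiTensorProduct.map (fun i => ρ i g) v) = act (g : Matrix _ _ ℂ) (toPoly d v) := by
  suffices h : toPoly d ∘ₗ PiTensorProduct.map (fun i => ρ i g) =
      (act (g : Matrix _ _ ℂ)).toLinearMap ∘ₗ toPoly d from LinearMap.congr_fun h v
  refine PiTensorProduct.ext (MultilinearMap.ext fun w => ?_)
  simp only [LinearMap.compMultilinearMap_apply, LinearMap.comp_apply, PiTensorProduct.map_tprod,
    toPoly_tprod, AlgHom.toLinearMap_apply, map_prod]
  exact Finset.prod_congr rfl fun i _ => by rw [hρ i, ← emb_linSubst, linSubst]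

lemma mem_piInvariants_iff {d : Fin n → ℕ} {ρ : ∀ i, Representation ℂ SU2 (Hs (d i))}
    (hρ : ∀ i, IsSpinRep (d i) (ρ i)) (v : ⨂[ℂ] i, Hs (d i)) :
    v ∈ piInvariants ρ ↔ toPoly d v ∈ invPoly d := by
  rw [invPoly, Submodule.mem_inf, and_iff_right (toPoly_mem_multiHom d v),
    Subalgebra.mem_toSubmodule, mem_invariants]
  refine forall_congr' fun g => ?_
  rw [← toPoly_map hρ, (toPoly_injective d).eq_iff]

lemma eq_of_fischer_comp_toPoly_eq {d : Fin n → ℕ} {f g : MvPolynomial (Vars n) ℂ}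
    (hf : f ∈ multiHom d) (hg : g ∈ multiHom d)
    (h : fischer f ∘ₗ toPoly d = fischer g ∘ₗ toPoly d) : f = g := by
  obtain ⟨v, hv⟩ : conj (f - g) ∈ LinearMap.range (toPoly d) :=
    range_toPoly d ▸ conj_mem_multiHom (Submodule.sub_mem _ hf hg)
  refine sub_eq_zero.1 (eq_zero_of_fischer_conj_self ?_)
  rw [fischer_comm, ← hv, map_sub, LinearMap.sub_apply, sub_eq_zero]
  exact LinearMap.congr_fun h v

lemma exists_fischer_comp_toPoly_eq {d : Fin n → ℕ} (φ : Module.Dual ℂ (⨂[ℂ] i, Hs (d i))) :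
    ∃ f ∈ multiHom d, fischer f ∘ₗ toPoly d = φ := by
  let F : (⨂[ℂ] i, Hs (d i)) →ₗ[ℂ] Module.Dual ℂ (⨂[ℂ] i, Hs (d i)) :=
    (LinearMap.lcomp ℂ ℂ (toPoly d)) ∘ₗ fischer ∘ₗ toPoly d
  have hF : Function.Injective F := fun v w hvw =>
    toPoly_injective d (eq_of_fischer_comp_toPoly_eq (toPoly_mem_multiHom d v)
      (toPoly_mem_multiHom d w) hvw)
  let _ : AddCommGroup (⨂[ℂ] i, Hs (d i)) := Module.addCommMonoidToAddCommGroup ℂ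
  obtain ⟨v, hv⟩ := (LinearMap.injective_iff_surjective_of_finrank_eq_finrank
    Subspace.dual_finrank_eq.symm).1 hF φ
  exact ⟨toPoly d v, toPoly_mem_multiHom d v, hv⟩

end Tensors

section Powers

/-- The `d`-th power of the linear form with coefficient vector `u`, a spin coherent state. -/
def powVec (d : ℕ) (u : Fin 2 → ℂ) : Hs d :=
  ⟨(∑ s, u s • X s) ^ d, by
    have h : (∑ s, u s • X s : MvPolynomial (Fin 2) ℂ) ∈ homogeneousSubmodule (Fin 2) ℂ 1 :=
      Submodule.sum_mem _ fun s _ => Submodule.smul_mem _ _ (isHomogeneous_X ℂ s)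
    simpa using IsHomogeneous.pow h d⟩

lemma coe_powVec (d : ℕ) (u : Fin 2 → ℂ) :
    (powVec d u : MvPolynomial (Fin 2) ℂ) = (∑ s, u s • X s) ^ d := rfl

lemma powVec_smul (d : ℕ) (c : ℂ) (u : Fin 2 → ℂ) : powVec d (c • u) = c ^ d • powVec d u := by
  refine Subtype.ext ?_
  change _ = c ^ d • (powVec d u : MvPolynomial (Fin 2) ℂ)
  rw [coe_powVec, coe_powVec, ← smul_pow, Finset.smul_sum]
  simp [smul_smul]

lemma map_powVec {d : ℕ} {ρ : Representation ℂ SU2 (Hs d)} (hρ : IsSpinRep d ρ) (g : SU2)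
    (u : Fin 2 → ℂ) :
    ρ g (powVec d u) = powVec d ((g : Matrix (Fin 2) (Fin 2) ℂ).mulVec u) := by
  refine Subtype.ext ?_
  rw [hρ, coe_powVec, coe_powVec, map_pow, map_sum]
  congr 1
  simp only [map_smul, aeval_X, Finset.smul_sum, smul_smul, Matrix.mulVec, dotProduct,
    Finset.sum_smul]
  rw [Finset.sum_comm]
  simp only [mul_comm]

variable {n : ℕ}

lemma toPoly_powVec (d : Fin n → ℕ) (u : Fin n → Fin 2 → ℂ) :
    toPoly d (PiTensorProduct.tprod ℂ fun i => powVec (d i) (u i)) =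
      ∏ i, (∑ s, u i s • X (toLex (i, s))) ^ d i := by
  simp [toPoly_tprod, coe_powVec, emb]

lemma fischer_toPoly_powVec {d : Fin n → ℕ} {f : MvPolynomial (Vars n) ℂ} (hf : f ∈ multiHom d)
    (u : Fin n → Fin 2 → ℂ) :
    fischer f (toPoly d (PiTensorProduct.tprod ℂ fun i => powVec (d i) (u i))) =
      (∏ i, ((d i).factorial : ℂ)) * eval (fun x => u (ofLex x).1 (ofLex x).2) f := by
  rw [toPoly_powVec, ← fischer_prod_linearForm_pow hf]
  congr! 4 with i
  rw [Finset.sum_filter, sum_vars, Finset.sum_eq_single i (by simp +contextual) (by simp),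
    Fin.sum_univ_two]
  simp

lemma dual_ext_powVec {d : Fin n → ℕ} {φ ψ : Module.Dual ℂ (⨂[ℂ] i, Hs (d i))}
    (h : ∀ u : Fin n → Fin 2 → ℂ, φ (PiTensorProduct.tprod ℂ fun i => powVec (d i) (u i)) =
      ψ (PiTensorProduct.tprod ℂ fun i => powVec (d i) (u i))) : φ = ψ := by
  obtain ⟨f, hf, rfl⟩ := exists_fischer_comp_toPoly_eq φ
  obtain ⟨g, hg, rfl⟩ := exists_fischer_comp_toPoly_eq ψ
  congr 2
  refine MvPolynomial.funext fun w => ?_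
  have hw := h fun i s => w (toLex (i, s))
  rw [LinearMap.comp_apply, LinearMap.comp_apply, fischer_toPoly_powVec hf,
    fischer_toPoly_powVec hg] at hw
  exact mul_left_cancel₀
    (Finset.prod_ne_zero_iff.2 fun _ _ => Nat.cast_ne_zero.2 (Nat.factorial_ne_zero _)) hw

lemma span_range_powVec (d : ℕ) : Submodule.span ℂ (Set.range (powVec d)) = ⊤ := by
  by_contra hne
  obtain ⟨φ, hφ, hle⟩ := Submodule.exists_le_ker_of_lt_top _ (lt_top_iff_ne_top.2 hne)
  let E := PiTensorProduct.subsingletonEquiv (R := ℂ) (s := fun _ : Fin 1 => Hs d) 0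
  have hzero : φ ∘ₗ E.toLinearMap = 0 := dual_ext_powVec (d := fun _ => d) fun u => by
    simpa [E] using hle (Submodule.subset_span (Set.mem_range_self (u 0)))
  refine hφ (LinearMap.ext fun v => ?_)
  simpa using LinearMap.congr_fun hzero (E.symm v)

end Powers

section Intertwiners

lemma eigenvalue_eq_of_repr_ne_zero {K V ι : Type*} [Field K] [AddCommMonoid V] [Module K V]
    (B : Module.Basis ι K V) {f : V →ₗ[K] V} {μ : ι → K} (hf : ∀ i, f (B i) = μ i • B i)
    {ν : K} {w : V} (hw : f w = ν • w) {i : ι} (hi : B.repr w i ≠ 0) : μ i = ν := by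
  classical
  have hcoord : B.coord i ∘ₗ f = μ i • B.coord i := B.ext fun j => by
    by_cases h : j = i <;> simp [hf, h]
  have h := LinearMap.congr_fun hcoord w
  rw [LinearMap.comp_apply, hw, map_smul] at h
  exact (mul_right_cancel₀ hi h).symm

lemma map_hsBasis_of_diag {d : ℕ} {ρ : Representation ℂ SU2 (Hs d)} (hρ : IsSpinRep d ρ) {g : SU2}
    {z w : ℂ} (hg : (g : Matrix (Fin 2) (Fin 2) ℂ) = !![z, 0; 0, w])
    (m : {m : Fin 2 →₀ ℕ // m.degree = d}) :
    ρ g (hsBasis d m) = (z ^ (m : Fin 2 →₀ ℕ) 0 * w ^ (m : Fin 2 →₀ ℕ) 1) • hsBasis d m := by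
  refine Subtype.ext ?_
  change _ = _ • (hsBasis d m : MvPolynomial (Fin 2) ℂ)
  rw [hρ, coe_hsBasis, hg, monomial_eq, Finsupp.prod_fintype _ _ (by simp)]
  simp [smul_pow, smul_smul, mul_comm]

lemma exists_unit_pow_injOn (N : ℕ) : ∃ z : ℂ, z * starRingEnd ℂ z = 1 ∧
    Set.InjOn (fun k : ℕ => z ^ k) (Set.Iic N) := by
  have hz := Complex.isPrimitiveRoot_exp (N + 1) N.succ_ne_zero
  refine ⟨_, ?_, fun k hk l hl => hz.pow_inj (Nat.lt_succ_of_le hk) (Nat.lt_succ_of_le hl)⟩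
  rw [Complex.mul_conj', hz.norm'_eq_one N.succ_ne_zero]
  norm_num

/-- The exponent `(d, 0)` of the highest weight vector of `Hs d`. -/
def highestExp (d : ℕ) : {m : Fin 2 →₀ ℕ // m.degree = d} := ⟨Finsupp.single 0 d, by simp⟩

lemma eq_highestExp {d : ℕ} {m : {m : Fin 2 →₀ ℕ // m.degree = d}}
    (h : (m : Fin 2 →₀ ℕ) 1 = 0) : m = highestExp d := by
  have hm := m.2
  rw [Finsupp.degree_eq_sum, Fin.sum_univ_two, h, add_zero] at hm
  refine Subtype.ext (Finsupp.ext fun s => ?_)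
  fin_cases s <;> simp [highestExp, hm, h]

lemma powVec_e₀ (d : ℕ) : powVec d ![1, 0] = hsBasis d (highestExp d) := by
  refine Subtype.ext ?_
  rw [coe_powVec, coe_hsBasis, highestExp, ← X_pow_eq_monomial]
  simp

lemma exists_smul_mulVec_e₀_eq (u : Fin 2 → ℂ) : ∃ (c : ℂ) (g : SU2),
    c • (g : Matrix (Fin 2) (Fin 2) ℂ).mulVec ![1, 0] = u := by
  rcases eq_or_ne u 0 with rfl | hu
  · exact ⟨0, 1, zero_smul _ _⟩
  set r : ℝ := ‖WithLp.toLp 2 u‖ with hr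
  have hr0 : (r : ℂ) ≠ 0 := by simpa [hr] using hu
  have hsq : u 0 * starRingEnd ℂ (u 0) + u 1 * starRingEnd ℂ (u 1) = (r : ℂ) ^ 2 := by
    rw [Complex.mul_conj', Complex.mul_conj']
    exact_mod_cast (by simp [hr, EuclideanSpace.norm_sq_eq] : _ = r ^ 2)
  have hunit : u 0 / r * starRingEnd ℂ (u 0 / r) + u 1 / r * starRingEnd ℂ (u 1 / r) = 1 := by
    simp only [map_div₀, Complex.conj_ofReal]
    field_simp
    exact hsq
  refine ⟨r, ⟨_, mem_SU2_of hunit⟩, funext fun s => ?_⟩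
  fin_cases s <;> simp [mul_div_cancel₀ _ hr0]

variable {d dp dm : ℕ} {ρ : Representation ℂ SU2 (Hs d)} {ρp : Representation ℂ SU2 (Hs dp)}
  {ρm : Representation ℂ SU2 (Hs dm)} {T : Hs d →ₗ[ℂ] Hs dp ⊗[ℂ] Hs dm}

/-- The torus element `diag (z, z⁻¹)` acts on the highest weight vector by `z ^ d`, and on a product
of monomials by the same scalar only when both are highest weight vectors. -/
lemma eq_highestExp_of_repr_map_powVec_e₀ (hd : dp + dm = d) (hρ : IsSpinRep d ρ)
    (hρp : IsSpinRep dp ρp) (hρm : IsSpinRep dm ρm)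
    (hT : ∀ (g : SU2) v, T (ρ g v) = TensorProduct.map (ρp g) (ρm g) (T v))
    {m : {m : Fin 2 →₀ ℕ // m.degree = dp}} {m' : {m : Fin 2 →₀ ℕ // m.degree = dm}}
    (h : ((hsBasis dp).tensorProduct (hsBasis dm)).repr (T (powVec d ![1, 0])) (m, m') ≠ 0) :
    m = highestExp dp ∧ m' = highestExp dm := by
  obtain ⟨z, hz, hinj⟩ := exists_unit_pow_injOn (2 * d)
  obtain ⟨g, hg⟩ : ∃ g : SU2, (g : Matrix (Fin 2) (Fin 2) ℂ) = !![z, 0; 0, starRingEnd ℂ z] :=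
    ⟨⟨_, mem_SU2_of (a := z) (b := 0) (by simpa using hz)⟩, by simp⟩
  have heig := eigenvalue_eq_of_repr_ne_zero _ (f := TensorProduct.map (ρp g) (ρm g))
    (μ := fun x => z ^ (x.1 : Fin 2 →₀ ℕ) 0 * starRingEnd ℂ z ^ (x.1 : Fin 2 →₀ ℕ) 1 *
      (z ^ (x.2 : Fin 2 →₀ ℕ) 0 * starRingEnd ℂ z ^ (x.2 : Fin 2 →₀ ℕ) 1)) (ν := z ^ d)
    (fun x => by
      rw [Module.Basis.tensorProduct_apply', TensorProduct.map_tmul, map_hsBasis_of_diag hρp hg,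
        map_hsBasis_of_diag hρm hg, TensorProduct.smul_tmul_smul])
    (by
      rw [← hT, powVec_e₀, map_hsBasis_of_diag hρ hg, map_smul]
      simp [highestExp]) h
  have hm := m.2
  have hm' := m'.2
  rw [Finsupp.degree_eq_sum, Fin.sum_univ_two] at hm hm'
  set p := (m : Fin 2 →₀ ℕ) 0
  set q := (m : Fin 2 →₀ ℕ) 1
  set p' := (m' : Fin 2 →₀ ℕ) 0
  set q' := (m' : Fin 2 →₀ ℕ) 1
  have hpow : z ^ (p + p') = z ^ (d + (q + q')) := calc
    z ^ (p + p') = z ^ (p + p') * (z * starRingEnd ℂ z) ^ (q + q') := by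
      rw [hz, one_pow, mul_one]
    _ = z ^ p * starRingEnd ℂ z ^ q * (z ^ p' * starRingEnd ℂ z ^ q') * z ^ (q + q') := by ring
    _ = z ^ (d + (q + q')) := by rw [heig, pow_add z d]
  have hexp : p + p' = d + (q + q') :=
    hinj (Set.mem_Iic.2 (by lia)) (Set.mem_Iic.2 (by lia)) hpow
  exact ⟨eq_highestExp (show q = 0 by lia), eq_highestExp (show q' = 0 by lia)⟩

lemma exists_map_powVec_e₀ (hd : dp + dm = d) (hρ : IsSpinRep d ρ) (hρp : IsSpinRep dp ρp)
    (hρm : IsSpinRep dm ρm)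
    (hT : ∀ (g : SU2) v, T (ρ g v) = TensorProduct.map (ρp g) (ρm g) (T v)) :
    ∃ c : ℂ, T (powVec d ![1, 0]) = c • (powVec dp ![1, 0] ⊗ₜ[ℂ] powVec dm ![1, 0]) := by
  classical
  set B := (hsBasis dp).tensorProduct (hsBasis dm) with hB
  refine ⟨B.repr (T (powVec d ![1, 0])) (highestExp dp, highestExp dm),
    B.ext_elem fun ⟨m, m'⟩ => ?_⟩
  rw [powVec_e₀ dp, powVec_e₀ dm, ← Module.Basis.tensorProduct_apply, ← hB, map_smul,
    Module.Basis.repr_self, Finsupp.smul_single_one]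
  by_contra hne
  have hx : (m, m') ≠ (highestExp dp, highestExp dm) := by
    intro h
    exact hne (by rw [h, Finsupp.single_eq_same])
  rw [Finsupp.single_eq_of_ne hx] at hne
  exact hx (Prod.ext_iff.2 (eq_highestExp_of_repr_map_powVec_e₀ hd hρ hρp hρm hT hne))

lemma exists_map_powVec (hd : dp + dm = d) (hρ : IsSpinRep d ρ) (hρp : IsSpinRep dp ρp)
    (hρm : IsSpinRep dm ρm) (hT0 : T ≠ 0)
    (hT : ∀ (g : SU2) v, T (ρ g v) = TensorProduct.map (ρp g) (ρm g) (T v)) :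
    ∃ c : ℂ, c ≠ 0 ∧ ∀ u, T (powVec d u) = c • (powVec dp u ⊗ₜ[ℂ] powVec dm u) := by
  obtain ⟨c, hc⟩ := exists_map_powVec_e₀ hd hρ hρp hρm hT
  have hpow (u : Fin 2 → ℂ) : T (powVec d u) = c • (powVec dp u ⊗ₜ[ℂ] powVec dm u) := by
    obtain ⟨e, g, rfl⟩ := exists_smul_mulVec_e₀_eq u
    rw [powVec_smul, powVec_smul, powVec_smul, map_smul, ← map_powVec hρ, hT, hc, map_smul,
      TensorProduct.map_tmul, map_powVec hρp, map_powVec hρm, TensorProduct.smul_tmul_smul,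
      ← pow_add, hd, smul_comm]
  refine ⟨c, ?_, hpow⟩
  rintro rfl
  exact hT0 (LinearMap.ext_on_range (span_range_powVec d) fun u => by simp [hpow])

end Intertwiners

section EPRLMap

variable {n : ℕ}

lemma fischer_comp_projection {d : Fin n → ℕ} {ρ : ∀ i, Representation ℂ SU2 (Hs (d i))}
    (hρ : ∀ i, IsSpinRep (d i) (ρ i)) {P : (⨂[ℂ] i, Hs (d i)) →ₗ[ℂ] ⨂[ℂ] i, Hs (d i)}
    (hidem : P ∘ₗ P = P) (hrange : LinearMap.range P = piInvariants ρ)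
    (hcomm : ∀ g : SU2, P ∘ₗ PiTensorProduct.map (fun i => ρ i g) =
      PiTensorProduct.map (fun i => ρ i g) ∘ₗ P)
    {f : MvPolynomial (Vars n) ℂ} (hf : f ∈ invPoly d) :
    fischer f ∘ₗ toPoly d ∘ₗ P = fischer f ∘ₗ toPoly d := by
  obtain ⟨q, hq, hqf⟩ := exists_fischer_comp_toPoly_eq (fischer f ∘ₗ toPoly d ∘ₗ P)
  have hqP v : fischer q (toPoly d v) = fischer f (toPoly d (P v)) := LinearMap.congr_fun hqf v
  have hqinv : q ∈ invPoly d := by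
    refine ⟨hq, mem_invariants.2 fun g => eq_of_fischer_comp_toPoly_eq ?_ hq ?_⟩
    · obtain ⟨w, rfl⟩ : q ∈ LinearMap.range (toPoly d) := range_toPoly d ▸ hq
      exact toPoly_map hρ g w ▸ toPoly_mem_multiHom d _
    refine LinearMap.ext fun v => ?_
    set gT : SU2 := ⟨_, transpose_mem_SU2 g⟩
    have hPg : P (PiTensorProduct.map (fun i => ρ i gT) v) =
        PiTensorProduct.map (fun i => ρ i gT) (P v) := LinearMap.congr_fun (hcomm gT) v
    calc fischer (act (g : Matrix _ _ ℂ) q) (toPoly d v)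
      _ = fischer q (toPoly d (PiTensorProduct.map (fun i => ρ i gT) v)) := by
        rw [fischer_act, toPoly_map hρ]
      _ = fischer (act (g : Matrix _ _ ℂ) f) (toPoly d (P v)) := by
        rw [hqP, hPg, toPoly_map hρ, fischer_act]
      _ = fischer q (toPoly d v) := by rw [mem_invariants.1 hf.2 g, hqP]
  suffices hfq : q = f by rw [← hqf, hfq]
  obtain ⟨w, hw⟩ : conj (q - f) ∈ LinearMap.range (toPoly d) :=
    range_toPoly d ▸ conj_mem_multiHom (Submodule.sub_mem _ hq hf.1)
  have hwinv : w ∈ LinearMap.range P := by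
    rw [hrange, mem_piInvariants_iff hρ, hw]
    exact conj_mem_invPoly (Submodule.sub_mem _ hqinv hf)
  have hPw : P w = w := (LinearMap.IsIdempotentElem.mem_range_iff hidem).1 hwinv
  refine sub_eq_zero.1 (eq_zero_of_fischer_conj_self ?_)
  rw [fischer_comm, ← hw, map_sub, LinearMap.sub_apply, hqP, hPw, sub_self]

variable {d dp dm : Fin n → ℕ} {C : ∀ i, Hs (d i) →ₗ[ℂ] Hs (dp i) ⊗[ℂ] Hs (dm i)} {c : Fin n → ℂ}
  {Φ : (⨂[ℂ] i, (Hs (dp i) ⊗[ℂ] Hs (dm i))) →ₗ[ℂ] (⨂[ℂ] i, Hs (dp i)) ⊗[ℂ] (⨂[ℂ] i, Hs (dm i))}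

lemma exists_fischer_mul_comp_toPoly_eq (hd : ∀ i, dp i + dm i = d i) (hc : ∀ i, c i ≠ 0)
    (hC : ∀ i u, C i (powVec (d i) u) = c i • (powVec (dp i) u ⊗ₜ[ℂ] powVec (dm i) u))
    (hΦ : ∀ (a : ∀ i, Hs (dp i)) (b : ∀ i, Hs (dm i)),
      Φ (PiTensorProduct.tprod ℂ (fun i => a i ⊗ₜ[ℂ] b i)) =
        PiTensorProduct.tprod ℂ a ⊗ₜ[ℂ] PiTensorProduct.tprod ℂ b)
    {fp fm : MvPolynomial (Vars n) ℂ} (hfp : fp ∈ multiHom dp) (hfm : fm ∈ multiHom dm) :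
    ∃ e : ℂ, fischer (fp * fm) ∘ₗ toPoly d =
      e • (LinearMap.mul' ℂ ℂ ∘ₗ
        TensorProduct.map (fischer fp ∘ₗ toPoly dp) (fischer fm ∘ₗ toPoly dm) ∘ₗ
        Φ ∘ₗ PiTensorProduct.map (fun i => C i)) := by
  refine ⟨(∏ i, ((d i).factorial : ℂ)) /
    ((∏ i, c i) * (∏ i, ((dp i).factorial : ℂ)) * ∏ i, ((dm i).factorial : ℂ)),
    dual_ext_powVec fun u => ?_⟩
  have hmul : fp * fm ∈ multiHom d := by
    rw [← funext hd]
    exact IsWeightedHomogeneous.mul hfp hfm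
  have hcprod : ∏ i, c i ≠ 0 := Finset.prod_ne_zero_iff.2 fun i _ => hc i
  have hfac (e : Fin n → ℕ) : ∏ i, ((e i).factorial : ℂ) ≠ 0 :=
    Finset.prod_ne_zero_iff.2 fun _ _ => Nat.cast_ne_zero.2 (Nat.factorial_ne_zero _)
  have hp := hfac dp
  have hm := hfac dm
  simp only [LinearMap.comp_apply, LinearMap.smul_apply, PiTensorProduct.map_tprod, hC]
  rw [MultilinearMap.map_smul_univ, map_smul, hΦ, map_smul, TensorProduct.map_tmul, map_smul,
    LinearMap.mul'_apply, LinearMap.comp_apply, LinearMap.comp_apply, fischer_toPoly_powVec hmul,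
    fischer_toPoly_powVec hfp, fischer_toPoly_powVec hfm, map_mul, smul_eq_mul, smul_eq_mul]
  field_simp

lemma exists_dual_comp_eq_fischer_comp_toPoly (hd : ∀ i, dp i + dm i = d i) (hc : ∀ i, c i ≠ 0)
    (hC : ∀ i u, C i (powVec (d i) u) = c i • (powVec (dp i) u ⊗ₜ[ℂ] powVec (dm i) u))
    (hΦ : ∀ (a : ∀ i, Hs (dp i)) (b : ∀ i, Hs (dm i)),
      Φ (PiTensorProduct.tprod ℂ (fun i => a i ⊗ₜ[ℂ] b i)) =
        PiTensorProduct.tprod ℂ a ⊗ₜ[ℂ] PiTensorProduct.tprod ℂ b)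
    {Pp : (⨂[ℂ] i, Hs (dp i)) →ₗ[ℂ] ⨂[ℂ] i, Hs (dp i)}
    (hPp : ∀ f ∈ invPoly dp, fischer f ∘ₗ toPoly dp ∘ₗ Pp = fischer f ∘ₗ toPoly dp)
    {Pm : (⨂[ℂ] i, Hs (dm i)) →ₗ[ℂ] ⨂[ℂ] i, Hs (dm i)}
    (hPm : ∀ f ∈ invPoly dm, fischer f ∘ₗ toPoly dm ∘ₗ Pm = fischer f ∘ₗ toPoly dm)
    {f : MvPolynomial (Vars n) ℂ} (hf : f ∈ invPoly dp * invPoly dm) :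
    ∃ φ : Module.Dual ℂ ((⨂[ℂ] i, Hs (dp i)) ⊗[ℂ] (⨂[ℂ] i, Hs (dm i))),
      fischer f ∘ₗ toPoly d =
        φ ∘ₗ TensorProduct.map Pp Pm ∘ₗ Φ ∘ₗ PiTensorProduct.map (fun i => C i) := by
  induction hf using Submodule.mul_induction_on' with
  | mem_mul_mem fp hfp fm hfm =>
    have hproj : TensorProduct.map (fischer fp ∘ₗ toPoly dp) (fischer fm ∘ₗ toPoly dm) ∘ₗ
        TensorProduct.map Pp Pm =
          TensorProduct.map (fischer fp ∘ₗ toPoly dp) (fischer fm ∘ₗ toPoly dm) := by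
      rw [← TensorProduct.map_comp, LinearMap.comp_assoc, LinearMap.comp_assoc, hPp fp hfp,
        hPm fm hfm]
    obtain ⟨e, he⟩ := exists_fischer_mul_comp_toPoly_eq hd hc hC hΦ hfp.1 hfm.1
    refine ⟨e • (LinearMap.mul' ℂ ℂ ∘ₗ
      TensorProduct.map (fischer fp ∘ₗ toPoly dp) (fischer fm ∘ₗ toPoly dm)), ?_⟩
    rw [he, LinearMap.smul_comp, LinearMap.comp_assoc,
      ← LinearMap.comp_assoc _ (TensorProduct.map Pp Pm), hproj]
  | add f _ g _ hφ hψ =>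
    obtain ⟨φ, hφ⟩ := hφ
    obtain ⟨ψ, hψ⟩ := hψ
    exact ⟨φ + ψ, by rw [map_add, LinearMap.add_comp, LinearMap.add_comp, hφ, hψ]⟩

end EPRLMap

end EPRL

open EPRL

/-- **Injectivity of the EPRL map.**  Let `|γ| < 1` and let `(k₁,…,kₙ)` be integer spins such
that `j⁺ᵢ = (1+γ)kᵢ/2` is a natural number for every `i`, and `j⁻ᵢ = (1−γ)kᵢ/2 = kᵢ − j⁺ᵢ`.
For each `i` fix a nonzero `SU(2)`-equivariant map `Cᵢ : H_{kᵢ} → H_{j⁺ᵢ} ⊗ H_{j⁻ᵢ}` and let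
`P⁺`, `P⁻` be the orthogonal projections of `⨂ᵢ H_{j±ᵢ}` onto the subspaces of invariants
(characterized here, equivalently, as the unique `SU(2)`-equivariant idempotents onto the
invariants: for a unitarizable representation this is exactly the orthogonal projection with
respect to any invariant Hermitian inner product).  Then the EPRL map
`ι = (P⁺ ⊗ P⁻) ∘ Φ ∘ (C₁ ⊗ ⋯ ⊗ Cₙ)`, restricted to `Inv(H_{k₁} ⊗ ⋯ ⊗ H_{kₙ})`
(where `Φ` is the regrouping isomorphism), is injective. -/
theorem eprl_map_injective (γ : ℝ) (hγ : |γ| < 1) (n : ℕ) (k jp jm : Fin n → ℕ)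
    (hjp : ∀ i, (jp i : ℝ) = (1 + γ) * (k i : ℝ) / 2)
    (hjm : ∀ i, (jm i : ℝ) = (1 - γ) * (k i : ℝ) / 2)
    (hsum : ∀ i, jp i + jm i = k i)
    (ρk : ∀ i, Representation ℂ SU2 (Hs (2 * k i)))
    (hρk : ∀ i, IsSpinRep (2 * k i) (ρk i))
    (ρp : ∀ i, Representation ℂ SU2 (Hs (2 * jp i)))
    (hρp : ∀ i, IsSpinRep (2 * jp i) (ρp i))
    (ρm : ∀ i, Representation ℂ SU2 (Hs (2 * jm i)))
    (hρm : ∀ i, IsSpinRep (2 * jm i) (ρm i))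
    -- the Clebsch–Gordan embeddings Cᵢ : H_{kᵢ} → H_{j⁺ᵢ} ⊗ H_{j⁻ᵢ}
    (C : ∀ i, Hs (2 * k i) →ₗ[ℂ] Hs (2 * jp i) ⊗[ℂ] Hs (2 * jm i))
    (hC0 : ∀ i, C i ≠ 0)
    (hC : ∀ i (g : SU2) (v : Hs (2 * k i)),
      C i (ρk i g v) = TensorProduct.map (ρp i g) (ρm i g) (C i v))
    -- the regrouping isomorphism ⨂ᵢ (H_{j⁺ᵢ} ⊗ H_{j⁻ᵢ}) → (⨂ᵢ H_{j⁺ᵢ}) ⊗ (⨂ᵢ H_{j⁻ᵢ})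
    (Φ : (⨂[ℂ] i, (Hs (2 * jp i) ⊗[ℂ] Hs (2 * jm i))) →ₗ[ℂ]
      (⨂[ℂ] i, Hs (2 * jp i)) ⊗[ℂ] (⨂[ℂ] i, Hs (2 * jm i)))
    (hΦ : ∀ (a : ∀ i, Hs (2 * jp i)) (b : ∀ i, Hs (2 * jm i)),
      Φ (PiTensorProduct.tprod ℂ (fun i => a i ⊗ₜ[ℂ] b i)) =
        PiTensorProduct.tprod ℂ a ⊗ₜ[ℂ] PiTensorProduct.tprod ℂ b)
    -- P⁺ : the projection of ⨂ᵢ H_{j⁺ᵢ} onto the invariants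
    (Pp : (⨂[ℂ] i, Hs (2 * jp i)) →ₗ[ℂ] ⨂[ℂ] i, Hs (2 * jp i))
    (hPp1 : Pp ∘ₗ Pp = Pp) (hPp2 : LinearMap.range Pp = piInvariants ρp)
    (hPp3 : ∀ g : SU2, Pp ∘ₗ PiTensorProduct.map (fun i => ρp i g) =
      PiTensorProduct.map (fun i => ρp i g) ∘ₗ Pp)
    -- P⁻ : the projection of ⨂ᵢ H_{j⁻ᵢ} onto the invariants
    (Pm : (⨂[ℂ] i, Hs (2 * jm i)) →ₗ[ℂ] ⨂[ℂ] i, Hs (2 * jm i))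
    (hPm1 : Pm ∘ₗ Pm = Pm) (hPm2 : LinearMap.range Pm = piInvariants ρm)
    (hPm3 : ∀ g : SU2, Pm ∘ₗ PiTensorProduct.map (fun i => ρm i g) =
      PiTensorProduct.map (fun i => ρm i g) ∘ₗ Pm) :
    Set.InjOn
      (⇑(TensorProduct.map Pp Pm ∘ₗ Φ ∘ₗ PiTensorProduct.map (fun i => C i)))
      (piInvariants ρk : Set (⨂[ℂ] i, Hs (2 * k i))) := by
  obtain ⟨hγ_neg, hγ_pos⟩ := abs_lt.1 hγ
  have hd i : 2 * jp i + 2 * jm i = 2 * k i := by rw [← hsum i, mul_add]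
  choose c hc hCc using fun i =>
    exists_map_powVec (hd i) (hρk i) (hρp i) (hρm i) (hC0 i) (hC i)
  intro v₁ hv₁ v₂ hv₂ hv
  refine toPoly_injective _ (sub_eq_zero.1 (eq_zero_of_fischer_conj_self ?_))
  set f := toPoly (fun i => 2 * k i) v₁ - toPoly (fun i => 2 * k i) v₂ with hf
  have hinv : conj f ∈ invPoly fun i => 2 * k i :=
    conj_mem_invPoly (Submodule.sub_mem _ ((mem_piInvariants_iff hρk v₁).1 hv₁)
      ((mem_piInvariants_iff hρk v₂).1 hv₂))
  have hmul : conj f ∈ invPoly (fun i => 2 * jp i) * invPoly (fun i => 2 * jm i) :=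
    invPoly_le_mul (c := (1 + γ) / 2) (by linarith) (by linarith)
      (fun i => by rw [hjp i]; ring) hsum hinv
  obtain ⟨φ, hφ⟩ := exists_dual_comp_eq_fischer_comp_toPoly hd hc hCc hΦ
    (fun _ => fischer_comp_projection hρp hPp1 hPp2 hPp3)
    (fun _ => fischer_comp_projection hρm hPm1 hPm2 hPm3) hmul
  rw [hf, map_sub, ← hf, sub_eq_zero]
  exact (LinearMap.congr_fun hφ v₁).trans
    ((congrArg φ hv).trans (LinearMap.congr_fun hφ v₂).symm)

end
end
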